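/- arXiv:1911.09995 — 2 statements merged into one kernel-verified Lean document; each statement's English description precedes it below -/
import Mathlib

section
/- Let n ≥ 2 be an integer, δ ∈ {0,1}, and let u : ℝ → ℝ be a 2π-periodic, (n+1)-times continuously differentiable function whose critical set {y ∈ [0,2π) : u'(y) = 0} is finite and nonempty, and such that at every critical point y_c there exists 2 ≤ j ≤ n with u^(j)(y_c) ≠ 0. Then there exist ε ∈ (0,1), C ≥ 1, and κ₀ ∈ (0,1), depending only on u and δ, such that for every κ ∈ (0,κ₀] and every solution ρ of the shear advection–diffusion equation whose initial datum satisfies ∫₀^{2π} ρ₀(x,y) dx = 0 for all y, one has ‖ρ(t)‖²_{L²} ≤ C exp( −ε κ^{n/(n+2)} t / (1 + log(1/κ)) ) ‖ρ(0)‖²_{L²} for all t ≥ 0. -/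
/-! Expanding in Fourier modes in `x`, the `k`-th coefficient `Q` of a solution satisfies
`∂ₜQ + i k u Q = κ ∂ᵧᵧQ - α Q` with `α = κ δ k ^ 2 ≥ 0`, and the mode `k = 0` vanishes by the
mean-zero hypothesis. Everything rests on a resolvent estimate (`resolvent_bound`), uniform in
the real spectral parameter `lam`, in `k ≠ 0` and in `α ≥ 0`:
if `i k (u - lam) c + α c - κ c'' = F` on the circle, then `‖c‖ ≤ K κ ^ (-n / (n + 2)) ‖F‖`.

Testing this equation with `c` gives `κ ‖c'‖ ^ 2 ≤ ‖c‖ ‖F‖` (`resolvent_energy`). Testing with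
`i χ c`, where `χ` is a `d⁻¹`-Lipschitz approximation of the sign of `u - lam`, controls
`∫ χ (u - lam) |c| ^ 2` up to `κ d⁻¹ ‖c‖ ‖c'‖` (`resolvent_multiplier`). Because the critical
points of `u` have order at most `n`, `u` moves by at least `c₀ d ^ n` on intervals of length `d`
(`oscillation_lower_bound`), and by Rolle's theorem the level sets have boundedly many points
(`levelCrit_card`); hence `χ (u - lam) ≥ c₀ d ^ n` off a set of measure `O(d)`
(`exists_multipliers`). On that set `|c| ^ 2` is bounded in sup norm (`sup_bound`). The choice
`d ∼ κ ^ (1 / (n + 2))` balances the terms.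

The resolvent bound `R` becomes decay in time (`mode_decay`) as follows. The function
`sin (π (t - a) / T) Q` vanishes at both ends of `[a, a + T]`, so its temporal Fourier
coefficients solve the resolvent equation with the coefficients of `(π / T) cos (π (t - a) / T) Q`
as right-hand side. Parseval and the monotonicity of the energy give
`‖Q (a + T)‖ ^ 2 ≤ (π R / T) ^ 2 ‖Q a‖ ^ 2`, a factor `1 / 4` when `T = 2 π R`. Iterating over
windows and summing the modes with Parseval in `x` gives decay at the rate
`log 4 / (2 π R)` (`shear_decay`), a multiple of `κ ^ (n / (n + 2))`. The logarithm in the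
theorem only weakens this rate. -/

open MeasureTheory Real Set Filter

noncomputable section

/-- `ρ : ℝ → ℝ → ℝ → ℝ`, as `ρ t x y`, is a solution of the shear advection–diffusion
equation `∂ₜρ + u(y) ∂ₓρ = κ (δ ∂ₓₓρ + ∂ᵧᵧρ)` on `[0,∞) × 𝕋²` (2π-periodic in `x` and `y`),
continuous up to `t = 0`, C¹ in time and C² in space for `t > 0`. -/
structure IsShearSolution (δ κ : ℝ) (u : ℝ → ℝ) (ρ : ℝ → ℝ → ℝ → ℝ) : Prop where
  cont : ContinuousOn (fun p : ℝ × ℝ × ℝ => ρ p.1 p.2.1 p.2.2) {p : ℝ × ℝ × ℝ | 0 ≤ p.1}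
  periodic_x : ∀ t x y, ρ t (x + 2 * π) y = ρ t x y
  periodic_y : ∀ t x y, ρ t x (y + 2 * π) = ρ t x y
  diff_t : ∀ t, 0 < t → ∀ x y, DifferentiableAt ℝ (fun s => ρ s x y) t
  diff_x : ∀ t, 0 < t → ∀ x y, DifferentiableAt ℝ (fun a => ρ t a y) x
  diff_xx : ∀ t, 0 < t → ∀ x y, DifferentiableAt ℝ (fun a => deriv (fun b => ρ t b y) a) x
  diff_y : ∀ t, 0 < t → ∀ x y, DifferentiableAt ℝ (fun b => ρ t x b) y
  diff_yy : ∀ t, 0 < t → ∀ x y, DifferentiableAt ℝ (fun b => deriv (fun c => ρ t x c) b) y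
  cont_dt : ContinuousOn (fun p : ℝ × ℝ × ℝ => deriv (fun s => ρ s p.2.1 p.2.2) p.1)
      {p : ℝ × ℝ × ℝ | 0 < p.1}
  cont_dxx : ContinuousOn
      (fun p : ℝ × ℝ × ℝ => deriv (fun a => deriv (fun b => ρ p.1 b p.2.2) a) p.2.1)
      {p : ℝ × ℝ × ℝ | 0 < p.1}
  cont_dyy : ContinuousOn
      (fun p : ℝ × ℝ × ℝ => deriv (fun b => deriv (fun c => ρ p.1 p.2.1 c) b) p.2.2)
      {p : ℝ × ℝ × ℝ | 0 < p.1}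
  pde : ∀ t, 0 < t → ∀ x y,
    deriv (fun s => ρ s x y) t + u y * deriv (fun a => ρ t a y) x =
      κ * (δ * deriv (fun a => deriv (fun b => ρ t b y) a) x +
        deriv (fun b => deriv (fun c => ρ t x c) b) y)

/-- The squared `L²` norm of `ρ(t)` on the torus `[0,2π]²`. -/
def l2normSq (ρ : ℝ → ℝ → ℝ → ℝ) (t : ℝ) : ℝ :=
  ∫ x in (0:ℝ)..(2 * π), ∫ y in (0:ℝ)..(2 * π), (ρ t x y) ^ 2

/-! ### Calculus and integration tools -/

/-- Differentiation under an interval integral when the derivative is jointly continuous. -/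
lemma hasDerivAt_param_integral {E : Type*} [NormedAddCommGroup E] [NormedSpace ℝ E]
    {F F' : ℝ → ℝ → E} {a b s₀ : ℝ} {S : Set ℝ} (hS : S ∈ nhds s₀)
    (hF : Continuous (fun p : ℝ × ℝ => F p.1 p.2))
    (hF' : Continuous (fun p : ℝ × ℝ => F' p.1 p.2))
    (hd : ∀ s ∈ S, ∀ x, HasDerivAt (fun s => F s x) (F' s x) s) :
    HasDerivAt (fun s => ∫ x in a..b, F s x) (∫ x in a..b, F' s₀ x) s₀ := by
  have hK : IsCompact (Metric.closedBall s₀ 1 ×ˢ uIcc a b) :=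
    (isCompact_closedBall _ _).prod isCompact_uIcc
  obtain ⟨M, hM⟩ := hK.exists_bound_of_continuousOn hF'.continuousOn
  have hc : ∀ s, Continuous (F s) := fun s => hF.comp (by fun_prop : Continuous fun x => (s, x))
  have hc' : ∀ s, Continuous (F' s) := fun s => hF'.comp (by fun_prop : Continuous fun x => (s, x))
  refine (intervalIntegral.hasDerivAt_integral_of_dominated_loc_of_deriv_le
    (s := S ∩ Metric.closedBall s₀ 1) (bound := fun _ => M)
    (inter_mem hS (Metric.closedBall_mem_nhds _ one_pos)) ?_ ?_ ?_ ?_ ?_ ?_).2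
  · exact Eventually.of_forall fun s => (hc s).aestronglyMeasurable
  · exact (hc s₀).intervalIntegrable _ _
  · exact (hc' s₀).aestronglyMeasurable
  · refine Eventually.of_forall fun x hx s hs => hM (s, x) ⟨hs.2, uIoc_subset_uIcc hx⟩
  · exact intervalIntegrable_const
  · exact Eventually.of_forall fun x _ s hs => hd s hs.1 x

/-- If `f` and its second derivative are jointly continuous, so is the first derivative: it is
recovered from them by Taylor's formula with integral remainder. -/
lemma continuous_first_deriv {X : Type*} [TopologicalSpace X]
    {f f' f'' : X → ℝ → ℝ} (hf : Continuous (fun p : X × ℝ => f p.1 p.2))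
    (hf'' : Continuous (fun p : X × ℝ => f'' p.1 p.2))
    (h1 : ∀ p x, HasDerivAt (f p) (f' p x) x) (h2 : ∀ p x, HasDerivAt (f' p) (f'' p x) x) :
    Continuous (fun p : X × ℝ => f' p.1 p.2) := by
  have key : ∀ p x, f' p x = f p (x + 1) - f p x - ∫ s in (0:ℝ)..1, (1 - s) * f'' p (x + s) := by
    intro p x
    have hd : ∀ s ∈ uIcc (0:ℝ) 1, HasDerivAt (fun s => (1 - s) * f' p (x + s) + f p (x + s))
        ((1 - s) * f'' p (x + s)) s := by
      intro s _
      have e1 := (h1 p (x + s)).comp_const_add x s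
      have e2 := (h2 p (x + s)).comp_const_add x s
      have e3 := (((hasDerivAt_id s).const_sub 1).mul e2).add e1
      refine e3.congr_deriv ?_
      simp
    have hi : Continuous (fun s => (1 - s) * f'' p (x + s)) :=
      (by fun_prop : Continuous fun s : ℝ => 1 - s).mul
        (hf''.comp (by fun_prop : Continuous fun s : ℝ => (p, x + s)))
    rw [intervalIntegral.integral_eq_sub_of_hasDerivAt hd (hi.intervalIntegrable _ _)]
    simp
  have : (fun p : X × ℝ => f' p.1 p.2) = fun p : X × ℝ => f p.1 (p.2 + 1) - f p.1 p.2 -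
      ∫ s in (0:ℝ)..1, (1 - s) * f'' p.1 (p.2 + s) := by
    ext p; exact key _ _
  rw [this]
  refine ((hf.comp (by fun_prop : Continuous fun p : X × ℝ => (p.1, p.2 + 1))).sub hf).sub ?_
  refine intervalIntegral.continuous_parametric_intervalIntegral_of_continuous'
    (f := fun (p : X × ℝ) s => (1 - s) * f'' p.1 (p.2 + s)) ?_ 0 1
  exact (by fun_prop : Continuous fun q : (X × ℝ) × ℝ => 1 - q.2).mul
    (hf''.comp (by fun_prop : Continuous fun q : (X × ℝ) × ℝ => (q.1.1, q.1.2 + q.2)))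

/-- Cauchy–Schwarz inequality for integrals of continuous functions. -/
lemma integral_mul_le_sqrt {f g : ℝ → ℝ} (hf : Continuous f) (hg : Continuous g) {a b : ℝ}
    (hab : a ≤ b) : ∫ x in a..b, f x * g x ≤
      √(∫ x in a..b, f x ^ 2) * √(∫ x in a..b, g x ^ 2) := by
  have h0 : ∀ s : ℝ, 0 ≤ (∫ x in a..b, f x ^ 2) * (s * s) + (-2 * ∫ x in a..b, f x * g x) * s
      + ∫ x in a..b, g x ^ 2 := by
    intro s
    have : 0 ≤ ∫ x in a..b, (f x * s - g x) ^ 2 :=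
      intervalIntegral.integral_nonneg hab fun x _ => sq_nonneg _
    have e : ∀ x, (f x * s - g x) ^ 2 = f x ^ 2 * (s * s) + (f x * g x) * (-2 * s) + g x ^ 2 := by
      intro x; ring
    simp_rw [e] at this
    rw [intervalIntegral.integral_add, intervalIntegral.integral_add,
      intervalIntegral.integral_mul_const, intervalIntegral.integral_mul_const] at this
    · linarith
    all_goals exact Continuous.intervalIntegrable (by fun_prop) _ _
  have hd := discrim_le_zero h0
  rw [discrim] at hd
  rw [← Real.sqrt_mul (intervalIntegral.integral_nonneg hab fun x _ => sq_nonneg _)]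
  exact Real.le_sqrt_of_sq_le (by nlinarith)

/-- Parseval's identity on `[a, a + L]` for unnormalised Fourier coefficients. -/
lemma parseval_interval {a L : ℝ} (hL : 0 < L) {f : ℝ → ℂ} (hf : Continuous f) :
    HasSum (fun m : ℤ =>
      ‖∫ s in a..(a + L), Complex.exp (-((2 * π * m / L * s : ℝ) * Complex.I)) * f s‖ ^ 2)
      (L * ∫ s in a..(a + L), ‖f s‖ ^ 2) := by
  have hab : a < a + L := by linarith
  have hm : MemLp f 2 (volume.restrict (Ioc a (a + L))) := by
    obtain ⟨M, hM⟩ := (isCompact_Icc (a := a) (b := a + L)).exists_bound_of_continuousOn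
      hf.continuousOn
    refine MemLp.of_bound hf.aestronglyMeasurable M ?_
    exact (ae_restrict_iff' measurableSet_Ioc).2
      (Eventually.of_forall fun x hx => hM x (Ioc_subset_Icc_self hx))
  have h := (hasSum_sq_fourierCoeffOn hab hm).mul_left (L ^ 2)
  have e1 : (fun m : ℤ =>
      ‖∫ s in a..(a + L), Complex.exp (-((2 * π * m / L * s : ℝ) * Complex.I)) * f s‖ ^ 2) =
      fun i => L ^ 2 * ‖fourierCoeffOn hab f i‖ ^ 2 := by
    ext m
    rw [fourierCoeffOn_eq_integral, norm_smul, mul_pow, ← mul_assoc]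
    have : L ^ 2 * ‖1 / (a + L - a)‖ ^ 2 = 1 := by
      rw [add_sub_cancel_left, Real.norm_eq_abs, sq_abs]; field_simp
    rw [this, one_mul]
    congr 3
    ext s
    rw [fourier_coe_apply, smul_eq_mul]
    congr 2
    rw [add_sub_cancel_left]
    push_cast
    ring
  have e2 : (L * ∫ s in a..(a + L), ‖f s‖ ^ 2) =
      L ^ 2 * (a + L - a)⁻¹ • ∫ x in a..(a + L), ‖f x‖ ^ 2 := by
    rw [add_sub_cancel_left, smul_eq_mul]; field_simp
  rw [e1, e2]
  exact h

/-- Parseval's identity in the variable `s`, integrated over a parameter `y`. -/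
lemma parseval_integrated {a L c : ℝ} (hL : 0 < L) {G : ℝ → ℝ → ℂ}
    (hG : Continuous (fun p : ℝ × ℝ => G p.1 p.2)) :
    HasSum (fun m : ℤ => ∫ y in (0:ℝ)..c,
      ‖∫ s in a..(a + L), Complex.exp (-((2 * π * m / L * s : ℝ) * Complex.I)) * G s y‖ ^ 2)
      (L * ∫ y in (0:ℝ)..c, ∫ s in a..(a + L), ‖G s y‖ ^ 2) := by
  have hg : ∀ y, Continuous (fun s => G s y) := fun y =>
    hG.comp (by fun_prop : Continuous fun s : ℝ => (s, y))
  have hgy := fun y => parseval_interval (a := a) hL (hg y)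
  have hC : ∀ m : ℤ, Continuous (fun y =>
      ‖∫ s in a..(a + L), Complex.exp (-((2 * π * m / L * s : ℝ) * Complex.I)) * G s y‖ ^ 2) := by
    intro m
    refine (Continuous.norm ?_).pow 2
    refine intervalIntegral.continuous_parametric_intervalIntegral_of_continuous'
      (f := fun (y : ℝ) s => Complex.exp (-((2 * π * m / L * s : ℝ) * Complex.I)) * G s y) ?_ _ _
    exact (by fun_prop : Continuous fun q : ℝ × ℝ =>
      Complex.exp (-((2 * π * m / L * q.2 : ℝ) * Complex.I))).mul
      (hG.comp (by fun_prop : Continuous fun q : ℝ × ℝ => (q.2, q.1)))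
  have hB : Continuous (fun y => L * ∫ s in a..(a + L), ‖G s y‖ ^ 2) := by
    refine continuous_const.mul ?_
    refine intervalIntegral.continuous_parametric_intervalIntegral_of_continuous'
      (f := fun (y : ℝ) s => ‖G s y‖ ^ 2) ?_ _ _
    exact ((hG.comp (by fun_prop : Continuous fun q : ℝ × ℝ => (q.2, q.1))).norm).pow 2
  rw [← intervalIntegral.integral_const_mul]
  have key := intervalIntegral.tendsto_integral_filter_of_dominated_convergence
    (l := (atTop : Filter (Finset ℤ))) (μ := volume) (a := 0) (b := c)
    (F := fun (S : Finset ℤ) y => ∑ m ∈ S,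
      ‖∫ s in a..(a + L), Complex.exp (-((2 * π * m / L * s : ℝ) * Complex.I)) * G s y‖ ^ 2)
    (f := fun y => L * ∫ s in a..(a + L), ‖G s y‖ ^ 2)
    (fun y => L * ∫ s in a..(a + L), ‖G s y‖ ^ 2)
    (Eventually.of_forall fun S =>
      (continuous_finsetSum S fun m _ => hC m).aestronglyMeasurable)
    (Eventually.of_forall fun S => Eventually.of_forall fun y _ => by
      rw [Real.norm_of_nonneg (Finset.sum_nonneg fun m _ => sq_nonneg _)]
      exact sum_le_hasSum S (fun m _ => sq_nonneg _) (hgy y))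
    (hB.intervalIntegrable _ _)
    (Eventually.of_forall fun y _ => hgy y)
  rw [HasSum]
  refine Tendsto.congr (fun S => ?_) key
  exact intervalIntegral.integral_finsetSum fun m _ => (hC m).intervalIntegrable _ _

/-- The derivative of a `2π`-periodic function is `2π`-periodic. -/
lemma periodic_deriv {E : Type*} [NormedAddCommGroup E] [NormedSpace ℝ E] {f f' : ℝ → E} {c : ℝ}
    (hd : ∀ x, HasDerivAt f (f' x) x) (hp : ∀ x, f (x + c) = f x) (x : ℝ) :
    f' (x + c) = f' x := by
  have h1 := (hd (x + c)).comp_add_const x c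
  simp only [hp] at h1
  exact h1.unique (hd x)

/-- Fubini for continuous integrands on a rectangle. -/
lemma integral_swap_continuous {f : ℝ → ℝ → ℝ} (hf : Continuous (fun p : ℝ × ℝ => f p.1 p.2))
    (a b c d : ℝ) : ∫ x in a..b, ∫ y in c..d, f x y = ∫ y in c..d, ∫ x in a..b, f x y := by
  refine intervalIntegral_intervalIntegral_swap ?_
  have : IntegrableOn (Function.uncurry f) (uIcc a b ×ˢ uIcc c d) :=
    ContinuousOn.integrableOn_compact (isCompact_uIcc.prod isCompact_uIcc) hf.continuousOn
  exact this.mono_set (prod_mono uIoc_subset_uIcc uIoc_subset_uIcc)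

/-! ### Oscillation and level sets of the shear profile -/

/-- If `|f'| ≥ d` on an interval of length `ℓ`, then `|f| ≥ d ℓ / 4` on its first or its last
quarter. -/
lemma quarter_lower_bound {f : ℝ → ℝ} (hf : Differentiable ℝ f) {d s ℓ : ℝ} (hℓ : 0 < ℓ)
    (hd : ∀ x ∈ Icc s (s + ℓ), d ≤ |deriv f x|) (hd0 : 0 ≤ d) :
    ∃ s', Icc s' (s' + ℓ / 4) ⊆ Icc s (s + ℓ) ∧
      ∀ x ∈ Icc s' (s' + ℓ / 4), d * (ℓ / 4) ≤ |f x| := by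
  by_contra hcon
  push Not at hcon
  obtain ⟨x, hx, hfx⟩ := hcon s (Icc_subset_Icc le_rfl (by linarith))
  obtain ⟨z, hz, hfz⟩ := hcon (s + 3 * ℓ / 4) (Icc_subset_Icc (by linarith) (by linarith))
  have hxz : x < z := by linarith [hx.2, hz.1]
  obtain ⟨ξ, hξ, hξe⟩ := exists_deriv_eq_slope f hxz hf.continuous.continuousOn
    (hf.differentiableOn)
  have h1 := hd ξ ⟨by linarith [hx.1, hξ.1], by linarith [hz.2, hξ.2]⟩
  rw [hξe, abs_div, abs_of_pos (sub_pos.2 hxz), le_div_iff₀ (sub_pos.2 hxz)] at h1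
  have h2 : |f z - f x| ≤ |f z| + |f x| := abs_sub _ _
  have h3 : d * (ℓ / 2) ≤ d * (z - x) :=
    mul_le_mul_of_nonneg_left (by linarith [hx.2, hz.1]) hd0
  linarith

/-- A lower bound on the `j`-th derivative on an interval bounds `|f|` from below on some
subinterval. -/
lemma iterated_lower_bound (j : ℕ) : ∀ {f : ℝ → ℝ}, ContDiff ℝ j f → ∀ {c s ℓ : ℝ}, 0 ≤ c →
    0 < ℓ → (∀ x ∈ Icc s (s + ℓ), c ≤ |iteratedDeriv j f x|) →
    ∃ s', Icc s' (s' + ℓ / 4 ^ j) ⊆ Icc s (s + ℓ) ∧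
      ∀ x ∈ Icc s' (s' + ℓ / 4 ^ j), c * (ℓ / 4 ^ j) ^ j ≤ |f x| := by
  induction j with
  | zero =>
    intro f _ c s ℓ _ _ h
    exact ⟨s, by simp, by simpa using h⟩
  | succ j ih =>
    intro f hf c s ℓ hc hℓ h
    have hf1 : ContDiff ℝ j (deriv f) := by
      have : ContDiff ℝ ((j : WithTop ℕ∞) + 1) f := by exact_mod_cast hf
      exact (contDiff_succ_iff_deriv.1 this).2.2
    simp only [iteratedDeriv_succ'] at h
    obtain ⟨s₁, hs₁, hb₁⟩ := ih hf1 hc hℓ h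
    have hfd : Differentiable ℝ f := hf.differentiable (by simp)
    obtain ⟨s₂, hs₂, hb₂⟩ := quarter_lower_bound hfd (by positivity) hb₁ (by positivity)
    have e : ℓ / 4 ^ j / 4 = ℓ / 4 ^ (j + 1) := by rw [pow_succ]; field_simp
    rw [e] at hs₂ hb₂
    refine ⟨s₂, hs₂.trans hs₁, fun x hx => le_trans ?_ (hb₂ x hx)⟩
    rw [pow_succ _ j, ← mul_assoc]
    gcongr <;> norm_num

/-- A profile, one of whose first `n` derivatives is nonzero at each point, moves away
from its value at `y` by at least a multiple of `d ^ n` somewhere on `[y, y + d]`, for all small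
`d`, uniformly for `y` in a window slightly larger than `[0, 2π]`. -/
lemma oscillation_lower_bound {n : ℕ} {u : ℝ → ℝ} (hu : ContDiff ℝ n u)
    (hnd : ∀ y, ∃ j ∈ Finset.Icc 1 n, iteratedDeriv j u y ≠ 0) :
    ∃ c₀ > 0, ∃ d₀ > 0, d₀ ≤ 1 ∧ ∀ d, 0 < d → d ≤ d₀ → ∀ y ∈ Icc (-1:ℝ) 8,
      ∃ s ∈ Icc y (y + d), c₀ * d ^ n ≤ |u s - u y| := by
  have hcont : ∀ j ∈ Finset.Icc 1 n, Continuous (iteratedDeriv j u) := fun j hj =>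
    hu.continuous_iteratedDeriv j (by exact_mod_cast (Finset.mem_Icc.1 hj).2)
  have hn : 0 < n := by
    obtain ⟨j, hj, -⟩ := hnd 0
    have := Finset.mem_Icc.1 hj
    omega
  set g : ℝ → ℝ := fun y => ∑ j ∈ Finset.Icc 1 n, |iteratedDeriv j u y| with hg
  have hgc : Continuous g := continuous_finsetSum _ fun j hj => (hcont j hj).abs
  have hgpos : ∀ y, 0 < g y := by
    intro y
    obtain ⟨j, hj, hjne⟩ := hnd y
    exact Finset.sum_pos' (fun i _ => abs_nonneg _) ⟨j, hj, abs_pos.2 hjne⟩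
  obtain ⟨y₀, -, hy₀⟩ := (isCompact_Icc (a := (-1:ℝ)) (b := 8)).exists_isMinOn
    ⟨0, by norm_num⟩ hgc.continuousOn
  set μ := g y₀ with hμ
  have hμ0 : 0 < μ := hgpos y₀
  set c := μ / (2 * n) with hc
  have hc0 : 0 < c := by positivity
  have hcover : Icc (-1:ℝ) 8 ⊆ ⋃ j : Finset.Icc 1 n, {y | c < |iteratedDeriv j u y|} := by
    intro y hy
    by_contra hcon
    simp only [mem_iUnion, mem_ofPred_eq, not_exists, not_lt] at hcon
    have h1 : g y ≤ ∑ _j ∈ Finset.Icc 1 n, c :=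
      Finset.sum_le_sum fun j hj => hcon ⟨j, hj⟩
    have h2 : μ ≤ g y := hy₀ hy
    simp only [Finset.sum_const, Nat.card_Icc, Nat.add_sub_cancel, nsmul_eq_mul] at h1
    have h3 : (n:ℝ) * c = μ / 2 := by rw [hc]; field_simp
    linarith
  obtain ⟨η, hη, hleb⟩ := lebesgue_number_lemma_of_metric isCompact_Icc
    (fun j : Finset.Icc 1 n => isOpen_lt continuous_const (hcont j j.2).abs) hcover
  refine ⟨c / (4 ^ n) ^ n, by positivity, min 1 (η / 2), by positivity, min_le_left _ _, ?_⟩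
  intro d hd hd1 y hy
  obtain ⟨⟨j, hj⟩, hball⟩ := hleb y hy
  obtain ⟨hj1, hjn⟩ := Finset.mem_Icc.1 hj
  have hjd : ∀ x ∈ Icc y (y + d), c ≤ |iteratedDeriv j (fun z => u z - u y) x| := by
    intro x hx
    have hx' : x ∈ Metric.ball y η := by
      rw [Metric.mem_ball, Real.dist_eq, abs_of_nonneg (by linarith [hx.1])]
      linarith [hx.2, hd1.trans (min_le_right _ _)]
    have h1 : c < |iteratedDeriv j u x| := hball hx'
    obtain ⟨i, rfl⟩ : ∃ i, j = i + 1 := ⟨j - 1, by omega⟩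
    have : deriv (fun z => u z - u y) = deriv u := by ext z; simp
    rw [iteratedDeriv_succ', this, ← iteratedDeriv_succ']
    exact h1.le
  obtain ⟨s, hs, hb⟩ := iterated_lower_bound j (f := fun z => u z - u y)
    ((hu.of_le (by exact_mod_cast hjn)).sub contDiff_const) hc0.le hd hjd
  have hsm : s ∈ Icc s (s + d / 4 ^ j) := ⟨le_rfl, by linarith [show 0 < d / 4 ^ j by positivity]⟩
  refine ⟨s, hs hsm, le_trans ?_ (hb s hsm)⟩
  have hd1' : d ≤ 1 := hd1.trans (min_le_left _ _)
  calc c / (4 ^ n) ^ n * d ^ n = c * (d / 4 ^ n) ^ n := by rw [div_pow]; ring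
    _ ≤ c * (d / 4 ^ n) ^ j := by
      gcongr c * ?_
      refine pow_le_pow_of_le_one (by positivity) ?_ hjn
      rw [div_le_one (by positivity)]
      exact hd1'.trans (one_le_pow₀ (by norm_num))
    _ ≤ c * (d / 4 ^ j) ^ j := by
      gcongr
      norm_num

/-- The level set `{u = lam}` together with the critical points of `u`. Since `u` has critical
points, this set is nonempty whatever `lam` is, so the distance to it is meaningful. -/
def levelCrit (u : ℝ → ℝ) (lam : ℝ) : Set ℝ := {y | u y = lam ∨ deriv u y = 0}

/-- By Rolle's theorem, the number of points of a level set in a window exceeds the number of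
critical points by at most one. -/
lemma levelCrit_card {u : ℝ → ℝ} (hu : Differentiable ℝ u)
    (hfin : {y ∈ Icc (-1:ℝ) 8 | deriv u y = 0}.Finite) :
    ∃ N : ℕ, ∀ lam, ∃ S : Finset ℝ, S.card ≤ N ∧ levelCrit u lam ∩ Icc (-1:ℝ) 8 ⊆ S := by
  set K := hfin.toFinset with hK
  refine ⟨(K.card + 1) + K.card, fun lam => ?_⟩
  set Z : Set ℝ := {y ∈ Icc (-1:ℝ) 8 | u y = lam} with hZ
  set φ : ℝ → ℕ := fun z => (K.filter (· < z)).card with hφ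
  have hmap : ∀ z ∈ Z, φ z ∈ (Finset.range (K.card + 1) : Set ℕ) := by
    intro z _
    simp only [Finset.coe_range, mem_Iio]
    exact Nat.lt_succ_of_le (Finset.card_le_card (Finset.filter_subset _ _))
  have hlt : ∀ z ∈ Z, ∀ w ∈ Z, z < w → φ z < φ w := by
    intro z hz w hw hzw
    obtain ⟨ξ, hξ, hξ0⟩ := exists_deriv_eq_zero hzw hu.continuous.continuousOn
      (hz.2.trans hw.2.symm)
    refine Finset.card_lt_card (Finset.ssubset_iff_of_subset ?_ |>.2 ⟨ξ, ?_, ?_⟩)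
    · intro x hx
      simp only [Finset.mem_filter] at hx ⊢
      exact ⟨hx.1, hx.2.trans hzw⟩
    · simp only [hK, Finset.mem_filter, Set.Finite.mem_toFinset, mem_ofPred_eq]
      exact ⟨⟨⟨by linarith [hz.1.1, hξ.1], by linarith [hw.1.2, hξ.2]⟩, hξ0⟩, hξ.2⟩
    · simp only [Finset.mem_filter, not_and, not_lt]
      exact fun _ => hξ.1.le
  have hinj : InjOn φ Z := by
    intro z hz w hw hzw
    rcases lt_trichotomy z w with h | h | h
    · exact absurd hzw (hlt z hz w hw h).ne
    · exact h
    · exact absurd hzw (hlt w hw z hz h).ne'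
  have hZf : Z.Finite := Set.Finite.of_injOn hmap hinj (Finset.finite_toSet _)
  have hcard : hZf.toFinset.card ≤ K.card + 1 := by
    have := Finset.card_le_card_of_injOn (s := hZf.toFinset) (t := Finset.range (K.card + 1)) φ
      (by intro z hz; exact hmap z (by simpa using hz)) (by simpa using hinj)
    simpa using this
  refine ⟨hZf.toFinset ∪ K, (Finset.card_union_le _ _).trans (by omega), ?_⟩
  rintro y ⟨hy | hy, hy2⟩
  · simp only [Finset.coe_union, mem_union, Set.Finite.coe_toFinset]
    exact Or.inl ⟨hy2, hy⟩
  · simp only [Finset.coe_union, mem_union, hK, Set.Finite.coe_toFinset]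
    exact Or.inr ⟨hy2, hy⟩

lemma lt_of_no_level {u : ℝ → ℝ} (hu : Continuous u) {lam y z : ℝ}
    (h : ∀ x ∈ uIcc y z, u x ≠ lam) (hy : lam < u y) : lam < u z := by
  by_contra hz
  push Not at hz
  obtain ⟨x, hx, hxe⟩ := intermediate_value_uIcc (hu.continuousOn (s := uIcc y z))
    (show lam ∈ uIcc (u y) (u z) from mem_uIcc.2 (Or.inr ⟨hz, hy.le⟩))
  exact h x hx hxe

lemma sign_eq_of_no_level {u : ℝ → ℝ} (hu : Continuous u) {lam y z : ℝ}
    (h : ∀ x ∈ uIcc y z, u x ≠ lam) :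
    Real.sign (u y - lam) = Real.sign (u z - lam) := by
  have hy := h y left_mem_uIcc
  rcases lt_or_gt_of_ne hy with hlt | hgt
  · have h2 : -lam < -u z := lt_of_no_level (u := fun x => -u x) hu.neg
      (fun x hx => by simpa using h x hx) (by linarith)
    rw [Real.sign_of_neg (by linarith), Real.sign_of_neg (by linarith)]
  · have h2 := lt_of_no_level hu h hgt
    rw [Real.sign_of_pos (by linarith), Real.sign_of_pos (by linarith)]

/-- Away from the level set `{u = lam}` and from the critical points, `u` differs from `lam` by
the amount it moves on a one-sided window around the point. -/
lemma level_gap {u : ℝ → ℝ} (hu : Differentiable ℝ u) {lam y h m : ℝ} (hh : 0 < h)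
    (hne : ∀ x ∈ Icc (y - h) (y + h), u x ≠ lam)
    (hcr : ∀ x ∈ Icc (y - h) (y + h), deriv u x ≠ 0)
    (h1 : ∃ s ∈ Icc (y - h) (y - h + h), m ≤ |u s - u (y - h)|)
    (h2 : ∃ s ∈ Icc y (y + h), m ≤ |u s - u y|) : m ≤ |u y - lam| := by
  have hinj : InjOn u (Icc (y - h) (y + h)) := by
    have key : ∀ a ∈ Icc (y - h) (y + h), ∀ b ∈ Icc (y - h) (y + h), a < b → u a ≠ u b := by
      intro a ha b hb hab he
      obtain ⟨ξ, hξ, hξ0⟩ := exists_deriv_eq_zero hab hu.continuous.continuousOn he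
      exact hcr ξ ⟨by linarith [ha.1, hξ.1], by linarith [hb.2, hξ.2]⟩ hξ0
    intro a ha b hb he
    rcases lt_trichotomy a b with hab | hab | hab
    · exact absurd he (key a ha b hb hab)
    · exact hab
    · exact absurd he.symm (key b hb a ha hab)
  obtain ⟨s, hs, hsm⟩ := h1
  obtain ⟨t, ht, htm⟩ := h2
  rw [sub_add_cancel] at hs
  have my : y ∈ Icc (y - h) (y + h) := ⟨by linarith, by linarith⟩
  have ml : y - h ∈ Icc (y - h) (y + h) := ⟨by linarith, by linarith⟩
  have mr : y + h ∈ Icc (y - h) (y + h) := ⟨by linarith, by linarith⟩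
  have ms : s ∈ Icc (y - h) (y + h) := ⟨hs.1, by linarith [hs.2]⟩
  have mt : t ∈ Icc (y - h) (y + h) := ⟨by linarith [ht.1], ht.2⟩
  have sub : ∀ z ∈ Icc (y - h) (y + h), ∀ x ∈ uIcc y z, u x ≠ lam := fun z hz x hx =>
    hne x (uIcc_subset_Icc my hz hx)
  have hpos : lam < u y → lam < u (y - h) ∧ lam < u (y + h) := fun hy =>
    ⟨lt_of_no_level hu.continuous (sub _ ml) hy, lt_of_no_level hu.continuous (sub _ mr) hy⟩
  have hneg : u y < lam → u (y - h) < lam ∧ u (y + h) < lam := fun hy => by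
    have := lt_of_no_level (u := fun x => -u x) (lam := -lam) (y := y) (z := y - h)
      hu.continuous.neg (fun x hx => by simpa using sub _ ml x hx) (by linarith)
    have := lt_of_no_level (u := fun x => -u x) (lam := -lam) (y := y) (z := y + h)
      hu.continuous.neg (fun x hx => by simpa using sub _ mr x hx) (by linarith)
    constructor <;> linarith
  rcases hu.continuous.continuousOn.strictMonoOn_of_injOn_Icc' (by linarith) hinj with hm | hm
  · have e1 := hm.monotoneOn ml ms hs.1
    have e2 := hm.monotoneOn ms my hs.2
    have e3 := hm.monotoneOn my mt ht.1
    have e4 := hm.monotoneOn mt mr ht.2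
    rw [abs_of_nonneg (by linarith)] at hsm htm
    rcases lt_or_gt_of_ne (hne y my) with hy | hy
    · rw [abs_of_neg (by linarith)]; linarith [(hneg hy).2]
    · rw [abs_of_pos (by linarith)]; linarith [(hpos hy).1]
  · have e1 := hm.antitoneOn ml ms hs.1
    have e2 := hm.antitoneOn ms my hs.2
    have e3 := hm.antitoneOn my mt ht.1
    have e4 := hm.antitoneOn mt mr ht.2
    rw [abs_of_nonpos (by linarith)] at hsm htm
    rcases lt_or_gt_of_ne (hne y my) with hy | hy
    · rw [abs_of_neg (by linarith)]; linarith [(hneg hy).1]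
    · rw [abs_of_pos (by linarith)]; linarith [(hpos hy).2]

lemma real_sign_abs_le (r : ℝ) : |Real.sign r| ≤ 1 := by
  rcases Real.sign_apply_eq r with h | h | h <;> simp [h]

/-- The geometric input of the resolvent estimate. For every level `lam` and every small scale
`d` there is a `d⁻¹`-Lipschitz periodic approximation `χ` of the sign of `u - lam` such that
`χ (u - lam) ≥ c₀ d ^ n` off a set `E` of measure `O(d)`, with constants independent of `lam`. -/
def HasMultipliers (n : ℕ) (u : ℝ → ℝ) (c₀ d₀ N : ℝ) : Prop :=
  ∀ lam d : ℝ, 0 < d → d ≤ d₀ → ∃ (χ : ℝ → ℝ) (E : Set ℝ), MeasurableSet E ∧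
    volume (E ∩ Ioc 0 (2 * π)) ≤ ENNReal.ofReal (N * d) ∧
    (∀ y, χ (y + 2 * π) = χ y) ∧ LipschitzWith (Real.toNNReal (1 / d)) χ ∧
    (∀ y, |χ y| ≤ 1) ∧ (∀ y, 0 ≤ χ y * (u y - lam)) ∧
    ∀ y ∈ Ioc 0 (2 * π), y ∉ E → c₀ * d ^ n ≤ χ y * (u y - lam)

/-- With `Z = levelCrit u lam`, the multiplier is `χ = sign (u - lam) * min 1 (dist (·, Z) / d)`,
which is Lipschitz because `sign (u - lam)` only jumps on `Z`. The exceptional set is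
`{dist (·, Z) < d}`, of measure `O(d)` since `Z` has boundedly many points in a period; off it
`level_gap` bounds `|u - lam|` from below. -/
lemma exists_multipliers {n : ℕ} {u : ℝ → ℝ} (hu : ContDiff ℝ n u) (hn : 1 ≤ n)
    (hper : ∀ y, u (y + 2 * π) = u y)
    (hnd : ∀ y, ∃ j ∈ Finset.Icc 1 n, iteratedDeriv j u y ≠ 0)
    (hfin : {y ∈ Icc (-1:ℝ) 8 | deriv u y = 0}.Finite) (hne : ∃ y, deriv u y = 0) :
    ∃ c₀ > 0, ∃ d₀ > 0, d₀ ≤ 1 ∧ ∃ N > 0, HasMultipliers n u c₀ d₀ N := by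
  have hud : Differentiable ℝ u := hu.differentiable (by simp; omega)
  obtain ⟨c₀, hc₀, d₀, hd₀, hd1, hosc⟩ := oscillation_lower_bound hu hnd
  obtain ⟨N, hN⟩ := levelCrit_card hud hfin
  refine ⟨c₀ / 2 ^ n, by positivity, d₀, hd₀, hd1, 2 * N + 1, by positivity, ?_⟩
  intro lam d hd hdd
  set Z := levelCrit u lam with hZ
  have hZne : Z.Nonempty := let ⟨y, hy⟩ := hne; ⟨y, Or.inr hy⟩
  have hdper : ∀ y, deriv u (y + 2 * π) = deriv u y :=
    periodic_deriv (fun x => (hud x).hasDerivAt) hper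
  have hZper : ∀ y, y + 2 * π ∈ Z ↔ y ∈ Z := by
    intro y
    simp only [hZ, levelCrit, mem_ofPred_eq, hper, hdper]
  have hinfper : ∀ y, Metric.infDist (y + 2 * π) Z = Metric.infDist y Z := by
    intro y
    have hZi : (fun z => z + 2 * π) '' Z = Z := by
      ext z
      constructor
      · rintro ⟨w, hw, rfl⟩
        exact (hZper w).2 hw
      · intro hz
        exact ⟨z - 2 * π, (hZper _).1 (by simpa using hz), by simp⟩
    conv_lhs => rw [← hZi]
    exact Metric.infDist_image (isometry_add_right (2 * π))
  set w : ℝ → ℝ := fun y => min 1 (Metric.infDist y Z / d) with hw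
  have hw0 : ∀ y, 0 ≤ w y := fun y => le_min zero_le_one (div_nonneg Metric.infDist_nonneg hd.le)
  have hw1 : ∀ y, w y ≤ 1 := fun y => min_le_left _ _
  have habs : ∀ y, |Real.sign (u y - lam) * w y| ≤ w y := by
    intro y
    rw [abs_mul, abs_of_nonneg (hw0 y)]
    exact mul_le_of_le_one_left (hw0 y) (real_sign_abs_le _)
  refine ⟨fun y => Real.sign (u y - lam) * w y, {y | Metric.infDist y Z < d}, ?_, ?_, ?_, ?_, ?_,
    ?_, ?_⟩
  · exact (isOpen_lt (Metric.continuous_infDist_pt Z) continuous_const).measurableSet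
  · obtain ⟨S, hS, hSZ⟩ := hN lam
    have hsub : {y | Metric.infDist y Z < d} ∩ Ioc 0 (2 * π) ⊆ ⋃ z ∈ S, Metric.ball z d := by
      rintro y ⟨hy, hy2⟩
      obtain ⟨z, hz, hdz⟩ := (Metric.infDist_lt_iff hZne).1 hy
      have hdz' := hdz
      rw [Real.dist_eq, abs_lt] at hdz'
      have hzS : z ∈ S := hSZ ⟨hz, by linarith [hy2.1], by linarith [hy2.2, Real.pi_lt_d2]⟩
      exact mem_iUnion₂.2 ⟨z, hzS, Metric.mem_ball.2 hdz⟩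
    calc volume ({y | Metric.infDist y Z < d} ∩ Ioc 0 (2 * π))
        ≤ volume (⋃ z ∈ S, Metric.ball z d) := measure_mono hsub
      _ ≤ ∑ z ∈ S, volume (Metric.ball z d) := measure_biUnion_finset_le _ _
      _ = S.card * ENNReal.ofReal (2 * d) := by simp [Real.volume_ball]
      _ = ENNReal.ofReal (S.card * (2 * d)) := by
        rw [ENNReal.ofReal_mul (p := (S.card : ℝ)) (by positivity), ENNReal.ofReal_natCast]
      _ ≤ ENNReal.ofReal ((2 * N + 1) * d) := by
        apply ENNReal.ofReal_le_ofReal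
        have : (S.card : ℝ) ≤ N := by exact_mod_cast hS
        nlinarith
  · intro y
    simp only [hper, hw, hinfper]
  · refine LipschitzWith.of_dist_le_mul fun y z => ?_
    rw [Real.coe_toNNReal _ (by positivity), Real.dist_eq, Real.dist_eq]
    by_cases hex : ∃ x ∈ uIcc y z, u x = lam
    · obtain ⟨x, hx, hxe⟩ := hex
      have hxZ : x ∈ Z := Or.inl hxe
      have b1 : w y ≤ |y - x| / d := (min_le_right _ _).trans (by
        gcongr; rw [← Real.dist_eq]; exact Metric.infDist_le_dist_of_mem hxZ)
      have b2 : w z ≤ |z - x| / d := (min_le_right _ _).trans (by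
        gcongr; rw [← Real.dist_eq]; exact Metric.infDist_le_dist_of_mem hxZ)
      have b3 : |y - x| + |z - x| = |y - z| := by
        rcases mem_uIcc.1 hx with ⟨ha, hb⟩ | ⟨ha, hb⟩
        · rw [abs_of_nonpos (by linarith), abs_of_nonneg (by linarith),
            abs_of_nonpos (by linarith)]; ring
        · rw [abs_of_nonneg (by linarith), abs_of_nonpos (by linarith),
            abs_of_nonneg (by linarith)]; ring
      calc _ ≤ |Real.sign (u y - lam) * w y| + |Real.sign (u z - lam) * w z| := abs_sub _ _
        _ ≤ w y + w z := add_le_add (habs y) (habs z)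
        _ ≤ |y - x| / d + |z - x| / d := add_le_add b1 b2
        _ = 1 / d * |y - z| := by rw [← b3]; ring
    · push Not at hex
      rw [sign_eq_of_no_level hud.continuous hex, ← mul_sub, abs_mul]
      refine (mul_le_of_le_one_left (abs_nonneg _) (real_sign_abs_le _)).trans ?_
      calc |w y - w z| ≤ max |(1:ℝ) - 1| |Metric.infDist y Z / d - Metric.infDist z Z / d| :=
            abs_min_sub_min_le_max _ _ _ _
        _ = |Metric.infDist y Z - Metric.infDist z Z| / d := by
          rw [sub_self, abs_zero, max_eq_right (abs_nonneg _), ← sub_div, abs_div, abs_of_pos hd]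
        _ ≤ |y - z| / d := by
          refine div_le_div_of_nonneg_right ?_ hd.le
          simpa [Real.dist_eq] using (Metric.lipschitz_infDist_pt Z).dist_le_mul y z
        _ = 1 / d * |y - z| := by ring
  · intro y
    exact (habs y).trans (hw1 y)
  · intro y
    have : Real.sign (u y - lam) * w y * (u y - lam) =
      w y * (Real.sign (u y - lam) * (u y - lam)) := by ring
    rw [this]
    exact mul_nonneg (hw0 y) (Real.sign_mul_nonneg _)
  · intro y hy hyE
    simp only [mem_ofPred_eq, not_lt] at hyE
    have hw1' : w y = 1 := min_eq_left ((one_le_div hd).2 hyE)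
    have hoff : ∀ x ∈ Icc (y - d / 2) (y + d / 2), x ∉ Z := by
      intro x hx hxZ
      have h1 : Metric.infDist y Z ≤ dist y x := Metric.infDist_le_dist_of_mem hxZ
      have h2 : dist y x ≤ d / 2 := by
        rw [Real.dist_eq, abs_le]; constructor <;> linarith [hx.1, hx.2]
      linarith
    have hgap := level_gap hud (lam := lam) (y := y) (h := d / 2) (m := c₀ * (d / 2) ^ n)
      (by positivity) (fun x hx h => hoff x hx (Or.inl h)) (fun x hx h => hoff x hx (Or.inr h))
      (hosc (d / 2) (by positivity) (by linarith) _
        ⟨by linarith [hy.1], by linarith [hy.2, Real.pi_lt_d2]⟩)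
      (hosc (d / 2) (by positivity) (by linarith) _
        ⟨by linarith [hy.1], by linarith [hy.2, Real.pi_lt_d2]⟩)
    have e : Real.sign (u y - lam) * (u y - lam) = |u y - lam| := by
      rcases lt_trichotomy (u y - lam) 0 with h | h | h
      · rw [Real.sign_of_neg h, abs_of_neg h]; ring
      · rw [h]; simp
      · rw [Real.sign_of_pos h, abs_of_pos h]; ring
    simp only [hw1', mul_one, e]
    calc c₀ / 2 ^ n * d ^ n = c₀ * (d / 2) ^ n := by rw [div_pow]; ring
      _ ≤ _ := hgap

/-! ### The resolvent estimate -/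

/-- Agmon-type inequality on the circle. -/
lemma sup_bound {c c1 : ℝ → ℂ} (hc : ∀ y, HasDerivAt c (c1 y) y) (hc1 : Continuous c1) {y : ℝ}
    (hy : y ∈ Icc 0 (2 * π)) :
    ‖c y‖ ^ 2 ≤ (∫ y in (0:ℝ)..(2 * π), ‖c y‖ ^ 2) +
      2 * (√(∫ y in (0:ℝ)..(2 * π), ‖c y‖ ^ 2) * √(∫ y in (0:ℝ)..(2 * π), ‖c1 y‖ ^ 2)) := by
  have hcc : Continuous c := continuous_iff_continuousAt.2 fun y => (hc y).continuousAt
  have hπ := Real.pi_gt_three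
  obtain ⟨y₀, hy₀, hmin⟩ := (isCompact_Icc (a := (0:ℝ)) (b := 2 * π)).exists_isMinOn
    ⟨0, by constructor <;> linarith⟩ ((hcc.norm.pow 2).continuousOn)
  have h1 : ‖c y₀‖ ^ 2 ≤ ∫ y in (0:ℝ)..(2 * π), ‖c y‖ ^ 2 := by
    have : ∫ _y in (0:ℝ)..(2 * π), ‖c y₀‖ ^ 2 ≤ ∫ y in (0:ℝ)..(2 * π), ‖c y‖ ^ 2 :=
      intervalIntegral.integral_mono_on (by linarith) intervalIntegrable_const
        ((hcc.norm.pow 2).intervalIntegrable _ _) (fun y hy => hmin hy)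
    rw [intervalIntegral.integral_const, smul_eq_mul] at this
    nlinarith [sq_nonneg ‖c y₀‖]
  have h2 : ‖c y‖ ^ 2 - ‖c y₀‖ ^ 2 = ∫ z in y₀..y, 2 * inner ℝ (c z) (c1 z) := by
    rw [intervalIntegral.integral_eq_sub_of_hasDerivAt (f := fun z => ‖c z‖ ^ 2)
      (fun z _ => (hc z).norm_sq)]
    exact Continuous.intervalIntegrable (by fun_prop) _ _
  have h3 : ∫ z in y₀..y, 2 * inner ℝ (c z) (c1 z) ≤
      ∫ z in (0:ℝ)..(2 * π), 2 * (‖c z‖ * ‖c1 z‖) := by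
    have hi : Continuous (fun z => 2 * (‖c z‖ * ‖c1 z‖)) := by fun_prop
    calc ∫ z in y₀..y, 2 * inner ℝ (c z) (c1 z)
        ≤ |∫ z in y₀..y, 2 * (‖c z‖ * ‖c1 z‖)| := by
          refine (le_abs_self _).trans ?_
          have hz : ∀ z, ‖(2:ℝ) * inner ℝ (c z) (c1 z)‖ ≤ 2 * (‖c z‖ * ‖c1 z‖) := by
            intro z
            rw [norm_mul, Real.norm_two]
            exact mul_le_mul_of_nonneg_left (abs_real_inner_le_norm _ _) zero_le_two
          exact intervalIntegral.norm_integral_le_abs_of_norm_le (μ := volume)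
            (Eventually.of_forall hz) (hi.intervalIntegrable _ _)
      _ ≤ |∫ z in (0:ℝ)..(2 * π), 2 * (‖c z‖ * ‖c1 z‖)| := by
          refine intervalIntegral.abs_integral_mono_interval ?_
            (Eventually.of_forall fun z => ?_) (hi.intervalIntegrable _ _)
          · rw [uIoc_of_le (by linarith : (0:ℝ) ≤ 2 * π)]
            exact Ioc_subset_Ioc (le_min hy₀.1 hy.1) (max_le hy₀.2 hy.2)
          · exact mul_nonneg zero_le_two (mul_nonneg (norm_nonneg _) (norm_nonneg _))
      _ = _ := abs_of_nonneg (intervalIntegral.integral_nonneg (by linarith)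
          fun z _ => by positivity)
  rw [intervalIntegral.integral_const_mul (2:ℝ) (fun z => ‖c z‖ * ‖c1 z‖)] at h3
  have h4 := integral_mul_le_sqrt hcc.norm hc1.norm (by linarith : (0:ℝ) ≤ 2 * π)
  linarith

/-- The scalar inequality closing the resolvent estimate: `a`, `b`, `e` stand for the `L²` norms
of the unknown, of the source and of the derivative of the unknown. -/
lemma resolvent_algebra {a b e κ d N m : ℝ} (ha : 0 ≤ a) (hb : 0 ≤ b) (hκ : 0 < κ)
    (hd : 0 < d) (hm : 0 < m) (hNd : N * d ≤ 1 / 4) (h1 : κ * e ^ 2 ≤ a * b)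
    (h2 : m * a ^ 2 ≤ a * b + κ / d * (a * e) + m * ((a ^ 2 + 2 * (a * e)) * (N * d))) :
    a ≤ 2 * (1 / m + 2 * κ / (m ^ 2 * d ^ 2) + 8 * N ^ 2 * d ^ 2 / κ) * b := by
  rcases ha.eq_or_lt with rfl | ha
  · positivity
  set r := κ / (d * m) with hr
  have h3 : a ^ 2 ≤ a * b / m + r * (a * e) + (a ^ 2 + 2 * (a * e)) * (N * d) := by
    have : a ^ 2 ≤ (a * b + κ / d * (a * e) + m * ((a ^ 2 + 2 * (a * e)) * (N * d))) / m := by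
      rw [le_div_iff₀ hm]; linarith
    refine this.trans_eq ?_
    rw [hr]; field_simp
  have h4 : e ^ 2 ≤ a * b / κ := by rw [le_div_iff₀ hκ]; linarith
  have h5 : 2 * (a * e) * (N * d) ≤ a ^ 2 / 8 + 8 * (N * d) ^ 2 * e ^ 2 := by
    nlinarith [sq_nonneg (a - 8 * (N * d) * e)]
  have h6 : r * (a * e) ≤ a ^ 2 / 8 + 2 * r ^ 2 * e ^ 2 := by
    nlinarith [sq_nonneg (a - 4 * r * e)]
  have h7 : a ^ 2 * (N * d) ≤ a ^ 2 / 4 := by nlinarith [sq_nonneg a]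
  have h8 : (8 * (N * d) ^ 2 + 2 * r ^ 2) * e ^ 2 ≤
      (8 * (N * d) ^ 2 + 2 * r ^ 2) * (a * b / κ) := by gcongr
  have h9 : a * a ≤ a * (2 * (1 / m + 2 * κ / (m ^ 2 * d ^ 2) + 8 * N ^ 2 * d ^ 2 / κ) * b) := by
    have e1 : a * (2 * (1 / m + 2 * κ / (m ^ 2 * d ^ 2) + 8 * N ^ 2 * d ^ 2 / κ) * b) =
        2 * (a * b / m + (8 * (N * d) ^ 2 + 2 * r ^ 2) * (a * b / κ)) := by
      rw [hr]; field_simp; ring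
    rw [e1]
    nlinarith
  exact le_of_mul_le_mul_left h9 ha

/-- The resolvent equation `i k (u - lam) c + α c - κ c'' = F` on the circle. -/
structure IsResolventSol (κ α k lam : ℝ) (u : ℝ → ℝ) (c c1 c2 F : ℝ → ℂ) : Prop where
  d1 : ∀ y, HasDerivAt c (c1 y) y
  d2 : ∀ y, HasDerivAt c1 (c2 y) y
  cont2 : Continuous c2
  contF : Continuous F
  per : ∀ y, c (y + 2 * π) = c y
  eq : ∀ y, Complex.I * (k * (u y - lam) : ℝ) * c y + (α : ℂ) * c y - (κ : ℂ) * c2 y = F y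

/-- Testing the equation with the unknown controls its derivative. -/
lemma resolvent_energy {κ α k lam : ℝ} {u : ℝ → ℝ} {c c1 c2 F : ℝ → ℂ}
    (h : IsResolventSol κ α k lam u c c1 c2 F) (hα : 0 ≤ α) :
    κ * ∫ y in (0:ℝ)..(2 * π), ‖c1 y‖ ^ 2 ≤
      √(∫ y in (0:ℝ)..(2 * π), ‖c y‖ ^ 2) * √(∫ y in (0:ℝ)..(2 * π), ‖F y‖ ^ 2) := by
  obtain ⟨d1, d2, cont2, contF, per, eq⟩ := h
  have hc : Continuous c := continuous_iff_continuousAt.2 fun y => (d1 y).continuousAt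
  have hc1 : Continuous c1 := continuous_iff_continuousAt.2 fun y => (d2 y).continuousAt
  have h2π : (0:ℝ) ≤ 2 * π := by positivity
  have per1 := periodic_deriv d1 per
  have hz : ∫ y in (0:ℝ)..(2 * π), (inner ℝ (c y) (c2 y) + inner ℝ (c1 y) (c1 y)) = 0 := by
    rw [intervalIntegral.integral_eq_sub_of_hasDerivAt (f := fun z => inner ℝ (c z) (c1 z))
      (fun z _ => (d1 z).inner ℝ (d2 z)) (Continuous.intervalIntegrable (by fun_prop) _ _)]
    have e1 := per 0
    have e2 := per1 0
    rw [zero_add] at e1 e2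
    simp [e1, e2]
  have hpt : ∀ y, κ * ‖c1 y‖ ^ 2 ≤
      ‖c y‖ * ‖F y‖ + κ * (inner ℝ (c y) (c2 y) + inner ℝ (c1 y) (c1 y)) := by
    intro y
    have e1 : inner ℝ (c y) (F y) = α * ‖c y‖ ^ 2 - κ * inner ℝ (c y) (c2 y) := by
      rw [← eq y, Complex.sq_norm, Complex.normSq_apply]
      simp [Complex.inner]
      ring
    have e2 := real_inner_le_norm (c y) (F y)
    rw [real_inner_self_eq_norm_sq]
    nlinarith [mul_nonneg hα (sq_nonneg ‖c y‖)]
  have hineq := intervalIntegral.integral_mono_on (μ := volume) h2π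
    (Continuous.intervalIntegrable (by fun_prop) _ _)
    (Continuous.intervalIntegrable (by fun_prop) _ _) (fun y _ => hpt y)
  rw [intervalIntegral.integral_const_mul, intervalIntegral.integral_add,
    intervalIntegral.integral_const_mul κ, hz] at hineq
  · have := integral_mul_le_sqrt hc.norm contF.norm h2π
    linarith
  all_goals exact Continuous.intervalIntegrable (by fun_prop) _ _

/-- Testing the equation with `i χ c`, for a Lipschitz multiplier `χ`, controls
`∫ χ (u - lam) |c|²`. -/
lemma resolvent_multiplier {κ α k lam d : ℝ} {u χ : ℝ → ℝ} {c c1 c2 F : ℝ → ℂ}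
    (h : IsResolventSol κ α k lam u c c1 c2 F) (hκ : 0 ≤ κ) (hk : 1 ≤ |k|)
    (hd : 0 < d) (hper : ∀ y, χ (y + 2 * π) = χ y)
    (hlip : LipschitzWith (Real.toNNReal (1 / d)) χ) (hχ1 : ∀ y, |χ y| ≤ 1)
    (hχ0 : ∀ y, 0 ≤ χ y * (u y - lam)) :
    ∫ y in (0:ℝ)..(2 * π), χ y * (u y - lam) * ‖c y‖ ^ 2 ≤
      √(∫ y in (0:ℝ)..(2 * π), ‖c y‖ ^ 2) * √(∫ y in (0:ℝ)..(2 * π), ‖F y‖ ^ 2) +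
      κ / d *
        (√(∫ y in (0:ℝ)..(2 * π), ‖c y‖ ^ 2) * √(∫ y in (0:ℝ)..(2 * π), ‖c1 y‖ ^ 2)) := by
  obtain ⟨d1, d2, cont2, contF, per, eq⟩ := h
  have hc : Continuous c := continuous_iff_continuousAt.2 fun y => (d1 y).continuousAt
  have hc1 : Continuous c1 := continuous_iff_continuousAt.2 fun y => (d2 y).continuousAt
  have hχ : Continuous χ := hlip.continuous
  have h2π : (0:ℝ) ≤ 2 * π := by positivity
  have per1 := periodic_deriv d1 per
  set W : ℝ → ℝ := fun y => inner ℝ (Complex.I * c y) (c1 y) with hW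
  have hWd : ∀ y, HasDerivAt W (inner ℝ (Complex.I * c y) (c2 y)) y := by
    intro y
    have := ((d1 y).const_mul Complex.I).inner ℝ (d2 y)
    refine this.congr_deriv ?_
    simp [Complex.inner]
    ring
  have hWder : deriv W = fun y => inner ℝ (Complex.I * c y) (c2 y) :=
    funext fun y => (hWd y).deriv
  have hWC : ContDiff ℝ 1 W := by
    rw [contDiff_one_iff_deriv]
    refine ⟨fun y => (hWd y).differentiableAt, ?_⟩
    rw [hWder]
    fun_prop
  have hparts := AbsolutelyContinuousOnInterval.integral_mul_deriv_eq_deriv_mul (a := 0)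
    (b := 2 * π) (hlip.lipschitzOnWith.absolutelyContinuousOnInterval)
    (hWC.contDiffOn.absolutelyContinuousOnInterval)
  have hbd : χ (2 * π) * W (2 * π) - χ 0 * W 0 = 0 := by
    have e1 := per 0
    have e2 := per1 0
    have e3 := hper 0
    rw [zero_add] at e1 e2 e3
    simp [hW, e1, e2, e3]
  rw [hbd, zero_sub, hWder] at hparts
  have hpt : ∀ y, k * (χ y * (u y - lam) * ‖c y‖ ^ 2) =
      χ y * inner ℝ (Complex.I * c y) (F y) + κ * (χ y * inner ℝ (Complex.I * c y) (c2 y)) := by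
    intro y
    rw [← eq y, Complex.sq_norm, Complex.normSq_apply]
    simp [Complex.inner]
    ring
  have hineq : k * ∫ y in (0:ℝ)..(2 * π), χ y * (u y - lam) * ‖c y‖ ^ 2 =
      (∫ y in (0:ℝ)..(2 * π), χ y * inner ℝ (Complex.I * c y) (F y)) -
        κ * ∫ y in (0:ℝ)..(2 * π), deriv χ y * W y := by
    rw [← intervalIntegral.integral_const_mul]
    simp_rw [hpt]
    rw [intervalIntegral.integral_add, intervalIntegral.integral_const_mul, hparts]
    · ring
    all_goals exact Continuous.intervalIntegrable (by fun_prop) _ _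
  have b1 : |∫ y in (0:ℝ)..(2 * π), χ y * inner ℝ (Complex.I * c y) (F y)| ≤
      ∫ y in (0:ℝ)..(2 * π), ‖c y‖ * ‖F y‖ := by
    have hi : Continuous (fun y => ‖c y‖ * ‖F y‖) := by fun_prop
    rw [← Real.norm_eq_abs]
    refine intervalIntegral.norm_integral_le_of_norm_le (μ := volume) h2π
      (Eventually.of_forall fun y _ => ?_)
      (hi.intervalIntegrable _ _)
    rw [norm_mul, Real.norm_eq_abs, Real.norm_eq_abs]
    have e1 := abs_real_inner_le_norm (Complex.I * c y) (F y)
    rw [norm_mul, Complex.norm_I, one_mul] at e1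
    exact (mul_le_of_le_one_left (abs_nonneg _) (hχ1 y)).trans e1
  have b2 : |∫ y in (0:ℝ)..(2 * π), deriv χ y * W y| ≤
      ∫ y in (0:ℝ)..(2 * π), 1 / d * (‖c y‖ * ‖c1 y‖) := by
    have hi : Continuous (fun y => 1 / d * (‖c y‖ * ‖c1 y‖)) := by fun_prop
    rw [← Real.norm_eq_abs]
    refine intervalIntegral.norm_integral_le_of_norm_le (μ := volume) h2π
      (Eventually.of_forall fun y _ => ?_)
      (hi.intervalIntegrable _ _)
    rw [norm_mul]
    have e0 := norm_deriv_le_of_lipschitz (x₀ := y) hlip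
    rw [Real.coe_toNNReal _ (by positivity)] at e0
    have e1 := abs_real_inner_le_norm (Complex.I * c y) (c1 y)
    rw [norm_mul, Complex.norm_I, one_mul] at e1
    exact mul_le_mul e0 e1 (norm_nonneg _) (by positivity)
  rw [intervalIntegral.integral_const_mul] at b2
  have b3 := integral_mul_le_sqrt hc.norm contF.norm h2π
  have b4 := integral_mul_le_sqrt hc.norm hc1.norm h2π
  set M := ∫ y in (0:ℝ)..(2 * π), χ y * (u y - lam) * ‖c y‖ ^ 2 with hM
  have hM0 : 0 ≤ M := intervalIntegral.integral_nonneg h2π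
    fun y _ => mul_nonneg (hχ0 y) (sq_nonneg _)
  have hMk : M ≤ |k * M| := by
    rw [abs_mul, abs_of_nonneg hM0]
    nlinarith
  have b5 : |k * M| ≤ (∫ y in (0:ℝ)..(2 * π), ‖c y‖ * ‖F y‖) +
      κ * (1 / d * ∫ y in (0:ℝ)..(2 * π), ‖c y‖ * ‖c1 y‖) := by
    rw [hineq]
    refine (abs_sub _ _).trans (add_le_add b1 ?_)
    rw [abs_mul, abs_of_nonneg hκ]
    exact mul_le_mul_of_nonneg_left b2 hκ
  refine hMk.trans (b5.trans (add_le_add b3 ?_))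
  calc κ * (1 / d * ∫ y in (0:ℝ)..(2 * π), ‖c y‖ * ‖c1 y‖)
      = κ / d * ∫ y in (0:ℝ)..(2 * π), ‖c y‖ * ‖c1 y‖ := by ring
    _ ≤ _ := mul_le_mul_of_nonneg_left b4 (by positivity)

/-- The resolvent estimate at a fixed scale `d`. -/
lemma resolvent_scale {n : ℕ} {κ α k lam c₀ d₀ N d : ℝ} {u : ℝ → ℝ} {c c1 c2 F : ℝ → ℂ}
    (hmul : HasMultipliers n u c₀ d₀ N) (hc₀ : 0 < c₀) (hN : 0 < N)
    (h : IsResolventSol κ α k lam u c c1 c2 F) (hu : Continuous u) (hκ : 0 < κ) (hα : 0 ≤ α)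
    (hk : 1 ≤ |k|) (hd : 0 < d) (hdd : d ≤ d₀) (hNd : N * d ≤ 1 / 4) :
    √(∫ y in (0:ℝ)..(2 * π), ‖c y‖ ^ 2) ≤
      2 * (1 / (c₀ * d ^ n) + 2 * κ / ((c₀ * d ^ n) ^ 2 * d ^ 2) + 8 * N ^ 2 * d ^ 2 / κ) *
        √(∫ y in (0:ℝ)..(2 * π), ‖F y‖ ^ 2) := by
  obtain ⟨χ, E, hE, hvol, hper, hlip, hχ1, hχ0, hlow⟩ := hmul lam d hd hdd
  have g1 := resolvent_energy h hα
  have g2 := resolvent_multiplier h hκ.le hk hd hper hlip hχ1 hχ0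
  have hc : Continuous c := continuous_iff_continuousAt.2 fun y => (h.d1 y).continuousAt
  have hc1 : Continuous c1 := continuous_iff_continuousAt.2 fun y => (h.d2 y).continuousAt
  have hχ : Continuous χ := hlip.continuous
  have h2π : (0:ℝ) ≤ 2 * π := by positivity
  have g3 := fun y (hy : y ∈ Icc 0 (2 * π)) => sup_bound h.d1 hc1 hy
  set A := ∫ y in (0:ℝ)..(2 * π), ‖c y‖ ^ 2 with hA
  set D := ∫ y in (0:ℝ)..(2 * π), ‖c1 y‖ ^ 2 with hD
  have hA0 : 0 ≤ A := intervalIntegral.integral_nonneg h2π fun y _ => sq_nonneg _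
  have hD0 : 0 ≤ D := intervalIntegral.integral_nonneg h2π fun y _ => sq_nonneg _
  set S := A + 2 * (√A * √D) with hS
  have hS0 : 0 ≤ S := by positivity
  set m := c₀ * d ^ n with hm
  have hm0 : 0 < m := by positivity
  have hEint : ∫ y in Ioc 0 (2 * π), E.indicator (fun _ => S) y ≤ S * (N * d) := by
    rw [setIntegral_indicator hE, setIntegral_const, smul_eq_mul, mul_comm, inter_comm]
    refine mul_le_mul_of_nonneg_left ?_ hS0
    exact ENNReal.toReal_le_of_le_ofReal (by positivity) hvol
  have hi1 : IntegrableOn (fun y => χ y * (u y - lam) * ‖c y‖ ^ 2) (Ioc 0 (2 * π)) :=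
    (Continuous.integrableOn_Ioc (by fun_prop))
  have hi2 : IntegrableOn (E.indicator (fun _ => S)) (Ioc 0 (2 * π)) :=
    (integrable_indicator_iff hE).2 (by
      rw [IntegrableOn, Measure.restrict_restrict hE]
      exact integrableOn_const (C := S)
        ((measure_mono inter_subset_right).trans_lt measure_Ioc_lt_top).ne)
  have hpt : m * A ≤ (∫ y in (0:ℝ)..(2 * π), χ y * (u y - lam) * ‖c y‖ ^ 2) +
      m * ∫ y in Ioc 0 (2 * π), E.indicator (fun _ => S) y := by
    rw [hA, intervalIntegral.integral_of_le h2π, intervalIntegral.integral_of_le h2π,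
      ← integral_const_mul, ← integral_const_mul, ← integral_add hi1 (hi2.const_mul m)]
    refine setIntegral_mono_on (Continuous.integrableOn_Ioc (by fun_prop))
      (hi1.add (hi2.const_mul m)) measurableSet_Ioc fun y hy => ?_
    by_cases hyE : y ∈ E
    · rw [indicator_of_mem hyE]
      have := mul_le_mul_of_nonneg_left (g3 y (Ioc_subset_Icc_self hy)) hm0.le
      have := mul_nonneg (hχ0 y) (sq_nonneg ‖c y‖)
      linarith
    · rw [indicator_of_notMem hyE, mul_zero, add_zero]
      exact mul_le_mul_of_nonneg_right (hlow y hy hyE) (sq_nonneg _)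
  refine resolvent_algebra (e := √D) (Real.sqrt_nonneg _) (Real.sqrt_nonneg _) hκ hd hm0 hNd ?_ ?_
  · rw [Real.sq_sqrt hD0]; exact g1
  · rw [Real.sq_sqrt hA0]
    have := mul_le_mul_of_nonneg_left hEint hm0.le
    linarith

/-- The resolvent estimate: the optimal scale is `d ∼ κ ^ (1 / (n + 2))`. -/
lemma resolvent_bound {n : ℕ} {c₀ d₀ N : ℝ} {u : ℝ → ℝ}
    (hmul : HasMultipliers n u c₀ d₀ N) (hc₀ : 0 < c₀) (hd₀ : 0 < d₀) (hN : 0 < N)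
    (hu : Continuous u) :
    ∃ K > 0, ∀ κ, 0 < κ → κ < 1 → ∀ α k lam : ℝ, 0 ≤ α → 1 ≤ |k| → ∀ c c1 c2 F : ℝ → ℂ,
      IsResolventSol κ α k lam u c c1 c2 F →
      ∫ y in (0:ℝ)..(2 * π), ‖c y‖ ^ 2 ≤
        (K / κ ^ ((n : ℝ) / (n + 2))) ^ 2 * ∫ y in (0:ℝ)..(2 * π), ‖F y‖ ^ 2 := by
  set b := min d₀ (1 / (4 * N)) with hb
  have hb0 : 0 < b := lt_min hd₀ (by positivity)
  refine ⟨2 * (1 / (c₀ * b ^ n) + 2 / (c₀ ^ 2 * b ^ (2 * n + 2)) + 8 * N ^ 2 * b ^ 2),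
    by positivity, ?_⟩
  intro κ hκ hκ1 α k lam hα hk c c1 c2 F h
  set r := κ ^ (1 / ((n : ℝ) + 2)) with hr
  have hr0 : 0 < r := Real.rpow_pos_of_pos hκ _
  have hr1 : r ≤ 1 := Real.rpow_le_one hκ.le hκ1.le (by positivity)
  have hrn : r ^ n = κ ^ ((n : ℝ) / (n + 2)) := by
    rw [hr, ← Real.rpow_natCast, ← Real.rpow_mul hκ.le]
    congr 1; ring
  have hrκ : r ^ (n + 2) = κ := by
    rw [hr, ← Real.rpow_natCast, ← Real.rpow_mul hκ.le]
    push_cast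
    rw [one_div, inv_mul_cancel₀ (by positivity), Real.rpow_one]
  have hbN : N * b ≤ 1 / 4 := by
    calc N * b ≤ N * (1 / (4 * N)) := by gcongr; exact min_le_right _ _
      _ = 1 / 4 := by field_simp
  have hbr : b * r ≤ b := mul_le_of_le_one_right hb0.le hr1
  have hmain := resolvent_scale (d := b * r) hmul hc₀ hN h hu hκ hα hk (by positivity)
    (hbr.trans (min_le_left _ _)) (by nlinarith)
  have hcoef : 2 * (1 / (c₀ * (b * r) ^ n) + 2 * κ / ((c₀ * (b * r) ^ n) ^ 2 * (b * r) ^ 2) +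
      8 * N ^ 2 * (b * r) ^ 2 / κ) =
      2 * (1 / (c₀ * b ^ n) + 2 / (c₀ ^ 2 * b ^ (2 * n + 2)) + 8 * N ^ 2 * b ^ 2) /
        κ ^ ((n : ℝ) / (n + 2)) := by
    rw [← hrn]
    nth_rw 1 [← hrκ]
    nth_rw 1 [← hrκ]
    field_simp
    ring
  rw [hcoef] at hmain
  have hA0 : 0 ≤ ∫ y in (0:ℝ)..(2 * π), ‖c y‖ ^ 2 :=
    intervalIntegral.integral_nonneg (by positivity) fun y _ => sq_nonneg _
  have hF0 : 0 ≤ ∫ y in (0:ℝ)..(2 * π), ‖F y‖ ^ 2 :=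
    intervalIntegral.integral_nonneg (by positivity) fun y _ => sq_nonneg _
  have := pow_le_pow_left₀ (Real.sqrt_nonneg _) hmain 2
  rwa [mul_pow, Real.sq_sqrt hA0, Real.sq_sqrt hF0] at this

/-! ### Decay of a single Fourier mode -/

/-- `Q` solves the mode equation `∂ₜQ + i k u Q = κ ∂ᵧᵧQ - α Q` for times `t > a`, with time
derivative `Qt` and space derivatives `Qy`, `Qyy`. All functions are extended to `t ≤ a` in some
continuous way, so that no one-sided continuity is needed. -/
structure IsModeSol (κ α k a : ℝ) (u : ℝ → ℝ) (Q Qt Qy Qyy : ℝ → ℝ → ℂ) : Prop where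
  cont : Continuous (fun p : ℝ × ℝ => Q p.1 p.2)
  contt : Continuous (fun p : ℝ × ℝ => Qt p.1 p.2)
  conty : Continuous (fun p : ℝ × ℝ => Qy p.1 p.2)
  contyy : Continuous (fun p : ℝ × ℝ => Qyy p.1 p.2)
  dt : ∀ t, a < t → ∀ y, HasDerivAt (fun s => Q s y) (Qt t y) t
  dy : ∀ t y, HasDerivAt (Q t) (Qy t y) y
  dyy : ∀ t y, HasDerivAt (Qy t) (Qyy t y) y
  per : ∀ t y, Q t (y + 2 * π) = Q t y
  eq : ∀ t y, Qt t y = (κ : ℂ) * Qyy t y - (α : ℂ) * Q t y - Complex.I * (k * u y : ℝ) * Q t y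

/-- The energy of a mode is nonincreasing. -/
lemma mode_energy_antitone {κ α k a : ℝ} {u : ℝ → ℝ} {Q Qt Qy Qyy : ℝ → ℝ → ℂ}
    (h : IsModeSol κ α k a u Q Qt Qy Qyy) (hκ : 0 ≤ κ) (hα : 0 ≤ α) :
    AntitoneOn (fun t => ∫ y in (0:ℝ)..(2 * π), ‖Q t y‖ ^ 2) (Ici a) := by
  obtain ⟨cont, contt, conty, contyy, dt, dy, dyy, per, eq⟩ := h
  have h2π : (0:ℝ) ≤ 2 * π := by positivity
  have hd : ∀ t, a < t → HasDerivAt (fun t => ∫ y in (0:ℝ)..(2 * π), ‖Q t y‖ ^ 2)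
      (∫ y in (0:ℝ)..(2 * π), 2 * inner ℝ (Q t y) (Qt t y)) t := by
    intro t ht
    refine hasDerivAt_param_integral (F := fun t y => ‖Q t y‖ ^ 2)
      (F' := fun t y => 2 * inner ℝ (Q t y) (Qt t y)) (Ioi_mem_nhds ht) (by fun_prop)
      (by fun_prop) ?_
    intro s hs y
    exact (dt s hs y).norm_sq
  refine antitoneOn_of_deriv_nonpos (convex_Ici a) ?_ ?_ ?_
  · refine Continuous.continuousOn ?_
    refine intervalIntegral.continuous_parametric_intervalIntegral_of_continuous'
      (f := fun (t : ℝ) y => ‖Q t y‖ ^ 2) ?_ _ _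
    exact (cont.norm).pow 2
  · intro t ht
    rw [interior_Ici] at ht
    exact (hd t ht).differentiableAt.differentiableWithinAt
  · intro t ht
    rw [interior_Ici] at ht
    rw [(hd t ht).deriv]
    have c0 : Continuous (Q t) := cont.comp (by fun_prop : Continuous fun y : ℝ => (t, y))
    have ct : Continuous (Qt t) := contt.comp (by fun_prop : Continuous fun y : ℝ => (t, y))
    have c1 : Continuous (Qy t) := conty.comp (by fun_prop : Continuous fun y : ℝ => (t, y))
    have c2 : Continuous (Qyy t) := contyy.comp (by fun_prop : Continuous fun y : ℝ => (t, y))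
    have per1 := periodic_deriv (dy t) (per t)
    have hz : ∫ y in (0:ℝ)..(2 * π),
        (inner ℝ (Q t y) (Qyy t y) + inner ℝ (Qy t y) (Qy t y)) = 0 := by
      rw [intervalIntegral.integral_eq_sub_of_hasDerivAt
        (f := fun z => inner ℝ (Q t z) (Qy t z))
        (fun z _ => (dy t z).inner ℝ (dyy t z)) (Continuous.intervalIntegrable (by fun_prop) _ _)]
      have e1 := per t 0
      have e2 := per1 0
      rw [zero_add] at e1 e2
      simp [e1, e2]
    have hpt : ∀ y, 2 * inner ℝ (Q t y) (Qt t y) ≤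
        2 * κ * (inner ℝ (Q t y) (Qyy t y) + inner ℝ (Qy t y) (Qy t y)) := by
      intro y
      have e1 : inner ℝ (Q t y) (Qt t y) =
          κ * inner ℝ (Q t y) (Qyy t y) - α * ‖Q t y‖ ^ 2 := by
        rw [eq t y, Complex.sq_norm, Complex.normSq_apply]
        simp [Complex.inner]
        ring
      rw [e1, real_inner_self_eq_norm_sq]
      nlinarith [mul_nonneg hα (sq_nonneg ‖Q t y‖), mul_nonneg hκ (sq_nonneg ‖Qy t y‖)]
    have hi1 : Continuous (fun y => 2 * inner ℝ (Q t y) (Qt t y)) := by fun_prop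
    have hi2 : Continuous (fun y =>
      2 * κ * (inner ℝ (Q t y) (Qyy t y) + inner ℝ (Qy t y) (Qy t y))) := by fun_prop
    have hineq := intervalIntegral.integral_mono_on (μ := volume) h2π
      (hi1.intervalIntegrable _ _) (hi2.intervalIntegrable _ _) (fun y _ => hpt y)
    rw [intervalIntegral.integral_const_mul (2 * κ), hz] at hineq
    linarith

lemma integral_sin_window {a T : ℝ} (hT : 0 < T) :
    ∫ t in a..(a + T), Real.sin (π / T * (t - a)) ^ 2 = T / 2 := by
  have hd : ∀ t ∈ uIcc a (a + T), HasDerivAt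
      (fun t => t / 2 - T / (4 * π) * Real.sin (2 * (π / T * (t - a))))
      (Real.sin (π / T * (t - a)) ^ 2) t := by
    intro t _
    have e1 : HasDerivAt (fun t : ℝ => 2 * (π / T * (t - a))) (2 * (π / T)) t := by
      simpa using (((hasDerivAt_id t).sub_const a).const_mul (π / T)).const_mul 2
    have e2 := ((hasDerivAt_id t).div_const 2).sub (e1.sin.const_mul (T / (4 * π)))
    refine e2.congr_deriv ?_
    rw [Real.sin_sq_eq_half_sub]
    have := Real.pi_pos
    field_simp
    ring
  rw [intervalIntegral.integral_eq_sub_of_hasDerivAt hd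
    (Continuous.intervalIntegrable (by fun_prop) _ _)]
  have e : 2 * (π / T * (a + T - a)) = 2 * π := by field_simp; ring
  rw [e]
  simp
  ring

lemma integral_cos_window {a T : ℝ} (hT : 0 < T) :
    ∫ t in a..(a + T), Real.cos (π / T * (t - a)) ^ 2 = T / 2 := by
  simp_rw [Real.cos_sq']
  rw [intervalIntegral.integral_sub (Continuous.intervalIntegrable (by fun_prop) _ _)
    (Continuous.intervalIntegrable (by fun_prop) _ _), integral_sin_window hT]
  simp
  ring

/-- The temporal Fourier coefficients of `sin (π (t - a) / T) Q` on `[a, a + T]` solve the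
resolvent equation whose source is the corresponding coefficient of the commutator
`(π / T) cos (π (t - a) / T) Q`. -/
lemma mode_isResolventSol {κ α k a T : ℝ} {u : ℝ → ℝ} {Q Qt Qy Qyy : ℝ → ℝ → ℂ}
    (h : IsModeSol κ α k a u Q Qt Qy Qyy) (hk : k ≠ 0) (hT : 0 < T) (m : ℤ) :
    ∃ lam : ℝ, ∃ c1 c2 : ℝ → ℂ, IsResolventSol κ α k lam u
      (fun y => ∫ t in a..(a + T), Complex.exp (-((2 * π * m / T * t : ℝ) * Complex.I)) *
        ((Real.sin (π / T * (t - a)) : ℂ) * Q t y)) c1 c2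
      (fun y => ∫ t in a..(a + T), Complex.exp (-((2 * π * m / T * t : ℝ) * Complex.I)) *
        (((π / T * Real.cos (π / T * (t - a)) : ℝ) : ℂ) * Q t y)) := by
  obtain ⟨cont, contt, conty, contyy, dt, dy, dyy, per, eq⟩ := h
  set ω : ℝ := 2 * π * m / T with hω
  set e : ℝ → ℂ := fun t => Complex.exp (-((ω * t : ℝ) * Complex.I)) with he
  have hec : Continuous e := by rw [he]; fun_prop
  have cQ : ∀ G : ℝ → ℝ → ℂ, Continuous (fun p : ℝ × ℝ => G p.1 p.2) →
      Continuous (fun q : ℝ × ℝ => e q.2 * ((Real.sin (π / T * (q.2 - a)) : ℂ) * G q.2 q.1)) := by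
    intro G hG
    have := hG.comp (by fun_prop : Continuous fun q : ℝ × ℝ => (q.2, q.1))
    simp only [Function.comp_def] at this
    fun_prop
  have cF : Continuous (fun q : ℝ × ℝ =>
      e q.2 * (((π / T * Real.cos (π / T * (q.2 - a)) : ℝ) : ℂ) * Q q.2 q.1)) := by
    have := cont.comp (by fun_prop : Continuous fun q : ℝ × ℝ => (q.2, q.1))
    simp only [Function.comp_def] at this
    fun_prop
  have line : ∀ {G : ℝ × ℝ → ℂ}, Continuous G → ∀ y, Continuous (fun t => G (y, t)) :=
    fun hG y => hG.comp (by fun_prop)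
  refine ⟨-ω / k,
    fun y => ∫ t in a..(a + T), e t * ((Real.sin (π / T * (t - a)) : ℂ) * Qy t y),
    fun y => ∫ t in a..(a + T), e t * ((Real.sin (π / T * (t - a)) : ℂ) * Qyy t y),
    ?_, ?_, ?_, ?_, ?_, ?_⟩
  · intro y
    exact hasDerivAt_param_integral (S := univ)
      (F := fun y t => e t * ((Real.sin (π / T * (t - a)) : ℂ) * Q t y))
      (F' := fun y t => e t * ((Real.sin (π / T * (t - a)) : ℂ) * Qy t y))
      univ_mem (cQ Q cont) (cQ Qy conty)
      (fun y _ t => ((dy t y).const_mul _).const_mul _)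
  · intro y
    exact hasDerivAt_param_integral (S := univ)
      (F := fun y t => e t * ((Real.sin (π / T * (t - a)) : ℂ) * Qy t y))
      (F' := fun y t => e t * ((Real.sin (π / T * (t - a)) : ℂ) * Qyy t y))
      univ_mem (cQ Qy conty) (cQ Qyy contyy)
      (fun y _ t => ((dyy t y).const_mul _).const_mul _)
  · exact intervalIntegral.continuous_parametric_intervalIntegral_of_continuous'
      (f := fun (y : ℝ) t => e t * ((Real.sin (π / T * (t - a)) : ℂ) * Qyy t y))
      (cQ Qyy contyy) _ _
  · exact intervalIntegral.continuous_parametric_intervalIntegral_of_continuous'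
      (f := fun (y : ℝ) t => e t * (((π / T * Real.cos (π / T * (t - a)) : ℝ) : ℂ) * Q t y))
      cF _ _
  · intro y
    simp only [per]
  · intro y
    have hQ := line (cQ Q cont) y
    have hQyy := line (cQ Qyy contyy) y
    have hF := line cF y
    -- the derivative in time of `e φ Q`, integrated over `[a, a + T]`, vanishes
    have hz : ∫ t in a..(a + T), (-(Complex.I * ω) *
          (e t * ((Real.sin (π / T * (t - a)) : ℂ) * Q t y)) +
        e t * (((π / T * Real.cos (π / T * (t - a)) : ℝ) : ℂ) * Q t y) +
        ((κ : ℂ) * (e t * ((Real.sin (π / T * (t - a)) : ℂ) * Qyy t y)) -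
          ((α : ℂ) + Complex.I * (k * u y : ℝ)) *
            (e t * ((Real.sin (π / T * (t - a)) : ℂ) * Q t y)))) = 0 := by
      rw [intervalIntegral.integral_eq_sub_of_hasDerivAt_of_le (by linarith)
        (f := fun t => e t * ((Real.sin (π / T * (t - a)) : ℂ) * Q t y)) hQ.continuousOn ?_ ?_]
      · have e2 : π / T * (a + T - a) = π := by field_simp; ring
        simp only [e2]
        simp
      · intro t ht
        have g1 : HasDerivAt e (-(Complex.I * ω) * e t) t := by
          have : HasDerivAt (fun t : ℝ => -(((ω * t : ℝ) : ℂ) * Complex.I))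
              (-((ω : ℂ) * Complex.I)) t := by
            have := (((hasDerivAt_id' t).const_mul ω).ofReal_comp.mul_const Complex.I).neg
            rw [mul_one] at this
            exact this
          refine this.cexp.congr_deriv ?_
          rw [he]
          ring
        have g2 : HasDerivAt (fun t : ℝ => ((Real.sin (π / T * (t - a)) : ℝ) : ℂ))
            ((π / T * Real.cos (π / T * (t - a)) : ℝ) : ℂ) t := by
          have : HasDerivAt (fun t : ℝ => π / T * (t - a)) (π / T) t := by
            simpa using ((hasDerivAt_id t).sub_const a).const_mul (π / T)
          refine this.sin.ofReal_comp.congr_deriv ?_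
          rw [mul_comm]
        refine (g1.mul (g2.mul (dt t ht.1 y))).congr_deriv ?_
        rw [eq t y, Pi.mul_apply]
        ring
      · exact Continuous.intervalIntegrable (by fun_prop) _ _
    rw [intervalIntegral.integral_add, intervalIntegral.integral_add,
      intervalIntegral.integral_sub, intervalIntegral.integral_const_mul,
      intervalIntegral.integral_const_mul, intervalIntegral.integral_const_mul] at hz
    · have hk' : (k : ℂ) ≠ 0 := by exact_mod_cast hk
      have e3 : ((k * (u y - -ω / k) : ℝ) : ℂ) = (k * u y : ℝ) + ω := by
        push_cast
        field_simp
        ring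
      rw [e3]
      linear_combination -hz
    all_goals exact Continuous.intervalIntegrable (by fun_prop) _ _

/-- A resolvent bound `R` uniform in the spectral parameter yields decay over a time window. -/
lemma mode_decay {κ α k a T R : ℝ} {u : ℝ → ℝ} {Q Qt Qy Qyy : ℝ → ℝ → ℂ}
    (h : IsModeSol κ α k a u Q Qt Qy Qyy) (hκ : 0 ≤ κ) (hα : 0 ≤ α) (hk : k ≠ 0) (hT : 0 < T)
    (hres : ∀ (lam : ℝ) (c c1 c2 F : ℝ → ℂ), IsResolventSol κ α k lam u c c1 c2 F →
      ∫ y in (0:ℝ)..(2 * π), ‖c y‖ ^ 2 ≤ R ^ 2 * ∫ y in (0:ℝ)..(2 * π), ‖F y‖ ^ 2) :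
    ∫ y in (0:ℝ)..(2 * π), ‖Q (a + T) y‖ ^ 2 ≤
      (π * R / T) ^ 2 * ∫ y in (0:ℝ)..(2 * π), ‖Q a y‖ ^ 2 := by
  have hanti := mode_energy_antitone h hκ hα
  have cont := h.cont
  have hQ1 : Continuous (fun p : ℝ × ℝ => ((Real.sin (π / T * (p.1 - a)) : ℝ) : ℂ) * Q p.1 p.2) := by
    fun_prop
  have hQ2 : Continuous (fun p : ℝ × ℝ =>
      ((π / T * Real.cos (π / T * (p.1 - a)) : ℝ) : ℂ) * Q p.1 p.2) := by
    fun_prop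
  have p1 := parseval_integrated (a := a) (c := 2 * π) hT
    (G := fun t y => ((Real.sin (π / T * (t - a)) : ℝ) : ℂ) * Q t y) hQ1
  have p2 := (parseval_integrated (a := a) (c := 2 * π) hT
    (G := fun t y => ((π / T * Real.cos (π / T * (t - a)) : ℝ) : ℂ) * Q t y) hQ2).mul_left (R ^ 2)
  have hle := hasSum_le (fun m => by
    obtain ⟨lam, c1, c2, hr⟩ := mode_isResolventSol h hk hT m
    exact hres lam _ c1 c2 _ hr) p1 p2
  set E : ℝ → ℝ := fun t => ∫ y in (0:ℝ)..(2 * π), ‖Q t y‖ ^ 2 with hE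
  have hEc : Continuous E := by
    refine intervalIntegral.continuous_parametric_intervalIntegral_of_continuous'
      (f := fun (t : ℝ) y => ‖Q t y‖ ^ 2) ?_ _ _
    exact (cont.norm).pow 2
  have s1 : ∫ y in (0:ℝ)..(2 * π), ∫ t in a..(a + T),
      ‖((Real.sin (π / T * (t - a)) : ℝ) : ℂ) * Q t y‖ ^ 2 =
      ∫ t in a..(a + T), Real.sin (π / T * (t - a)) ^ 2 * E t := by
    rw [integral_swap_continuous
      (f := fun y t => ‖((Real.sin (π / T * (t - a)) : ℝ) : ℂ) * Q t y‖ ^ 2)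
      ((hQ1.comp (by fun_prop : Continuous fun q : ℝ × ℝ => (q.2, q.1))).norm.pow 2)]
    congr 1
    ext t
    simp_rw [norm_mul, mul_pow, Complex.norm_real, Real.norm_eq_abs, sq_abs]
    rw [intervalIntegral.integral_const_mul]
  have s2 : ∫ y in (0:ℝ)..(2 * π), ∫ t in a..(a + T),
      ‖((π / T * Real.cos (π / T * (t - a)) : ℝ) : ℂ) * Q t y‖ ^ 2 =
      ∫ t in a..(a + T), (π / T) ^ 2 * Real.cos (π / T * (t - a)) ^ 2 * E t := by
    rw [integral_swap_continuous
      (f := fun y t => ‖((π / T * Real.cos (π / T * (t - a)) : ℝ) : ℂ) * Q t y‖ ^ 2)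
      ((hQ2.comp (by fun_prop : Continuous fun q : ℝ × ℝ => (q.2, q.1))).norm.pow 2)]
    congr 1
    ext t
    simp_rw [norm_mul, mul_pow, Complex.norm_real, Real.norm_eq_abs, sq_abs, mul_pow]
    rw [intervalIntegral.integral_const_mul]
  have hab : a ≤ a + T := by linarith
  change E (a + T) ≤ (π * R / T) ^ 2 * E a
  clear_value E
  have l1 : T / 2 * E (a + T) ≤ ∫ t in a..(a + T), Real.sin (π / T * (t - a)) ^ 2 * E t := by
    rw [← integral_sin_window (a := a) hT, ← intervalIntegral.integral_mul_const]
    refine intervalIntegral.integral_mono_on hab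
      (Continuous.intervalIntegrable (by fun_prop) _ _)
      (Continuous.intervalIntegrable (by fun_prop) _ _) fun t ht => ?_
    exact mul_le_mul_of_nonneg_left (hanti ht.1 hab ht.2) (sq_nonneg _)
  have l2 : ∫ t in a..(a + T), (π / T) ^ 2 * Real.cos (π / T * (t - a)) ^ 2 * E t ≤
      (π / T) ^ 2 * (T / 2) * E a := by
    rw [← integral_cos_window (a := a) hT, ← intervalIntegral.integral_const_mul,
      ← intervalIntegral.integral_mul_const]
    refine intervalIntegral.integral_mono_on hab
      (Continuous.intervalIntegrable (by fun_prop) _ _)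
      (Continuous.intervalIntegrable (by fun_prop) _ _) fun t ht => ?_
    exact mul_le_mul_of_nonneg_left (hanti self_mem_Ici ht.1 ht.1) (by positivity)
  rw [s1, s2] at hle
  have l3 : T * (T / 2 * E (a + T)) ≤ T * (T / 2 * ((π * R / T) ^ 2 * E a)) := by
    calc T * (T / 2 * E (a + T))
        ≤ R ^ 2 * (T * ((π / T) ^ 2 * (T / 2) * E a)) := by
          refine (mul_le_mul_of_nonneg_left l1 hT.le).trans (hle.trans ?_)
          gcongr
      _ = _ := by field_simp
  exact le_of_mul_le_mul_left (le_of_mul_le_mul_left l3 hT) (by positivity)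

/-! ### Fourier decomposition of a solution -/

/-- The `m`-th unnormalised Fourier coefficient of `G t · y` in the variable `x`. The exponent is
written in the form used in Parseval's identity on an interval of length `2π`. -/
def xCoeff (G : ℝ → ℝ → ℝ → ℝ) (m : ℤ) (t y : ℝ) : ℂ :=
  ∫ x in (0:ℝ)..(0 + 2 * π),
    Complex.exp (-((2 * π * m / (2 * π) * x : ℝ) * Complex.I)) * (G t x y : ℂ)

lemma xCoeff_continuous {G : ℝ → ℝ → ℝ → ℝ} (m : ℤ)
    (hG : Continuous (fun p : ℝ × ℝ × ℝ => G p.1 p.2.1 p.2.2)) :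
    Continuous (fun p : ℝ × ℝ => xCoeff G m p.1 p.2) := by
  unfold xCoeff
  refine intervalIntegral.continuous_parametric_intervalIntegral_of_continuous'
    (f := fun (p : ℝ × ℝ) x =>
      Complex.exp (-((2 * π * m / (2 * π) * x : ℝ) * Complex.I)) * (G p.1 x p.2 : ℂ)) ?_ _ _
  have := hG.comp (by fun_prop : Continuous fun q : (ℝ × ℝ) × ℝ => (q.1.1, q.2, q.1.2))
  simp only [Function.comp_def] at this
  have h2 : Continuous fun q : (ℝ × ℝ) × ℝ => ((G q.1.1 q.2 q.1.2 : ℝ) : ℂ) :=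
    Complex.continuous_ofReal.comp this
  exact (by fun_prop : Continuous fun q : (ℝ × ℝ) × ℝ =>
    Complex.exp (-((2 * π * m / (2 * π) * q.2 : ℝ) * Complex.I))).mul h2

lemma xCoeff_hasDerivAt_time {G Gt : ℝ → ℝ → ℝ → ℝ} (m : ℤ) {t : ℝ} {S : Set ℝ}
    (hS : S ∈ nhds t) (hG : Continuous (fun p : ℝ × ℝ × ℝ => G p.1 p.2.1 p.2.2))
    (hGt : Continuous (fun p : ℝ × ℝ × ℝ => Gt p.1 p.2.1 p.2.2))
    (hd : ∀ s ∈ S, ∀ x y, HasDerivAt (fun s => G s x y) (Gt s x y) s) (y : ℝ) :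
    HasDerivAt (fun s => xCoeff G m s y) (xCoeff Gt m t y) t := by
  unfold xCoeff
  have h1 : Continuous fun q : ℝ × ℝ => ((G q.1 q.2 y : ℝ) : ℂ) :=
    Complex.continuous_ofReal.comp
      (hG.comp (by fun_prop : Continuous fun q : ℝ × ℝ => (q.1, q.2, y)))
  have h2 : Continuous fun q : ℝ × ℝ => ((Gt q.1 q.2 y : ℝ) : ℂ) :=
    Complex.continuous_ofReal.comp
      (hGt.comp (by fun_prop : Continuous fun q : ℝ × ℝ => (q.1, q.2, y)))
  exact hasDerivAt_param_integral
    (F := fun s x => Complex.exp (-((2 * π * m / (2 * π) * x : ℝ) * Complex.I)) * (G s x y : ℂ))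
    (F' := fun s x => Complex.exp (-((2 * π * m / (2 * π) * x : ℝ) * Complex.I)) * (Gt s x y : ℂ))
    hS (by fun_prop) (by fun_prop)
    (fun s hs x => ((hd s hs x y).ofReal_comp).const_mul _)

lemma xCoeff_hasDerivAt_space {G Gy : ℝ → ℝ → ℝ → ℝ} (m : ℤ)
    (hG : Continuous (fun p : ℝ × ℝ × ℝ => G p.1 p.2.1 p.2.2))
    (hGy : Continuous (fun p : ℝ × ℝ × ℝ => Gy p.1 p.2.1 p.2.2))
    (hd : ∀ t x y, HasDerivAt (fun z => G t x z) (Gy t x y) y) (t y : ℝ) :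
    HasDerivAt (xCoeff G m t) (xCoeff Gy m t y) y := by
  unfold xCoeff
  have h1 : Continuous fun q : ℝ × ℝ => ((G t q.2 q.1 : ℝ) : ℂ) :=
    Complex.continuous_ofReal.comp
      (hG.comp (by fun_prop : Continuous fun q : ℝ × ℝ => (t, q.2, q.1)))
  have h2 : Continuous fun q : ℝ × ℝ => ((Gy t q.2 q.1 : ℝ) : ℂ) :=
    Complex.continuous_ofReal.comp
      (hGy.comp (by fun_prop : Continuous fun q : ℝ × ℝ => (t, q.2, q.1)))
  exact hasDerivAt_param_integral (S := univ)
    (F := fun z x => Complex.exp (-((2 * π * m / (2 * π) * x : ℝ) * Complex.I)) * (G t x z : ℂ))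
    (F' := fun z x => Complex.exp (-((2 * π * m / (2 * π) * x : ℝ) * Complex.I)) * (Gy t x z : ℂ))
    univ_mem (by fun_prop) (by fun_prop)
    (fun z _ x => ((hd t x z).ofReal_comp).const_mul _)

/-- Integration by parts against a character: `∂ₓ` becomes multiplication by `i m`. -/
lemma character_parts {f f' : ℝ → ℝ} (m : ℤ) (hd : ∀ x, HasDerivAt f (f' x) x)
    (hf' : Continuous f') (hp : ∀ x, f (x + 2 * π) = f x) :
    ∫ x in (0:ℝ)..(0 + 2 * π),
      Complex.exp (-((2 * π * m / (2 * π) * x : ℝ) * Complex.I)) * (f' x : ℂ) =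
    Complex.I * m * ∫ x in (0:ℝ)..(0 + 2 * π),
      Complex.exp (-((2 * π * m / (2 * π) * x : ℝ) * Complex.I)) * (f x : ℂ) := by
  have hf : Continuous f := continuous_iff_continuousAt.2 fun y => (hd y).continuousAt
  have hm : 2 * π * m / (2 * π) = (m : ℝ) := by
    have := Real.pi_pos
    field_simp
  rw [hm]
  have hz : ∫ x in (0:ℝ)..(0 + 2 * π),
      (Complex.exp (-((m * x : ℝ) * Complex.I)) * (f' x : ℂ) -
        Complex.I * m * (Complex.exp (-((m * x : ℝ) * Complex.I)) * (f x : ℂ))) = 0 := by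
    rw [intervalIntegral.integral_eq_sub_of_hasDerivAt
      (f := fun x : ℝ => Complex.exp (-((m * x : ℝ) * Complex.I)) * (f x : ℂ))]
    · have e1 := hp 0
      have e2 : Complex.exp (-(((m : ℝ) * (0 + 2 * π) : ℝ) * Complex.I)) = 1 := by
        rw [Complex.exp_eq_one_iff]
        exact ⟨-m, by push_cast; ring⟩
      rw [e1, e2]
      simp
    · intro x _
      have g1 : HasDerivAt (fun x : ℝ => -(((m * x : ℝ) : ℂ) * Complex.I))
          (-(((m : ℝ) : ℂ) * Complex.I)) x := by
        have := (((hasDerivAt_id' x).const_mul (m : ℝ)).ofReal_comp.mul_const Complex.I).neg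
        rw [mul_one] at this
        exact this
      refine (g1.cexp.mul (hd x).ofReal_comp).congr_deriv ?_
      push_cast
      ring
    · exact Continuous.intervalIntegrable (by fun_prop) _ _
  rw [intervalIntegral.integral_sub, intervalIntegral.integral_const_mul] at hz
  · exact sub_eq_zero.1 hz
  all_goals exact Continuous.intervalIntegrable (by fun_prop) _ _

lemma character_linear {f g h : ℝ → ℝ} (m : ℤ) (hf : Continuous f) (hg : Continuous g)
    (hh : Continuous h) {p q r : ℝ} :
    ∫ x in (0:ℝ)..(0 + 2 * π), Complex.exp (-((2 * π * m / (2 * π) * x : ℝ) * Complex.I)) *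
      ((p * f x + q * g x + r * h x : ℝ) : ℂ) =
    (p : ℂ) * (∫ x in (0:ℝ)..(0 + 2 * π),
      Complex.exp (-((2 * π * m / (2 * π) * x : ℝ) * Complex.I)) * (f x : ℂ)) +
    (q : ℂ) * (∫ x in (0:ℝ)..(0 + 2 * π),
      Complex.exp (-((2 * π * m / (2 * π) * x : ℝ) * Complex.I)) * (g x : ℂ)) +
    (r : ℂ) * ∫ x in (0:ℝ)..(0 + 2 * π),
      Complex.exp (-((2 * π * m / (2 * π) * x : ℝ) * Complex.I)) * (h x : ℂ) := by
  rw [← intervalIntegral.integral_const_mul, ← intervalIntegral.integral_const_mul,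
    ← intervalIntegral.integral_const_mul, ← intervalIntegral.integral_add,
    ← intervalIntegral.integral_add]
  · congr 1
    ext x
    push_cast
    ring
  all_goals exact Continuous.intervalIntegrable (by fun_prop) _ _

/-- The Fourier coefficients in `x` of a solution, restarted at a time `a > 0`, solve the mode
equation. Time is clamped to `[a, ∞)`, where the solution is classical. -/
lemma IsShearSolution.isModeSol {δ κ : ℝ} {u : ℝ → ℝ} {ρ : ℝ → ℝ → ℝ → ℝ}
    (h : IsShearSolution δ κ u ρ) (m : ℤ) {a : ℝ} (ha : 0 < a) :
    ∃ Qt Qy Qyy : ℝ → ℝ → ℂ, IsModeSol κ (κ * δ * m ^ 2) m a u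
      (xCoeff (fun t x y => ρ (max t a) x y) m) Qt Qy Qyy := by
  have hpos : ∀ t, 0 < max t a := fun t => lt_max_of_lt_right ha
  have hclamp : Continuous fun p : ℝ × ℝ × ℝ => (max p.1 a, p.2.1, p.2.2) := by fun_prop
  have c0 : Continuous (fun p : ℝ × ℝ × ℝ => ρ (max p.1 a) p.2.1 p.2.2) :=
    h.cont.comp_continuous hclamp fun p => (hpos p.1).le
  have ct : Continuous (fun p : ℝ × ℝ × ℝ => deriv (fun s => ρ s p.2.1 p.2.2) (max p.1 a)) :=
    h.cont_dt.comp_continuous hclamp fun p => hpos p.1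
  have cyy : Continuous (fun p : ℝ × ℝ × ℝ =>
      deriv (fun b => deriv (fun c => ρ (max p.1 a) p.2.1 c) b) p.2.2) :=
    h.cont_dyy.comp_continuous hclamp fun p => hpos p.1
  have dy : ∀ t x y, HasDerivAt (fun z => ρ (max t a) x z)
      (deriv (fun c => ρ (max t a) x c) y) y :=
    fun t x y => (h.diff_y _ (hpos t) x y).hasDerivAt
  have dyy : ∀ t x y, HasDerivAt (fun z => deriv (fun c => ρ (max t a) x c) z)
      (deriv (fun b => deriv (fun c => ρ (max t a) x c) b) y) y :=
    fun t x y => (h.diff_yy _ (hpos t) x y).hasDerivAt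
  have cy : Continuous (fun p : ℝ × ℝ × ℝ => deriv (fun c => ρ (max p.1 a) p.2.1 c) p.2.2) := by
    have := continuous_first_deriv (X := ℝ × ℝ)
      (f := fun q y => ρ (max q.1 a) q.2 y)
      (f' := fun q y => deriv (fun c => ρ (max q.1 a) q.2 c) y)
      (f'' := fun q y => deriv (fun b => deriv (fun c => ρ (max q.1 a) q.2 c) b) y)
      (c0.comp (by fun_prop : Continuous fun q : (ℝ × ℝ) × ℝ => (q.1.1, q.1.2, q.2)))
      (cyy.comp (by fun_prop : Continuous fun q : (ℝ × ℝ) × ℝ => (q.1.1, q.1.2, q.2)))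
      (fun q y => dy q.1 q.2 y) (fun q y => dyy q.1 q.2 y)
    exact this.comp (by fun_prop : Continuous fun p : ℝ × ℝ × ℝ => ((p.1, p.2.1), p.2.2))
  refine ⟨xCoeff (fun t x y => deriv (fun s => ρ s x y) (max t a)) m,
    xCoeff (fun t x y => deriv (fun c => ρ (max t a) x c) y) m,
    xCoeff (fun t x y => deriv (fun b => deriv (fun c => ρ (max t a) x c) b) y) m,
    xCoeff_continuous m c0, xCoeff_continuous m ct, xCoeff_continuous m cy,
    xCoeff_continuous m cyy, ?_, xCoeff_hasDerivAt_space m c0 cy dy,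
    xCoeff_hasDerivAt_space m cy cyy dyy, ?_, ?_⟩
  · intro t ht y
    refine xCoeff_hasDerivAt_time m (Ioi_mem_nhds ht) c0 ct ?_ y
    intro s hs x y
    have hs' : a < s := hs
    have e1 : max s a = s := max_eq_left hs'.le
    rw [e1]
    refine (h.diff_t s (ha.trans hs') x y).hasDerivAt.congr_of_eventuallyEq ?_
    filter_upwards [Ioi_mem_nhds hs'] with r hr
    rw [max_eq_left (le_of_lt hr)]
  · intro t y
    simp only [xCoeff, h.periodic_y]
  · intro t y
    set τ := max t a with hτ
    have hτ0 : 0 < τ := hpos t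
    have px : ∀ x, ρ τ (x + 2 * π) y = ρ τ x y := fun x => h.periodic_x τ x y
    have dx : ∀ x, HasDerivAt (fun b => ρ τ b y) (deriv (fun b => ρ τ b y) x) x :=
      fun x => (h.diff_x τ hτ0 x y).hasDerivAt
    have dxx : ∀ x, HasDerivAt (fun a => deriv (fun b => ρ τ b y) a)
        (deriv (fun a => deriv (fun b => ρ τ b y) a) x) x :=
      fun x => (h.diff_xx τ hτ0 x y).hasDerivAt
    have cx : Continuous (fun a => deriv (fun b => ρ τ b y) a) :=
      continuous_iff_continuousAt.2 fun x => (dxx x).continuousAt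
    have cxx : Continuous (fun x => deriv (fun a => deriv (fun b => ρ τ b y) a) x) :=
      h.cont_dxx.comp_continuous (by fun_prop : Continuous fun x : ℝ => (τ, x, y))
        fun x => hτ0
    have cyy' : Continuous (fun x => deriv (fun b => deriv (fun c => ρ τ x c) b) y) :=
      h.cont_dyy.comp_continuous (by fun_prop : Continuous fun x : ℝ => (τ, x, y))
        fun x => hτ0
    have i1 := character_parts m dx cx px
    have i2 := character_parts m dxx cxx (periodic_deriv dx px)
    rw [i1] at i2
    have hpde : ∀ x, deriv (fun s => ρ s x y) τ =
        -(u y) * deriv (fun b => ρ τ b y) x +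
          κ * δ * deriv (fun a => deriv (fun b => ρ τ b y) a) x +
          κ * deriv (fun b => deriv (fun c => ρ τ x c) b) y := by
      intro x
      linarith [h.pde τ hτ0 x y]
    simp only [xCoeff, ← hτ, hpde]
    rw [character_linear m cx cxx cyy', i1, i2]
    push_cast
    linear_combination (κ : ℂ) * δ * (m : ℂ) ^ 2 * (∫ x in (0:ℝ)..(0 + 2 * π),
      Complex.exp (-(2 * π * m / (2 * π) * x * Complex.I)) * (ρ τ x y : ℂ)) * Complex.I_sq

/-- The energy carried by the `m`-th Fourier mode in `x`, with time clamped to `[0, ∞)`. -/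
def modeEnergy (ρ : ℝ → ℝ → ℝ → ℝ) (m : ℤ) (t : ℝ) : ℝ :=
  ∫ y in (0:ℝ)..(2 * π), ‖xCoeff ρ m (max t 0) y‖ ^ 2

lemma modeEnergy_nonneg (ρ : ℝ → ℝ → ℝ → ℝ) (m : ℤ) (t : ℝ) : 0 ≤ modeEnergy ρ m t :=
  intervalIntegral.integral_nonneg (by positivity) fun _ _ => sq_nonneg _

lemma modeEnergy_continuous {δ κ : ℝ} {u : ℝ → ℝ} {ρ : ℝ → ℝ → ℝ → ℝ}
    (h : IsShearSolution δ κ u ρ) (m : ℤ) : Continuous (modeEnergy ρ m) := by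
  have c0 : Continuous (fun p : ℝ × ℝ × ℝ => ρ (max p.1 0) p.2.1 p.2.2) :=
    h.cont.comp_continuous
      (by fun_prop : Continuous fun p : ℝ × ℝ × ℝ => (max p.1 0, p.2.1, p.2.2))
      fun p => le_max_right p.1 0
  have c1 : Continuous fun p : ℝ × ℝ => xCoeff ρ m (max p.1 0) p.2 :=
    xCoeff_continuous (G := fun t x y => ρ (max t 0) x y) m c0
  refine intervalIntegral.continuous_parametric_intervalIntegral_of_continuous'
    (f := fun (t : ℝ) y => ‖xCoeff ρ m (max t 0) y‖ ^ 2) ?_ _ _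
  exact c1.norm.pow 2

/-- A bound between the energies at times `s` and `s + r` extends from `s > 0` to `s = 0`. -/
lemma modeEnergy_extend {δ κ : ℝ} {u : ℝ → ℝ} {ρ : ℝ → ℝ → ℝ → ℝ}
    (h : IsShearSolution δ κ u ρ) (m : ℤ) {r q : ℝ}
    (hpos : ∀ s, 0 < s → modeEnergy ρ m (s + r) ≤ q * modeEnergy ρ m s) (s : ℝ) (hs : 0 ≤ s) :
    modeEnergy ρ m (s + r) ≤ q * modeEnergy ρ m s := by
  have hc := modeEnergy_continuous h m
  have hcl : IsClosed {s | modeEnergy ρ m (s + r) ≤ q * modeEnergy ρ m s} :=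
    isClosed_le (by fun_prop) (by fun_prop)
  have := closure_minimal (s := Ioi (0:ℝ)) hpos hcl
  rw [closure_Ioi] at this
  exact this hs

lemma modeEnergy_antitone {δ κ : ℝ} {u : ℝ → ℝ} {ρ : ℝ → ℝ → ℝ → ℝ}
    (h : IsShearSolution δ κ u ρ) (hκ : 0 ≤ κ) (hδ : 0 ≤ δ) (m : ℤ) {r : ℝ} (hr : 0 ≤ r)
    (s : ℝ) (hs : 0 ≤ s) : modeEnergy ρ m (s + r) ≤ modeEnergy ρ m s := by
  have := modeEnergy_extend h m (r := r) (q := 1) (fun s hs => ?_) s hs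
  · rwa [one_mul] at this
  · obtain ⟨Qt, Qy, Qyy, hQ⟩ := h.isModeSol m hs
    have := mode_energy_antitone hQ hκ (by positivity) self_mem_Ici
      (show s + r ∈ Ici s from le_add_of_nonneg_right hr) (le_add_of_nonneg_right hr)
    rw [one_mul]
    simpa only [modeEnergy, xCoeff, max_self, max_eq_left hs.le,
      max_eq_left (add_nonneg hs.le hr), max_eq_left (le_add_of_nonneg_right (a := s) hr)]
      using this

lemma modeEnergy_step {δ κ R : ℝ} {u : ℝ → ℝ} {ρ : ℝ → ℝ → ℝ → ℝ}
    (h : IsShearSolution δ κ u ρ) (hκ : 0 ≤ κ) (hδ : 0 ≤ δ) {m : ℤ} (hm : m ≠ 0) (hR : 0 < R)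
    (hres : ∀ (α k lam : ℝ), 0 ≤ α → 1 ≤ |k| → ∀ (c c1 c2 F : ℝ → ℂ),
      IsResolventSol κ α k lam u c c1 c2 F →
      ∫ y in (0:ℝ)..(2 * π), ‖c y‖ ^ 2 ≤ R ^ 2 * ∫ y in (0:ℝ)..(2 * π), ‖F y‖ ^ 2)
    (s : ℝ) (hs : 0 ≤ s) :
    modeEnergy ρ m (s + 2 * π * R) ≤ 1 / 4 * modeEnergy ρ m s := by
  refine modeEnergy_extend h m (fun s hs => ?_) s hs
  have hT : 0 < 2 * π * R := by positivity
  obtain ⟨Qt, Qy, Qyy, hQ⟩ := h.isModeSol m hs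
  have hm1 : (1:ℝ) ≤ |(m : ℝ)| := by exact_mod_cast Int.one_le_abs hm
  have hα : 0 ≤ κ * δ * (m : ℝ) ^ 2 := by positivity
  have := mode_decay hQ hκ hα (by exact_mod_cast hm) hT
    (fun lam c c1 c2 F hF => hres _ _ lam hα hm1 c c1 c2 F hF)
  have e : (π * R / (2 * π * R)) ^ 2 = 1 / 4 := by
    have := Real.pi_pos
    field_simp
    norm_num
  rw [e] at this
  simpa only [modeEnergy, xCoeff, max_self, max_eq_left hs.le,
    max_eq_left (add_nonneg hs.le hT.le), max_eq_left (le_add_of_nonneg_right (a := s) hT.le)]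
    using this

/-- A nonincreasing quantity divided by `4` over each window of length `T` decays
exponentially. -/
lemma exp_decay_of_step {E : ℝ → ℝ} {T : ℝ} (hT : 0 < T) (h0 : 0 ≤ E 0)
    (hanti : ∀ r, 0 ≤ r → ∀ s, 0 ≤ s → E (s + r) ≤ E s)
    (hstep : ∀ s, 0 ≤ s → E (s + T) ≤ 1 / 4 * E s) (t : ℝ) (ht : 0 ≤ t) :
    E t ≤ 4 * Real.exp (-(Real.log 4 / T) * t) * E 0 := by
  have hj : ∀ j : ℕ, E (j * T) ≤ (1 / 4) ^ j * E 0 := by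
    intro j
    induction j with
    | zero => simp
    | succ j ih =>
      have := hstep (j * T) (by positivity)
      rw [pow_succ']
      push_cast
      rw [add_mul, one_mul]
      linarith
  set j := ⌊t / T⌋₊ with hjdef
  have h1 : (j : ℝ) * T ≤ t := by
    rw [← le_div_iff₀ hT]; exact Nat.floor_le (by positivity)
  have h2 : t / T ≤ j + 1 := (Nat.lt_floor_add_one _).le
  have h3 : E t ≤ E (j * T) := by
    have := hanti (t - j * T) (by linarith) (j * T) (by positivity)
    rwa [add_sub_cancel] at this
  have h4 : (1 / 4 : ℝ) ^ j ≤ 4 * Real.exp (-(Real.log 4 / T) * t) := by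
    have hl : 0 < Real.log 4 := Real.log_pos (by norm_num)
    have e1 : (1 / 4 : ℝ) ^ j = 4 * Real.exp (-Real.log 4 * (j + 1)) := by
      have : -Real.log 4 * ((j : ℝ) + 1) = ((j + 1 : ℕ) : ℝ) * (-Real.log 4) := by
        push_cast; ring
      rw [this, Real.exp_nat_mul, Real.exp_neg, Real.exp_log (by norm_num), pow_succ]
      norm_num
      ring
    rw [e1]
    refine mul_le_mul_of_nonneg_left (Real.exp_le_exp.2 ?_) (by norm_num)
    have : -(Real.log 4 / T) * t = -Real.log 4 * (t / T) := by ring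
    rw [this]
    nlinarith
  exact h3.trans ((hj j).trans (mul_le_mul_of_nonneg_right h4 h0))

/-- Parseval: the mode energies sum to the `L²` norm. -/
lemma modeEnergy_hasSum {δ κ : ℝ} {u : ℝ → ℝ} {ρ : ℝ → ℝ → ℝ → ℝ}
    (h : IsShearSolution δ κ u ρ) {t : ℝ} (ht : 0 ≤ t) :
    HasSum (fun m => modeEnergy ρ m t) (2 * π * l2normSq ρ t) := by
  have c0 : Continuous (fun p : ℝ × ℝ => ρ t p.1 p.2) :=
    h.cont.comp_continuous (by fun_prop : Continuous fun p : ℝ × ℝ => (t, p.1, p.2))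
      fun p => ht
  have := parseval_integrated (a := 0) (c := 2 * π) (by positivity : 0 < 2 * π)
    (G := fun x y => ((ρ t x y : ℝ) : ℂ)) (Complex.continuous_ofReal.comp c0)
  have e : l2normSq ρ t = ∫ y in (0:ℝ)..(2 * π), ∫ x in (0:ℝ)..(0 + 2 * π),
      ‖((ρ t x y : ℝ) : ℂ)‖ ^ 2 := by
    simp_rw [l2normSq, Complex.norm_real, Real.norm_eq_abs, sq_abs, zero_add]
    exact integral_swap_continuous (f := fun x y => ρ t x y ^ 2) (c0.pow 2) _ _ _ _
  rw [e]
  simpa only [modeEnergy, xCoeff, max_eq_left ht] using this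

/-- A uniform resolvent bound `R` gives exponential decay at the rate `log 4 / (2 π R)`. -/
lemma shear_decay {δ κ R : ℝ} {u : ℝ → ℝ} {ρ : ℝ → ℝ → ℝ → ℝ}
    (h : IsShearSolution δ κ u ρ) (hκ : 0 ≤ κ) (hδ : 0 ≤ δ) (hR : 0 < R)
    (hres : ∀ (α k lam : ℝ), 0 ≤ α → 1 ≤ |k| → ∀ (c c1 c2 F : ℝ → ℂ),
      IsResolventSol κ α k lam u c c1 c2 F →
      ∫ y in (0:ℝ)..(2 * π), ‖c y‖ ^ 2 ≤ R ^ 2 * ∫ y in (0:ℝ)..(2 * π), ‖F y‖ ^ 2)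
    (hmean : ∀ y : ℝ, (∫ x in (0:ℝ)..(2 * π), ρ 0 x y) = 0) (t : ℝ) (ht : 0 ≤ t) :
    l2normSq ρ t ≤ 4 * Real.exp (-(Real.log 4 / (2 * π * R)) * t) * l2normSq ρ 0 := by
  have hmode : ∀ m, modeEnergy ρ m t ≤
      4 * Real.exp (-(Real.log 4 / (2 * π * R)) * t) * modeEnergy ρ m 0 := by
    intro m
    rcases eq_or_ne m 0 with rfl | hm
    · have h0 : modeEnergy ρ 0 0 = 0 := by
        have : ∀ y, xCoeff ρ 0 0 y = 0 := by
          intro y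
          have := congrArg (fun r : ℝ => (r : ℂ)) (hmean y)
          simpa [xCoeff, ← intervalIntegral.integral_ofReal] using this
        simp [modeEnergy, this]
      have := modeEnergy_antitone h hκ hδ 0 ht 0 le_rfl
      rw [h0, zero_add] at this
      rw [h0, mul_zero]
      exact this
    · exact exp_decay_of_step (by positivity) (modeEnergy_nonneg _ _ _)
        (fun r hr s hs => modeEnergy_antitone h hκ hδ m hr s hs)
        (fun s hs => modeEnergy_step h hκ hδ hm hR hres s hs) t ht
  have hle := hasSum_le hmode (modeEnergy_hasSum h ht)
    ((modeEnergy_hasSum h le_rfl).mul_left _)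
  have hπ : 0 < 2 * π := by positivity
  refine le_of_mul_le_mul_left ?_ hπ
  linarith

/-! ### Enhanced dissipation -/

/-- Every derivative of a periodic function is periodic. -/
lemma iteratedDeriv_periodic {u : ℝ → ℝ} {c : ℝ} (hu : Function.Periodic u c) (j : ℕ) :
    Function.Periodic (iteratedDeriv j u) c := by
  intro y
  have h1 : (fun z => u (z + c)) = u := funext hu
  have h2 := congrFun (iteratedDeriv_comp_add_const j u c) y
  rw [h1] at h2
  exact h2.symm

/-- Enhanced dissipation for a `C^{n+1}` periodic shear flow whose
critical points are finitely many and of order at most `n`: decay at rate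
`ε κ^{n/(n+2)} / (1 + log(1/κ))`. -/
theorem enhanced_dissipation_regular_shear (n : ℕ) (hn : 2 ≤ n)
    (δ : ℝ) (hδ : δ = 0 ∨ δ = 1)
    (u : ℝ → ℝ) (hu_smooth : ContDiff ℝ (n + 1 : ℕ) u) (hu_per : ∀ y, u (y + 2 * π) = u y)
    (hfin : {y ∈ Ico (0:ℝ) (2 * π) | deriv u y = 0}.Finite)
    (hne : {y ∈ Ico (0:ℝ) (2 * π) | deriv u y = 0}.Nonempty)
    (horder : ∀ y_c ∈ {y ∈ Ico (0:ℝ) (2 * π) | deriv u y = 0},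
      ∃ j : ℕ, 2 ≤ j ∧ j ≤ n ∧ iteratedDeriv j u y_c ≠ 0) :
    ∃ ε ∈ Ioo (0:ℝ) 1, ∃ C : ℝ, 1 ≤ C ∧ ∃ κ₀ ∈ Ioo (0:ℝ) 1,
      ∀ κ ∈ Ioc (0:ℝ) κ₀, ∀ ρ : ℝ → ℝ → ℝ → ℝ, IsShearSolution δ κ u ρ →
        (∀ y : ℝ, (∫ x in (0:ℝ)..(2 * π), ρ 0 x y) = 0) →
        ∀ t : ℝ, 0 ≤ t →
          l2normSq ρ t ≤
            C * Real.exp (-(ε * κ ^ ((n : ℝ) / (n + 2)) / (1 + Real.log (1 / κ))) * t) *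
              l2normSq ρ 0 := by
  have hper : Function.Periodic u (2 * π) := hu_per
  have hπ := Real.pi_pos
  have hder : Function.Periodic (deriv u) (2 * π) := by
    rw [← iteratedDeriv_one]
    exact iteratedDeriv_periodic hper 1
  have hnd : ∀ y, ∃ j ∈ Finset.Icc 1 n, iteratedDeriv j u y ≠ 0 := by
    intro y
    by_cases hy : deriv u y = 0
    · have key : ∀ f : ℝ → ℝ, Function.Periodic f (2 * π) →
          f (toIcoMod Real.two_pi_pos 0 y) = f y :=
        fun f hf => hf.sub_zsmul_eq _
      have hmem := toIcoMod_mem_Ico Real.two_pi_pos 0 y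
      rw [zero_add] at hmem
      obtain ⟨j, hj1, hj2, hj⟩ := horder _ ⟨hmem, (key _ hder).trans hy⟩
      rw [key _ (iteratedDeriv_periodic hper j)] at hj
      exact ⟨j, Finset.mem_Icc.2 ⟨by omega, hj2⟩, hj⟩
    · refine ⟨1, Finset.mem_Icc.2 ⟨le_rfl, by omega⟩, ?_⟩
      rwa [iteratedDeriv_one]
  have hfin' : {y ∈ Icc (-1:ℝ) 8 | deriv u y = 0}.Finite := by
    set S := {y ∈ Ico (0:ℝ) (2 * π) | deriv u y = 0} with hS
    have hsub : {y ∈ Icc (-1:ℝ) 8 | deriv u y = 0} ⊆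
        S ∪ ((fun z => z - 2 * π) '' S ∪ (fun z => z + 2 * π) '' S) := by
      rintro y ⟨⟨hy1, hy2⟩, hy⟩
      have h3 := Real.pi_gt_three
      rcases lt_or_ge y 0 with h0 | h0
      · refine Or.inr (Or.inl ⟨y + 2 * π, ⟨⟨by linarith, by linarith⟩, ?_⟩, by ring⟩)
        rw [hder y, hy]
      rcases lt_or_ge y (2 * π) with h4 | h4
      · exact Or.inl ⟨⟨h0, h4⟩, hy⟩
      · refine Or.inr (Or.inr ⟨y - 2 * π, ⟨⟨by linarith, by linarith⟩, ?_⟩, by ring⟩)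
        rw [← hder (y - 2 * π), sub_add_cancel, hy]
    exact (hfin.union ((hfin.image _).union (hfin.image _))).subset hsub
  -- the multiplier constants, hence the resolvent constant `K`, depend on `u` only
  obtain ⟨c₀, hc₀, d₀, hd₀, -, N, hN, hmul⟩ := exists_multipliers
    (hu_smooth.of_le (by exact_mod_cast Nat.le_succ n)) (by omega) hu_per hnd hfin'
    ⟨hne.some, hne.some_mem.2⟩
  obtain ⟨K, hK, hres⟩ := resolvent_bound hmul hc₀ hd₀ hN hu_smooth.continuous
  have hl4 : 0 < Real.log 4 := Real.log_pos (by norm_num)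
  have hε0 : 0 < Real.log 4 / (2 * π * K) := by positivity
  refine ⟨min (1 / 2) (Real.log 4 / (2 * π * K)), ⟨lt_min (by norm_num) hε0,
    (min_le_left _ _).trans_lt (by norm_num)⟩, 4, by norm_num, 1 / 2, by norm_num, ?_⟩
  rintro κ ⟨hκ, hκ2⟩ ρ hρ hmean t ht
  have hκ1 : κ < 1 := by linarith
  have hδ0 : 0 ≤ δ := by rcases hδ with rfl | rfl <;> norm_num
  set P := κ ^ ((n : ℝ) / (n + 2)) with hP
  have hP0 : 0 < P := Real.rpow_pos_of_pos hκ _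
  have hdec := shear_decay (R := K / P) hρ hκ.le hδ0 (by positivity)
    (fun α k lam hα hk c c1 c2 F hF => hres κ hκ hκ1 α k lam hα hk c c1 c2 F hF) hmean t ht
  refine hdec.trans ?_
  have hL0 : 0 ≤ l2normSq ρ 0 := by
    refine intervalIntegral.integral_nonneg (by positivity) fun x _ => ?_
    exact intervalIntegral.integral_nonneg (by positivity) fun y _ => sq_nonneg _
  refine mul_le_mul_of_nonneg_right ?_ hL0
  refine mul_le_mul_of_nonneg_left (Real.exp_le_exp.2 ?_) (by norm_num)
  refine mul_le_mul_of_nonneg_right (neg_le_neg ?_) ht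
  -- the logarithmic loss is at least `1`, and the resolvent method does not incur it
  have hlog : 0 ≤ Real.log (1 / κ) :=
    Real.log_nonneg (by rw [le_div_iff₀ hκ]; linarith)
  calc min (1 / 2) (Real.log 4 / (2 * π * K)) * P / (1 + Real.log (1 / κ))
      ≤ min (1 / 2) (Real.log 4 / (2 * π * K)) * P :=
        div_le_self (mul_nonneg (le_min (by norm_num) hε0.le) hP0.le) (by linarith)
    _ ≤ Real.log 4 / (2 * π * K) * P :=
        mul_le_mul_of_nonneg_right (min_le_right _ _) hP0.le
    _ = Real.log 4 / (2 * π * (K / P)) := by field_simp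

end
end

section
/- Let α ∈ (0,1), δ ∈ {0,1}, and let u : ℝ → ℝ be the Weierstrass-type function u(y) = Σ_{ℓ=1}^∞ 3^{−αℓ} sin(3^ℓ y). Then there exist ε ∈ (0,1), C ≥ 1, and κ₀ ∈ (0,1), depending only on α and δ, such that for every κ ∈ (0,κ₀] and every solution ρ of the shear advection–diffusion equation whose initial datum satisfies ∫₀^{2π} ρ₀(x,y) dx = 0 for all y, one has ‖ρ(t)‖²_{L²} ≤ C exp( −ε κ^{α/(α+2)} t ) ‖ρ(0)‖²_{L²} for all t ≥ 0. -/
/-!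
The proof is a hypocoercivity argument on each Fourier mode in `x`. For an integer `n`, the cosine
and sine coefficients `a`, `b` of `ρ` in `x` solve, with `k = n` and `m = κ δ n²`, the system
`∂ₜa = -k u b - m a + κ ∂ᵧᵧa`, `∂ₜb = k u a - m b + κ ∂ᵧᵧb` (`IsShearSolution.isMode`).
The energy `E = ∫ a² + b²` is dissipated only through `κ ∫ (∂ᵧa)² + (∂ᵧb)²`, which alone gives the
rate `κ`. Roughness of `u` enters through the correlation
`F = ∫ φ(y) (a(y+h) b(y) - b(y+h) a(y)) dy`: its time derivative contains
`-k ∫ φ(y) (u(y+h) - u(y)) (a(y) a(y+h) + b(y) b(y+h)) dy`, and everything else is damping or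
is controlled by diffusion (`corr_deriv`).

For the Weierstrass function the choice `h = 2π / 3^(p+2)` is convenient: translation by `h` leaves
all frequencies above `N = 3^(p+1)` invariant, so the increment `u(y+h) - u(y)` is a trigonometric
polynomial of top frequency `N`, with top amplitude of size `N^(-α)` and sup norm of the same size.
Taking for `φ` the cosine of frequency `N` in phase with the top term, the product
`φ(y) (u(y+h) - u(y))` has mean value bounded below by a multiple of `N^(-α)`, and its other terms
have frequencies at least `2N/3`, so that integration by parts makes them small compared with `E`
up to a multiple of `N^(-2) ∫ (∂ᵧa)² + (∂ᵧb)²` (`increment_lower`).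

With `κ N² ≈ N^(-α)`, that is `N ≈ κ^(-1/(α+2))` (`exists_scale`), all errors are absorbed by the
dissipation, and the functional `lya = lyaConst · E + k⁻¹ F`, which is comparable to `E`, satisfies
`lya' ≤ -c N^(-α) lya` (`lya_deriv_le`) with `c` depending only on `α`. Since
`N^(-α) ≥ κ^(α/(α+2))`, Grönwall's inequality gives the decay of every mode with `n ≠ 0`
(`IsMode.en_decay`). The mode `n = 0` vanishes at time zero and its energy does not increase
(`IsMode.en_le`). Parseval's identity sums the modes (`IsShearSolution.hasSum_modes`).
-/

open MeasureTheory Real Set Filter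

noncomputable section

/-- The Weierstrass-type shear flow `u(y) = Σ_{ℓ≥1} 3^{-αℓ} sin(3^ℓ y)`. -/
def weierstrassShear (α : ℝ) (y : ℝ) : ℝ :=
  ∑' ℓ : ℕ, ((3 : ℝ) ^ (ℓ + 1 : ℕ)) ^ (-α) * Real.sin ((3 : ℝ) ^ (ℓ + 1 : ℕ) * y)

/-! ### Integrals over one period -/

/-- The integral of `f` over the period `[0, 2π]`. -/
def pint (f : ℝ → ℝ) : ℝ := ∫ y in (0:ℝ)..(2 * π), f y

lemma pint_add {f g : ℝ → ℝ} (hf : Continuous f) (hg : Continuous g) :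
    pint (fun y => f y + g y) = pint f + pint g :=
  intervalIntegral.integral_add (hf.intervalIntegrable _ _) (hg.intervalIntegrable _ _)

lemma pint_sub {f g : ℝ → ℝ} (hf : Continuous f) (hg : Continuous g) :
    pint (fun y => f y - g y) = pint f - pint g :=
  intervalIntegral.integral_sub (hf.intervalIntegrable _ _) (hg.intervalIntegrable _ _)

lemma pint_const_mul (c : ℝ) (f : ℝ → ℝ) : pint (fun y => c * f y) = c * pint f :=
  intervalIntegral.integral_const_mul _ _

lemma pint_mono {f g : ℝ → ℝ} (hf : Continuous f) (hg : Continuous g) (h : ∀ y, f y ≤ g y) :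
    pint f ≤ pint g :=
  intervalIntegral.integral_mono_on (by positivity) (hf.intervalIntegrable _ _)
    (hg.intervalIntegrable _ _) (fun y _ => h y)

lemma pint_nonneg {f : ℝ → ℝ} (h : ∀ y, 0 ≤ f y) : 0 ≤ pint f :=
  intervalIntegral.integral_nonneg (by positivity) (fun y _ => h y)

lemma pint_abs_le {f g : ℝ → ℝ} (hf : Continuous f) (hg : Continuous g)
    (h : ∀ y, |f y| ≤ g y) : |pint f| ≤ pint g := by
  rw [abs_le]
  constructor
  · have := pint_mono (f := fun y => (-1) * g y) (by fun_prop) hf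
      (fun y => by linarith [(abs_le.1 (h y)).1])
    rw [pint_const_mul] at this
    linarith
  · exact pint_mono hf hg (fun y => (abs_le.1 (h y)).2)

lemma pint_shift {f : ℝ → ℝ} (hp : ∀ y, f (y + 2 * π) = f y) (s : ℝ) :
    pint (fun y => f (y + s)) = pint f := by
  unfold pint
  rw [intervalIntegral.integral_comp_add_right]
  have := Function.Periodic.intervalIntegral_add_eq (f := f) (T := 2 * π) hp s 0
  rw [zero_add, add_comm] at *
  simpa [add_comm] using this

/-- The derivative of a periodic function has zero integral over a period. -/
lemma pint_deriv_eq_zero {P p : ℝ → ℝ} (hP : ∀ y, HasDerivAt P (p y) y) (hp : Continuous p)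
    (hper : P (2 * π) = P 0) : pint p = 0 := by
  unfold pint
  rw [intervalIntegral.integral_eq_sub_of_hasDerivAt (fun y _ => hP y)
    (hp.intervalIntegrable _ _), hper, sub_self]

/-- Differentiation under the integral sign, when the derivative is jointly continuous. -/
lemma hasDerivAt_pint {g g' : ℝ → ℝ → ℝ} {U : Set ℝ} (hU : IsOpen U)
    (hg : ∀ s ∈ U, Continuous (g s))
    (hd : ∀ s ∈ U, ∀ y, HasDerivAt (fun s => g s y) (g' s y) s)
    (hc : ContinuousOn (fun p : ℝ × ℝ => g' p.1 p.2) (U ×ˢ univ)) {t : ℝ} (ht : t ∈ U) :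
    HasDerivAt (fun s => pint (g s)) (pint (g' t)) t := by
  obtain ⟨r, hr, hrU⟩ := Metric.nhds_basis_closedBall.mem_iff.1 (hU.mem_nhds ht)
  have hK : IsCompact (Metric.closedBall t r ×ˢ Icc (0:ℝ) (2 * π)) :=
    (isCompact_closedBall t r).prod isCompact_Icc
  obtain ⟨M, hM⟩ := hK.exists_bound_of_continuousOn
    (hc.mono (prod_mono hrU (subset_univ _)))
  have hpi : (0:ℝ) ≤ 2 * π := by positivity
  have hg't : Continuous (g' t) := by
    have : ContinuousOn (fun y : ℝ => g' t y) univ :=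
      hc.comp (f := fun y : ℝ => (t, y)) (by fun_prop) (fun y _ => ⟨ht, mem_univ _⟩)
    exact continuousOn_univ.1 this
  refine (intervalIntegral.hasDerivAt_integral_of_dominated_loc_of_deriv_le
    (s := Metric.closedBall t r) (bound := fun _ => M) (Metric.closedBall_mem_nhds t hr)
    ?_ ((hg t ht).intervalIntegrable _ _) hg't.aestronglyMeasurable ?_ ?_ ?_).2
  · filter_upwards [hU.mem_nhds ht] with s hs using (hg s hs).aestronglyMeasurable
  · refine Eventually.of_forall (fun y hy s hs => hM (s, y) ⟨hs, ?_⟩)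
    rw [uIoc_of_le hpi] at hy
    exact ⟨hy.1.le, hy.2⟩
  · exact intervalIntegrable_const
  · exact Eventually.of_forall (fun y _ s hs => hd s (hrU hs) y)

lemma continuous_pint_param {X : Type*} [TopologicalSpace X] {g : X → ℝ → ℝ}
    (hg : Continuous (fun p : X × ℝ => g p.1 p.2)) : Continuous (fun x => pint (g x)) :=
  intervalIntegral.continuous_parametric_intervalIntegral_of_continuous' hg _ _

lemma continuousOn_pint_param {X : Type*} [TopologicalSpace X] {g : X → ℝ → ℝ} {S : Set X}
    (hg : ContinuousOn (fun p : X × ℝ => g p.1 p.2) (S ×ˢ univ)) :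
    ContinuousOn (fun x => pint (g x)) S := by
  rw [continuousOn_iff_continuous_domRestrict]
  have h : Continuous (fun p : S × ℝ => g p.1 p.2) :=
    hg.comp_continuous (f := fun p : S × ℝ => ((p.1 : X), p.2)) (by fun_prop)
      (fun p => ⟨p.1.2, mem_univ _⟩)
  exact continuous_pint_param (g := fun (x : S) y => g x y) h

/-! ### Estimates at a fixed time -/

/-- `a` is a `2π`-periodic `C²` function with first and second derivatives `a1`, `a2`. -/
structure PerC2 (a a1 a2 : ℝ → ℝ) : Prop where
  per : ∀ y, a (y + 2 * π) = a y
  d1 : ∀ y, HasDerivAt a (a1 y) y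
  d2 : ∀ y, HasDerivAt a1 (a2 y) y
  c2 : Continuous a2

namespace PerC2
variable {a a1 a2 : ℝ → ℝ}

lemma c0 (h : PerC2 a a1 a2) : Continuous a :=
  continuous_iff_continuousAt.2 fun y => (h.d1 y).continuousAt

lemma c1 (h : PerC2 a a1 a2) : Continuous a1 :=
  continuous_iff_continuousAt.2 fun y => (h.d2 y).continuousAt

lemma per1 (h : PerC2 a a1 a2) (y : ℝ) : a1 (y + 2 * π) = a1 y := by
  have h1 : HasDerivAt (fun y => a (y + 2 * π)) (a1 (y + 2 * π)) y :=
    (h.d1 (y + 2 * π)).comp_add_const y (2 * π)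
  simp only [h.per] at h1
  exact h1.unique (h.d1 y)

lemma s1 (h : PerC2 a a1 a2) (s y : ℝ) : HasDerivAt (fun y => a (y + s)) (a1 (y + s)) y :=
  (h.d1 (y + s)).comp_add_const y s

lemma s2 (h : PerC2 a a1 a2) (s y : ℝ) : HasDerivAt (fun y => a1 (y + s)) (a2 (y + s)) y :=
  (h.d2 (y + s)).comp_add_const y s

end PerC2

/-- The energy `∫ a² + b²`. -/
def en (a b : ℝ → ℝ) : ℝ := pint (fun y => a y ^ 2 + b y ^ 2)

lemma en_nonneg (a b : ℝ → ℝ) : 0 ≤ en a b := pint_nonneg (fun y => by positivity)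

lemma en_shift {a b : ℝ → ℝ} (ha : ∀ y, a (y + 2 * π) = a y) (hb : ∀ y, b (y + 2 * π) = b y)
    (s : ℝ) : en (fun y => a (y + s)) (fun y => b (y + s)) = en a b :=
  pint_shift (f := fun y => a y ^ 2 + b y ^ 2) (fun y => by simp only [ha, hb]) s

lemma young_two {l : ℝ} (hl : 0 < l) (a b c d : ℝ) :
    |a * c + b * d| ≤ (l * (a ^ 2 + b ^ 2) + l⁻¹ * (c ^ 2 + d ^ 2)) / 2 := by
  have e : l * l⁻¹ = 1 := mul_inv_cancel₀ hl.ne'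
  have hi : 0 < l⁻¹ := inv_pos.2 hl
  have h1 : 0 ≤ l⁻¹ * ((l * a - c) ^ 2 + (l * b - d) ^ 2) := by positivity
  have h2 : 0 ≤ l⁻¹ * ((l * a + c) ^ 2 + (l * b + d) ^ 2) := by positivity
  have e1 : l⁻¹ * ((l * a - c) ^ 2 + (l * b - d) ^ 2) = (l * l⁻¹) * l * (a ^ 2 + b ^ 2)
    - 2 * (l * l⁻¹) * (a * c + b * d) + l⁻¹ * (c ^ 2 + d ^ 2) := by ring
  have e2 : l⁻¹ * ((l * a + c) ^ 2 + (l * b + d) ^ 2) = (l * l⁻¹) * l * (a ^ 2 + b ^ 2)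
    + 2 * (l * l⁻¹) * (a * c + b * d) + l⁻¹ * (c ^ 2 + d ^ 2) := by ring
  rw [e1, e] at h1
  rw [e2, e] at h2
  rw [abs_le]
  constructor <;> linarith

/-- Weighted Young inequality for a bounded multiplier `ψ`. -/
lemma pint_young {a b c d ψ : ℝ → ℝ} (ha : Continuous a) (hb : Continuous b) (hc : Continuous c)
    (hd : Continuous d) (hψ : Continuous ψ) {W : ℝ} (hW : ∀ y, |ψ y| ≤ W) {l : ℝ} (hl : 0 < l) :
    |pint (fun y => ψ y * (a y * c y + b y * d y))| ≤
      W * ((l * en a b + l⁻¹ * en c d) / 2) := by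
  have hW0 : 0 ≤ W := (abs_nonneg _).trans (hW 0)
  have := pint_abs_le (f := fun y => ψ y * (a y * c y + b y * d y))
    (g := fun y => (W * l / 2) * (a y ^ 2 + b y ^ 2) + (W * l⁻¹ / 2) * (c y ^ 2 + d y ^ 2))
    (by fun_prop) (by fun_prop) (fun y => by
      rw [abs_mul]
      calc _ ≤ W * ((l * (a y ^ 2 + b y ^ 2) + l⁻¹ * (c y ^ 2 + d y ^ 2)) / 2) :=
            mul_le_mul (hW y) (young_two hl _ _ _ _) (abs_nonneg _) hW0
        _ = _ := by ring)
  rw [pint_add (by fun_prop) (by fun_prop), pint_const_mul, pint_const_mul] at this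
  refine this.trans (le_of_eq ?_)
  unfold en
  ring

/-- Energy identity: the transport part is skew and diffusion dissipates. -/
lemma energy_identity {a a1 a2 b b1 b2 u : ℝ → ℝ} (ha : PerC2 a a1 a2) (hb : PerC2 b b1 b2)
    (k m κ : ℝ) :
    pint (fun y => 2 * (a y * (-k * u y * b y - m * a y + κ * a2 y)
      + b y * (k * u y * a y - m * b y + κ * b2 y)))
      = -2 * m * en a b - 2 * κ * en a1 b1 := by
  have := ha.c0; have := ha.c1; have := ha.c2; have := hb.c0; have := hb.c1; have := hb.c2
  have hz : pint (fun y => (a1 y * a1 y + a y * a2 y) + (b1 y * b1 y + b y * b2 y)) = 0 := by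
    refine pint_deriv_eq_zero (P := fun y => a y * a1 y + b y * b1 y) (fun y => ?_)
      (by fun_prop) ?_
    · exact ((ha.d1 y).mul (ha.d2 y)).add ((hb.d1 y).mul (hb.d2 y))
    · have h1 := ha.per 0; have h2 := ha.per1 0; have h3 := hb.per 0; have h4 := hb.per1 0
      simp only [zero_add] at h1 h2 h3 h4
      simp only [h1, h2, h3, h4]
  have e : (fun y => 2 * (a y * (-k * u y * b y - m * a y + κ * a2 y)
      + b y * (k * u y * a y - m * b y + κ * b2 y)))
      = fun y => ((-2 * m) * (a y ^ 2 + b y ^ 2) - (2 * κ) * (a1 y ^ 2 + b1 y ^ 2))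
        + (2 * κ) * ((a1 y * a1 y + a y * a2 y) + (b1 y * b1 y + b y * b2 y)) := by
    funext y; ring
  rw [e, pint_add (by fun_prop) (by fun_prop), pint_sub (by fun_prop) (by fun_prop),
    pint_const_mul, pint_const_mul, pint_const_mul, hz]
  unfold en
  ring

/-- The cross-correlation `∫ φ(y) (a(y+h) b(y) - b(y+h) a(y)) dy`. For the complex mode
`f = a - i b` it is the imaginary part of `∫ φ(y) f(y+h) conj (f(y)) dy`. -/
def corr (φ : ℝ → ℝ) (h : ℝ) (a b : ℝ → ℝ) : ℝ :=
  pint (fun y => φ y * (a (y + h) * b y - b (y + h) * a y))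

/-- The correlation `∫ ψ(y) (a(y) a(y+h) + b(y) b(y+h)) dy`. -/
def corrRe (ψ : ℝ → ℝ) (h : ℝ) (a b : ℝ → ℝ) : ℝ :=
  pint (fun y => ψ y * (a y * a (y + h) + b y * b (y + h)))

lemma corr_le {a b φ : ℝ → ℝ} (ha : Continuous a) (hb : Continuous b) (hφ : Continuous φ)
    (pa : ∀ y, a (y + 2 * π) = a y) (pb : ∀ y, b (y + 2 * π) = b y)
    (hφ1 : ∀ y, |φ y| ≤ 1) (h : ℝ) : |corr φ h a b| ≤ en a b := by
  have := pint_young (a := fun y => a (y + h)) (b := fun y => b (y + h)) (c := b)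
    (d := fun y => - a y) (by fun_prop) (by fun_prop) hb (by fun_prop) hφ hφ1 one_pos
  rw [en_shift pa pb] at this
  have e : en b (fun y => - a y) = en a b := by
    unfold en; congr 1; funext y; ring
  rw [e] at this
  have e2 : corr φ h a b = pint (fun y => φ y * (a (y + h) * b y + b (y + h) * (- a y))) := by
    unfold corr; congr 1; funext y; ring
  rw [e2]
  refine this.trans (le_of_eq ?_)
  norm_num

/-- Evolution of the correlation: the shear produces `-k` times the real correlation weighted by
`φ` times the increment of `u`, and the remaining terms are damping and a diffusive error. -/
lemma corr_deriv {a a1 a2 b b1 b2 u φ φ1 : ℝ → ℝ} (ha : PerC2 a a1 a2) (hb : PerC2 b b1 b2)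
    (hu : Continuous u) (hφ : ∀ y, HasDerivAt φ (φ1 y) y) (hφ1 : Continuous φ1)
    (pφ : φ (2 * π) = φ 0) {N : ℝ} (bφ : ∀ y, |φ y| ≤ 1) (bφ1 : ∀ y, |φ1 y| ≤ N)
    (k m h : ℝ) {κ l : ℝ} (hκ : 0 ≤ κ) (hl : 0 < l) {at' bt : ℝ → ℝ}
    (hat : ∀ y, at' y = -k * u y * b y - m * a y + κ * a2 y)
    (hbt : ∀ y, bt y = k * u y * a y - m * b y + κ * b2 y) :
    |pint (fun y => φ y * ((at' (y + h) * b y + a (y + h) * bt y)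
        - (bt (y + h) * a y + b (y + h) * at' y)))
      + 2 * m * corr φ h a b
      + k * corrRe (fun y => φ y * (u (y + h) - u y)) h a b|
      ≤ κ * (2 * en a1 b1 + N * (l * en a b + l⁻¹ * en a1 b1)) := by
  have i1 := ha.c0; have i2 := ha.c1; have i3 := ha.c2
  have i4 := hb.c0; have i5 := hb.c1; have i6 := hb.c2
  have i7 : Continuous φ := continuous_iff_continuousAt.2 fun y => (hφ y).continuousAt
  have hz : pint (fun y => φ1 y * ((a1 (y + h) * b y + a (y + h) * b1 y)
        - (b1 (y + h) * a y + b (y + h) * a1 y))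
      + φ y * (((a2 (y + h) * b y + a1 (y + h) * b1 y) + (a1 (y + h) * b1 y + a (y + h) * b2 y))
        - ((b2 (y + h) * a y + b1 (y + h) * a1 y) + (b1 (y + h) * a1 y + b (y + h) * a2 y)))) = 0 := by
    refine pint_deriv_eq_zero (P := fun y => φ y * ((a1 (y + h) * b y + a (y + h) * b1 y)
        - (b1 (y + h) * a y + b (y + h) * a1 y))) (fun y => ?_) (by fun_prop) ?_
    · exact (hφ y).mul ((((ha.s2 h y).mul (hb.d1 y)).add ((ha.s1 h y).mul (hb.d2 y))).sub
        (((hb.s2 h y).mul (ha.d1 y)).add ((hb.s1 h y).mul (ha.d2 y))))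
    · have h1 := ha.per 0; have h2 := ha.per1 0; have h3 := hb.per 0; have h4 := hb.per1 0
      have h5 := ha.per h; have h6 := ha.per1 h; have h7 := hb.per h; have h8 := hb.per1 h
      simp only [zero_add, add_comm h] at h1 h2 h3 h4 h5 h6 h7 h8
      simp only [h1, h2, h3, h4, h5, h6, h7, h8, zero_add, pφ]
  have e : pint (fun y => φ y * ((at' (y + h) * b y + a (y + h) * bt y)
        - (bt (y + h) * a y + b (y + h) * at' y)))
      = -2 * m * corr φ h a b - k * corrRe (fun y => φ y * (u (y + h) - u y)) h a b
        - κ * (2 * pint (fun y => φ y * (a1 (y + h) * b1 y + b1 (y + h) * (-a1 y)))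
          + pint (fun y => φ1 y * (a1 (y + h) * b y + b1 (y + h) * (- a y)))
          + pint (fun y => φ1 y * (a (y + h) * b1 y + b (y + h) * (- a1 y)))) := by
    have e0 : (fun y => φ y * ((at' (y + h) * b y + a (y + h) * bt y)
        - (bt (y + h) * a y + b (y + h) * at' y)))
        = fun y => ((((((-2 * m) * (φ y * (a (y + h) * b y - b (y + h) * a y)))
          - k * ((φ y * (u (y + h) - u y)) * (a y * a (y + h) + b y * b (y + h))))
          - (κ * 2) * (φ y * (a1 (y + h) * b1 y + b1 (y + h) * (-a1 y))))
          - κ * (φ1 y * (a1 (y + h) * b y + b1 (y + h) * (- a y))))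
          - κ * (φ1 y * (a (y + h) * b1 y + b (y + h) * (- a1 y))))
          + κ * (φ1 y * ((a1 (y + h) * b y + a (y + h) * b1 y)
        - (b1 (y + h) * a y + b (y + h) * a1 y))
      + φ y * (((a2 (y + h) * b y + a1 (y + h) * b1 y) + (a1 (y + h) * b1 y + a (y + h) * b2 y))
        - ((b2 (y + h) * a y + b1 (y + h) * a1 y) + (b1 (y + h) * a1 y + b (y + h) * a2 y)))) := by
      funext y
      simp only [hat, hbt]
      ring
    rw [e0, pint_add (by fun_prop) (by fun_prop), pint_sub (by fun_prop) (by fun_prop),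
      pint_sub (by fun_prop) (by fun_prop), pint_sub (by fun_prop) (by fun_prop),
      pint_sub (by fun_prop) (by fun_prop)]
    simp only [pint_const_mul]
    rw [hz]
    unfold corr corrRe
    ring
  have y1 := pint_young (a := fun y => a1 (y + h)) (b := fun y => b1 (y + h)) (c := b1)
    (d := fun y => - a1 y) (by fun_prop) (by fun_prop) i5 (by fun_prop) i7 bφ one_pos
  have y2 := pint_young (a := fun y => a1 (y + h)) (b := fun y => b1 (y + h)) (c := b)
    (d := fun y => - a y) (by fun_prop) (by fun_prop) i4 (by fun_prop) hφ1 bφ1 (inv_pos.2 hl)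
  have y3 := pint_young (a := fun y => a (y + h)) (b := fun y => b (y + h)) (c := b1)
    (d := fun y => - a1 y) (by fun_prop) (by fun_prop) i5 (by fun_prop) hφ1 bφ1 hl
  have es1 : en b1 (fun y => - a1 y) = en a1 b1 := by
    unfold en; congr 1; funext y; ring
  have es2 : en b (fun y => - a y) = en a b := by
    unfold en; congr 1; funext y; ring
  rw [en_shift ha.per1 hb.per1, es1] at y1
  rw [en_shift ha.per1 hb.per1, es2, inv_inv] at y2
  rw [en_shift ha.per hb.per, es1] at y3
  rw [e]
  set X := pint (fun y => φ y * (a1 (y + h) * b1 y + b1 (y + h) * (-a1 y)))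
  set Y := pint (fun y => φ1 y * (a1 (y + h) * b y + b1 (y + h) * (- a y)))
  set Z := pint (fun y => φ1 y * (a (y + h) * b1 y + b (y + h) * (- a1 y)))
  have e3 : -2 * m * corr φ h a b - k * corrRe (fun y => φ y * (u (y + h) - u y)) h a b
      - κ * (2 * X + Y + Z) + 2 * m * corr φ h a b
      + k * corrRe (fun y => φ y * (u (y + h) - u y)) h a b = -(κ * (2 * X + Y + Z)) := by ring
  rw [e3, abs_neg, abs_mul, abs_of_nonneg hκ]
  refine mul_le_mul_of_nonneg_left ?_ hκ
  calc |2 * X + Y + Z| ≤ 2 * |X| + |Y| + |Z| := by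
        refine (abs_add_le _ _).trans (add_le_add_left ((abs_add_le _ _).trans ?_) _)
        rw [abs_mul, abs_two]
    _ ≤ _ := by
        rw [inv_one] at y1
        linarith

/-- Replacing `a(y+h)` by `a(y)` in the correlation costs `h` times a derivative. -/
lemma corrRe_sub_le {a a1 a2 b b1 b2 ψ : ℝ → ℝ} (ha : PerC2 a a1 a2) (hb : PerC2 b b1 b2)
    (hψ : Continuous ψ) {W : ℝ} (hW : ∀ y, |ψ y| ≤ W) {h l : ℝ} (hh : 0 ≤ h) (hl : 0 < l) :
    |corrRe ψ h a b - pint (fun y => ψ y * (a y ^ 2 + b y ^ 2))| ≤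
      h * (W * ((l * en a b + l⁻¹ * en a1 b1) / 2)) := by
  have i1 := ha.c0; have i2 := ha.c1; have i4 := hb.c0; have i5 := hb.c1
  have hd : ∀ s : ℝ, HasDerivAt (fun s => corrRe ψ s a b)
      (pint (fun y => ψ y * (a y * a1 (y + s) + b y * b1 (y + s)))) s := by
    intro s
    refine hasDerivAt_pint (U := univ)
      (g := fun s y => ψ y * (a y * a (y + s) + b y * b (y + s)))
      (g' := fun s y => ψ y * (a y * a1 (y + s) + b y * b1 (y + s)))
      isOpen_univ (fun s _ => by fun_prop) (fun s _ y => ?_)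
      (Continuous.continuousOn (by fun_prop)) (mem_univ s)
    exact ((((ha.d1 (y + s)).comp_const_add y s).const_mul (a y)).add
      (((hb.d1 (y + s)).comp_const_add y s).const_mul (b y))).const_mul (ψ y)
  have hb' : ∀ s : ℝ, ‖pint (fun y => ψ y * (a y * a1 (y + s) + b y * b1 (y + s)))‖ ≤
      W * ((l * en a b + l⁻¹ * en a1 b1) / 2) := by
    intro s
    have := pint_young (a := a) (b := b) (c := fun y => a1 (y + s))
      (d := fun y => b1 (y + s)) i1 i4 (by fun_prop) (by fun_prop) hψ hW hl
    rwa [en_shift ha.per1 hb.per1] at this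
  have := norm_image_sub_le_of_norm_deriv_le_segment' (f := fun s => corrRe ψ s a b) (a := 0)
    (b := h) (fun s _ => (hd s).hasDerivWithinAt) (fun s _ => hb' s) h ⟨hh, le_rfl⟩
  have e : corrRe ψ 0 a b = pint (fun y => ψ y * (a y ^ 2 + b y ^ 2)) := by
    unfold corrRe; congr 1; funext y; rw [add_zero]; ring
  rw [e] at this
  rw [← Real.norm_eq_abs]
  refine this.trans (le_of_eq ?_)
  ring

/-- Oscillating weights: integration by parts gains a factor `1/ω`. -/
lemma osc_le {a a1 a2 b b1 b2 : ℝ → ℝ} (ha : PerC2 a a1 a2) (hb : PerC2 b b1 b2)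
    {ω : ℕ} (hω : 0 < ω) (θ : ℝ) {l : ℝ} (hl : 0 < l) :
    |pint (fun y => cos (ω * (y + θ)) * (a y ^ 2 + b y ^ 2))| ≤
      (ω : ℝ)⁻¹ * (l * en a b + l⁻¹ * en a1 b1) := by
  have i1 := ha.c0; have i2 := ha.c1; have i4 := hb.c0; have i5 := hb.c1
  have hω' : (ω : ℝ) ≠ 0 := by positivity
  have hz : pint (fun y => (cos (ω * (y + θ)) * ω) * (a y ^ 2 + b y ^ 2)
      + sin (ω * (y + θ)) * (2 * a y * a1 y + 2 * b y * b1 y)) = 0 := by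
    refine pint_deriv_eq_zero (P := fun y => sin (ω * (y + θ)) * (a y ^ 2 + b y ^ 2))
      (fun y => ?_) (by fun_prop) ?_
    · have h1 : HasDerivAt (fun y : ℝ => sin (ω * (y + θ))) (cos (ω * (y + θ)) * ω) y := by
        have := (((hasDerivAt_id y).add_const θ).const_mul (ω : ℝ)).sin
        simpa using this
      have h2 : HasDerivAt (fun y => a y ^ 2 + b y ^ 2) (2 * a y * a1 y + 2 * b y * b1 y) y := by
        have := ((ha.d1 y).fun_pow 2).fun_add ((hb.d1 y).fun_pow 2)
        simpa using this
      exact h1.mul h2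
    · have h1 := ha.per 0; have h3 := hb.per 0
      simp only [zero_add] at h1 h3
      simp only [h1, h3, zero_add]
      congr 1
      rw [show (ω : ℝ) * (2 * π + θ) = ω * θ + ω * (2 * π) by ring]
      exact sin_add_nat_mul_two_pi _ _
  have e : (fun y => (cos (ω * (y + θ)) * ω) * (a y ^ 2 + b y ^ 2)
      + sin (ω * (y + θ)) * (2 * a y * a1 y + 2 * b y * b1 y))
      = fun y => (ω : ℝ) * (cos (ω * (y + θ)) * (a y ^ 2 + b y ^ 2))
        + 2 * (sin (ω * (y + θ)) * (a y * a1 y + b y * b1 y)) := by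
    funext y; ring
  rw [e, pint_add (by fun_prop) (by fun_prop), pint_const_mul, pint_const_mul] at hz
  have y1 := pint_young (a := a) (b := b) (c := a1) (d := b1) (ψ := fun y => sin (ω * (y + θ)))
    i1 i4 i2 i5 (by fun_prop) (fun y => abs_sin_le_one _) hl
  set X := pint (fun y => cos (ω * (y + θ)) * (a y ^ 2 + b y ^ 2))
  set Y := pint (fun y => sin (ω * (y + θ)) * (a y * a1 y + b y * b1 y))
  have e2 : X = (ω : ℝ)⁻¹ * (-2 * Y) := by
    field_simp
    linarith
  rw [e2, abs_mul, abs_of_nonneg (by positivity : 0 ≤ (ω : ℝ)⁻¹)]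
  refine mul_le_mul_of_nonneg_left ?_ (by positivity)
  rw [abs_mul, abs_neg, abs_two]
  linarith

/-! ### Increments of the Weierstrass function -/

/-- The step `2π / 3^(n+1)`: all modes of frequency `3^ℓ` with `ℓ > n` are invariant under a
translation by it. -/
def step (n : ℕ) : ℝ := 2 * π / 3 ^ (n + 1)

/-- The amplitude of the frequency `3^(j+1)` in `y ↦ u (y + step n) - u y`. -/
def amp (α : ℝ) (n j : ℕ) : ℝ :=
  ((3 : ℝ) ^ (j + 1)) ^ (-α) * (2 * sin (3 ^ (j + 1) * (step n / 2)))

lemma step_pos (n : ℕ) : 0 < step n := by unfold step; positivity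

lemma pow_rpow_neg (α : ℝ) (j : ℕ) :
    ((3 : ℝ) ^ (j + 1)) ^ (-α) = ((3 : ℝ) ^ (-α)) ^ (j + 1) := by
  rw [← Real.rpow_natCast, ← Real.rpow_natCast, ← Real.rpow_mul (by norm_num),
    ← Real.rpow_mul (by norm_num), mul_comm]

lemma summable_weier {α : ℝ} (hα : 0 < α) :
    Summable (fun ℓ : ℕ => ((3 : ℝ) ^ (ℓ + 1)) ^ (-α)) := by
  simp_rw [pow_rpow_neg]
  refine (summable_nat_add_iff 1).2 (summable_geometric_of_lt_one (by positivity) ?_)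
  exact Real.rpow_lt_one_of_one_lt_of_neg (by norm_num) (by linarith)

lemma weier_term_le (α : ℝ) (ℓ : ℕ) (y : ℝ) :
    ‖((3 : ℝ) ^ (ℓ + 1 : ℕ)) ^ (-α) * Real.sin ((3 : ℝ) ^ (ℓ + 1 : ℕ) * y)‖ ≤
      ((3 : ℝ) ^ (ℓ + 1)) ^ (-α) := by
  rw [norm_mul, Real.norm_of_nonneg (by positivity)]
  exact mul_le_of_le_one_right (by positivity) (abs_sin_le_one _)

lemma continuous_weier {α : ℝ} (hα : 0 < α) : Continuous (weierstrassShear α) :=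
  continuous_tsum (fun ℓ => by fun_prop) (summable_weier hα) (fun ℓ y => weier_term_le α ℓ y)

lemma weier_increment {α : ℝ} (hα : 0 < α) (n : ℕ) (y : ℝ) :
    weierstrassShear α (y + step n) - weierstrassShear α y =
      ∑ j ∈ Finset.range n, amp α n j * cos (3 ^ (j + 1) * (y + step n / 2)) := by
  have hs : ∀ y, Summable (fun ℓ : ℕ =>
      ((3 : ℝ) ^ (ℓ + 1 : ℕ)) ^ (-α) * Real.sin ((3 : ℝ) ^ (ℓ + 1 : ℕ) * y)) := fun y =>
    Summable.of_norm_bounded (summable_weier hα) (fun ℓ => weier_term_le α ℓ y)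
  unfold weierstrassShear
  rw [← (hs _).tsum_sub (hs _), tsum_eq_sum (s := Finset.range n)]
  · refine Finset.sum_congr rfl (fun j _ => ?_)
    rw [← mul_sub, sin_sub_sin]
    unfold amp
    ring_nf
  · intro j hj
    rw [Finset.mem_range, not_lt] at hj
    obtain ⟨i, rfl⟩ := Nat.exists_eq_add_of_le hj
    have : (3 : ℝ) ^ (n + i + 1) * (y + step n) =
        3 ^ (n + i + 1) * y + ((3 ^ i : ℕ) : ℝ) * (2 * π) := by
      unfold step
      push_cast
      rw [show n + i + 1 = (n + 1) + i by ring, pow_add]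
      field_simp
    rw [this, sin_add_nat_mul_two_pi, sub_self]

/-- The constant in the bounds for the increment of the Weierstrass function; it is a
multiple of the sum of a geometric series of ratio `3^(α-1)` and blows up as `α → 1`. -/
def incConst (α : ℝ) : ℝ := 2 * π / 3 * ((3 : ℝ) ^ (1 - α) / ((3 : ℝ) ^ (1 - α) - 1))

lemma one_lt_q {α : ℝ} (hα : α < 1) : 1 < (3 : ℝ) ^ (1 - α) :=
  Real.one_lt_rpow (by norm_num) (by linarith)

lemma incConst_pos {α : ℝ} (hα : α < 1) : 0 < incConst α := by
  have := one_lt_q hα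
  unfold incConst
  have : 0 < (3 : ℝ) ^ (1 - α) - 1 := by linarith
  positivity

lemma pow_mul_rpow_neg (α : ℝ) (j : ℕ) :
    ((3 : ℝ) ^ j) ^ (-α) * 3 ^ j = ((3 : ℝ) ^ (1 - α)) ^ j := by
  have h3 : (0:ℝ) < 3 ^ j := by positivity
  nth_rewrite 2 [← Real.rpow_one ((3:ℝ) ^ j)]
  rw [← Real.rpow_add h3, ← Real.rpow_natCast, ← Real.rpow_natCast,
    ← Real.rpow_mul (by norm_num), ← Real.rpow_mul (by norm_num)]
  ring_nf

lemma sum_pow_succ_le {q : ℝ} (hq : 1 < q) (n : ℕ) :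
    ∑ j ∈ Finset.range n, q ^ (j + 1) ≤ q ^ n * (q / (q - 1)) := by
  have h1 : 0 < q - 1 := by linarith
  induction n with
  | zero => simp; positivity
  | succ n ih =>
    rw [Finset.sum_range_succ]
    have : q ^ (n + 1) * (q / (q - 1)) = q ^ n * (q / (q - 1)) + q ^ (n + 1) := by
      field_simp
      ring
    linarith

lemma sum_abs_amp_le {α : ℝ} (hα : α < 1) (n : ℕ) :
    ∑ j ∈ Finset.range n, |amp α n j| ≤ incConst α * ((3 : ℝ) ^ n) ^ (-α) := by
  have h1 : ∀ j, |amp α n j| ≤ step n * ((3 : ℝ) ^ (1 - α)) ^ (j + 1) := by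
    intro j
    have hs : |sin (3 ^ (j + 1) * (step n / 2))| ≤ 3 ^ (j + 1) * (step n / 2) := by
      have hp := step_pos n
      refine abs_sin_le_abs.trans (le_of_eq (abs_of_nonneg (by positivity)))
    rw [← pow_mul_rpow_neg]
    unfold amp
    rw [abs_mul, abs_mul, abs_two, abs_of_nonneg (by positivity : 0 ≤ ((3:ℝ) ^ (j + 1)) ^ (-α))]
    have h0 : 0 ≤ ((3:ℝ) ^ (j + 1)) ^ (-α) := by positivity
    calc _ ≤ ((3:ℝ) ^ (j + 1)) ^ (-α) * (2 * (3 ^ (j + 1) * (step n / 2))) := by gcongr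
      _ = _ := by ring
  refine (Finset.sum_le_sum (fun j _ => h1 j)).trans ?_
  rw [← Finset.mul_sum]
  refine (mul_le_mul_of_nonneg_left (sum_pow_succ_le (one_lt_q hα) n) (step_pos n).le).trans (le_of_eq ?_)
  rw [← pow_mul_rpow_neg]
  unfold step incConst
  rw [pow_succ]
  field_simp

lemma amp_top (α : ℝ) (p : ℕ) : amp α (p + 1) p = ((3 : ℝ) ^ (p + 1)) ^ (-α) * √3 := by
  unfold amp step
  have : (3:ℝ) ^ (p + 1) * (2 * π / 3 ^ (p + 1 + 1) / 2) = π / 3 := by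
    rw [pow_succ 3 (p + 1)]
    field_simp
  rw [this, sin_pi_div_three]
  ring

/-- Non-degeneracy: testing the increment of `u` against its top frequency extracts a multiple of
the energy, since all other products oscillate at frequency at least `(2/3) 3^(p+1)` and hence
contribute only a small error controlled by the energies of `(a, b)` and of its derivative. -/
lemma increment_lower {a a1 a2 b b1 b2 : ℝ → ℝ} (ha : PerC2 a a1 a2) (hb : PerC2 b b1 b2)
    {α : ℝ} (hα : α ∈ Ioo (0:ℝ) 1) (p : ℕ) {l : ℝ} (hl : 0 < l) :
    ((3 : ℝ) ^ (p + 1)) ^ (-α) * (en a b / 2) -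
      incConst α * ((3 : ℝ) ^ (p + 1)) ^ (-α) *
        (5 / 4 * ((l * en a b + l⁻¹ * en a1 b1) / 3 ^ (p + 1))) ≤
    pint (fun y => (cos (3 ^ (p + 1) * (y + step (p + 1) / 2)) *
      (weierstrassShear α (y + step (p + 1)) - weierstrassShear α y)) * (a y ^ 2 + b y ^ 2)) := by
  have i1 := ha.c0; have i4 := hb.c0
  set θ := step (p + 1) / 2 with hθ
  set B := l * en a b + l⁻¹ * en a1 b1 with hB
  have hE := en_nonneg a b
  have hB0 : 0 ≤ B := by
    have := en_nonneg a1 b1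
    positivity
  set N : ℝ := 3 ^ (p + 1) with hN
  have hN0 : 0 < N := by positivity
  set J : ℕ → ℝ := fun j => pint (fun y => cos (N * (y + θ)) * cos (3 ^ (j + 1) * (y + θ)) *
    (a y ^ 2 + b y ^ 2)) with hJ
  have e : pint (fun y => (cos (N * (y + θ)) *
      (weierstrassShear α (y + step (p + 1)) - weierstrassShear α y)) * (a y ^ 2 + b y ^ 2))
      = ∑ j ∈ Finset.range (p + 1), amp α (p + 1) j * J j := by
    simp only [hJ, ← pint_const_mul]
    unfold pint
    rw [← intervalIntegral.integral_finsetSum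
      (fun j _ => Continuous.intervalIntegrable (by fun_prop) _ _)]
    congr 1
    funext y
    beta_reduce
    rw [weier_increment hα.1, Finset.mul_sum, Finset.sum_mul]
    refine Finset.sum_congr rfl (fun j _ => ?_)
    ring
  have hlow : ∀ j ∈ Finset.range p, |J j| ≤ 5 / 4 * (B / N) := by
    intro j hj
    rw [Finset.mem_range] at hj
    have hq : 3 * 3 ^ (j + 1) ≤ 3 ^ (p + 1) := by
      rw [← pow_succ']
      exact Nat.pow_le_pow_right (by norm_num) (by omega)
    have hq1 : 0 < 3 ^ (j + 1) := by positivity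
    have hqR : 3 * (3 : ℝ) ^ (j + 1) ≤ N := by rw [hN]; exact_mod_cast hq
    have o1 := osc_le ha hb (ω := 3 ^ (p + 1) - 3 ^ (j + 1)) (by omega) θ hl
    have o2 := osc_le ha hb (ω := 3 ^ (p + 1) + 3 ^ (j + 1)) (by omega) θ hl
    rw [Nat.cast_sub (by omega)] at o1
    push_cast at o1 o2
    rw [← hN, ← hB] at o1 o2
    have eJ : J j = 1 / 2 * pint (fun y => cos ((N - 3 ^ (j + 1)) * (y + θ)) *
        (a y ^ 2 + b y ^ 2)) + 1 / 2 * pint (fun y => cos ((N + 3 ^ (j + 1)) * (y + θ)) *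
        (a y ^ 2 + b y ^ 2)) := by
      rw [← pint_const_mul, ← pint_const_mul, ← pint_add (by fun_prop) (by fun_prop)]
      simp only [hJ]
      congr 1
      funext y
      rw [sub_mul, add_mul, cos_sub, cos_add]
      ring
    have hr : (0:ℝ) < 3 ^ (j + 1) := by positivity
    have b1 : (N - 3 ^ (j + 1))⁻¹ * B ≤ 3 / 2 * (B / N) := by
      have : (N - 3 ^ (j + 1))⁻¹ ≤ (2 / 3 * N)⁻¹ :=
        inv_anti₀ (by positivity) (by linarith)
      refine (mul_le_mul_of_nonneg_right this hB0).trans (le_of_eq ?_)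
      field_simp
    have b2 : (N + 3 ^ (j + 1))⁻¹ * B ≤ B / N := by
      have : (N + 3 ^ (j + 1))⁻¹ ≤ N⁻¹ := inv_anti₀ (by positivity) (by linarith)
      refine (mul_le_mul_of_nonneg_right this hB0).trans (le_of_eq ?_)
      field_simp
    rw [eJ]
    refine (abs_add_le _ _).trans ?_
    rw [abs_mul, abs_mul, abs_of_pos (by norm_num : (0:ℝ) < 1 / 2)]
    linarith
  have htop : en a b / 2 - 5 / 4 * (B / N) ≤ J p := by
    have o1 := osc_le ha hb (ω := 2 * 3 ^ (p + 1)) (by positivity) θ hl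
    push_cast at o1
    rw [← hN, ← hB] at o1
    have eJ : J p = 1 / 2 * en a b + 1 / 2 * pint (fun y => cos (2 * N * (y + θ)) *
        (a y ^ 2 + b y ^ 2)) := by
      unfold en
      rw [← pint_const_mul, ← pint_const_mul, ← pint_add (by fun_prop) (by fun_prop)]
      simp only [hJ, ← hN]
      congr 1
      funext y
      rw [mul_assoc 2 N, cos_two_mul]
      ring
    have b1 : (2 * N)⁻¹ * B = 1 / 2 * (B / N) := by field_simp
    have b2 : 0 ≤ B / N := by positivity
    rw [b1] at o1
    rw [eJ]
    linarith [(abs_le.1 o1).1]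
  rw [e, Finset.sum_range_succ]
  have hs := sum_abs_amp_le hα.2 (p + 1)
  rw [Finset.sum_range_succ] at hs
  have h1 : -((∑ j ∈ Finset.range p, |amp α (p + 1) j|) * (5 / 4 * (B / N))) ≤
      ∑ j ∈ Finset.range p, amp α (p + 1) j * J j := by
    rw [Finset.sum_mul, ← Finset.sum_neg_distrib]
    refine Finset.sum_le_sum (fun j hj => ?_)
    have : |amp α (p + 1) j * J j| ≤ |amp α (p + 1) j| * (5 / 4 * (B / N)) := by
      rw [abs_mul]
      exact mul_le_mul_of_nonneg_left (hlow j hj) (abs_nonneg _)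
    exact (abs_le.1 this).1
  have hap : 0 ≤ amp α (p + 1) p := by rw [amp_top]; positivity
  have h2 : amp α (p + 1) p * (en a b / 2 - 5 / 4 * (B / N)) ≤ amp α (p + 1) p * J p :=
    mul_le_mul_of_nonneg_left htop hap
  have h3 : N ^ (-α) * (en a b / 2) ≤ amp α (p + 1) p * (en a b / 2) := by
    refine mul_le_mul_of_nonneg_right ?_ (by positivity)
    rw [amp_top]
    refine le_mul_of_one_le_right (by positivity) ?_
    rw [Real.one_le_sqrt]; norm_num
  rw [abs_of_nonneg hap] at hs
  have h4 := mul_le_mul_of_nonneg_right hs (by positivity : 0 ≤ 5 / 4 * (B / N))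
  rw [← hN] at h4
  linarith

lemma increment_abs_le {α : ℝ} (hα : α ∈ Ioo (0:ℝ) 1) (n : ℕ) (y : ℝ) :
    |weierstrassShear α (y + step n) - weierstrassShear α y| ≤
      incConst α * ((3 : ℝ) ^ n) ^ (-α) := by
  rw [weier_increment hα.1]
  refine (Finset.abs_sum_le_sum_abs _ _).trans (le_trans ?_ (sum_abs_amp_le hα.2 n))
  refine Finset.sum_le_sum (fun j _ => ?_)
  rw [abs_mul]
  exact mul_le_of_le_one_right (abs_nonneg _) (abs_cos_le_one _)

/-! ### The Lyapunov functional -/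

/-- The coefficient of the energy in the Lyapunov functional. -/
def lyaConst (α : ℝ) : ℝ := 2 + 10 + 675 * incConst α ^ 2

/-- The multiplier `cos (3^(p+1) (y + h/2))`, `h = step (p+1)`, in phase with the top frequency of
the increment of `u`. -/
def mult (p : ℕ) (y : ℝ) : ℝ := cos (3 ^ (p + 1) * (y + step (p + 1) / 2))

/-- The Lyapunov functional: the energy corrected by the correlation at distance
`step (p+1)`. -/
def lya (α : ℝ) (p : ℕ) (k : ℝ) (a b : ℝ → ℝ) : ℝ :=
  lyaConst α * en a b + k⁻¹ * corr (mult p) (step (p + 1)) a b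

lemma lya_bounds {α : ℝ} {a b : ℝ → ℝ} (ha : Continuous a) (hb : Continuous b)
    (pa : ∀ y, a (y + 2 * π) = a y) (pb : ∀ y, b (y + 2 * π) = b y) (p : ℕ) {k : ℝ}
    (hk : 1 ≤ |k|) :
    (lyaConst α - 1) * en a b ≤ lya α p k a b ∧ lya α p k a b ≤ (lyaConst α + 1) * en a b := by
  have h := corr_le ha hb (φ := mult p) (by unfold mult; fun_prop) pa pb
    (fun y => abs_cos_le_one _) (step (p + 1))
  have h2 : |k⁻¹ * corr (mult p) (step (p + 1)) a b| ≤ en a b := by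
    rw [abs_mul, abs_inv]
    exact (mul_le_of_le_one_left (abs_nonneg _) (inv_le_one_of_one_le₀ hk)).trans h
  rw [abs_le] at h2
  unfold lya
  constructor <;> linarith

/-- The differential inequality for the Lyapunov functional. The left-hand side is its time
derivative along a solution. -/
lemma lya_deriv_le {a a1 a2 b b1 b2 : ℝ → ℝ} (ha : PerC2 a a1 a2) (hb : PerC2 b b1 b2)
    {α : ℝ} (hα : α ∈ Ioo (0:ℝ) 1) (p : ℕ) {k m κ : ℝ} (hk : 1 ≤ |k|) (hm : 0 ≤ m) (hκ : 0 < κ)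
    (hκ1 : κ * (3 ^ (p + 1)) ^ 2 ≤ ((3:ℝ) ^ (p + 1)) ^ (-α))
    (hκ2 : ((3:ℝ) ^ (p + 1)) ^ (-α) ≤ 27 * (κ * (3 ^ (p + 1)) ^ 2)) {at' bt : ℝ → ℝ}
    (hat : ∀ y, at' y = -k * weierstrassShear α y * b y - m * a y + κ * a2 y)
    (hbt : ∀ y, bt y = k * weierstrassShear α y * a y - m * b y + κ * b2 y) :
    lyaConst α * pint (fun y => 2 * (a y * at' y + b y * bt y))
      + k⁻¹ * pint (fun y => mult p y *
        ((at' (y + step (p + 1)) * b y + a (y + step (p + 1)) * bt y)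
        - (bt (y + step (p + 1)) * a y + b (y + step (p + 1)) * at' y)))
      ≤ - (((3:ℝ) ^ (p + 1)) ^ (-α) / (8 * (lyaConst α + 1))) * lya α p k a b := by
  have hu := continuous_weier hα.1
  have hS := incConst_pos hα.2
  set S := incConst α with hSd
  set h := step (p + 1) with hh
  have hh0 : 0 < h := step_pos _
  have hlow := fun l hl => increment_lower ha hb hα p (l := l) hl
  set N : ℝ := 3 ^ (p + 1) with hN
  have hN0 : 0 < N := by positivity
  have hhN : h = 2 * π / (3 * N) := by
    rw [hh, hN]; unfold step; rw [pow_succ 3 (p + 1), mul_comm (3:ℝ)]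
  set P := N ^ (-α) with hP
  have hP0 : 0 < P := by positivity
  have hφ : ∀ y, HasDerivAt (mult p) (-(sin (N * (y + h / 2)) * N)) y := by
    intro y
    have := (((hasDerivAt_id y).add_const (h / 2)).const_mul N).cos
    change HasDerivAt (fun y => cos (N * (y + h / 2))) _ y
    simpa using this
  have hφc : Continuous (mult p) := by unfold mult; fun_prop
  have pφ : mult p (2 * π) = mult p 0 := by
    unfold mult
    rw [show (3:ℝ) ^ (p + 1) * (2 * π + step (p + 1) / 2) =
      3 ^ (p + 1) * (0 + step (p + 1) / 2) + ((3 ^ (p + 1) : ℕ) : ℝ) * (2 * π) by push_cast; ring]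
    exact cos_add_nat_mul_two_pi _ _
  have hφb : ∀ y, |mult p y| ≤ 1 := fun y => abs_cos_le_one _
  have hE := en_nonneg a b
  have hD := en_nonneg a1 b1
  have e1 := energy_identity (u := weierstrassShear α) ha hb k m κ
  simp only [← hat, ← hbt] at e1
  -- the weight `N / 8` makes the diffusive error in the energy `κ N² E / 8 ≤ P E / 8`, half of the
  -- gain `P E / 4`; the remaining error is absorbed by the dissipation `κ D`
  have e2 := corr_deriv ha hb hu hφ (by fun_prop) pφ hφb (N := N)
    (fun y => by
      rw [abs_neg, abs_mul, abs_of_pos hN0]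
      exact mul_le_of_le_one_left hN0.le (abs_sin_le_one _))
    k m h hκ.le (l := N / 8) (by positivity) hat hbt
  -- with the weight `N / (10 S)` the errors in the gain `P E / 2` are at most `P E / 4`, up to
  -- multiples of the dissipation `κ D`
  have hl : 0 < N / (10 * S) := by positivity
  have e3 := hlow _ hl
  have e4 := corrRe_sub_le ha hb (ψ := fun y => mult p y *
    (weierstrassShear α (y + h) - weierstrassShear α y)) (by fun_prop) (W := S * P)
    (fun y => by
      rw [abs_mul]
      calc _ ≤ 1 * (S * P) := mul_le_mul (hφb y) (increment_abs_le hα _ y)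
            (abs_nonneg _) zero_le_one
        _ = _ := one_mul _) hh0.le hl
  set G := corrRe (fun y => mult p y * (weierstrassShear α (y + h) - weierstrassShear α y)) h a b
    with hG
  set F := corr (mult p) h a b with hF
  set E := en a b with hEd
  set D := en a1 b1 with hDd
  change _ ≤ pint (fun y => (mult p y * (weierstrassShear α (y + h) - weierstrassShear α y)) *
    (a y ^ 2 + b y ^ 2)) at e3
  set X := pint (fun y => (mult p y * (weierstrassShear α (y + h) - weierstrassShear α y)) *
    (a y ^ 2 + b y ^ 2))
  set Fd := pint (fun y => mult p y * ((at' (y + h) * b y + a (y + h) * bt y)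
        - (bt (y + h) * a y + b (y + h) * at' y)))
  have eB : (N / (10 * S) * E + (N / (10 * S))⁻¹ * D) = N * (E / (10 * S) + 10 * S * D / N ^ 2) := by
    field_simp
  have hDN : P * (D / N ^ 2) ≤ 27 * κ * D := by
    have : P / N ^ 2 ≤ 27 * κ := by
      rw [div_le_iff₀ (by positivity)]
      linarith
    calc P * (D / N ^ 2) = (P / N ^ 2) * D := by ring
      _ ≤ _ := mul_le_mul_of_nonneg_right this hD
  have hGlow : P * E / 4 - 675 * S ^ 2 * κ * D ≤ G := by
    rw [eB] at e3 e4
    have hY : 0 ≤ E / (10 * S) + 10 * S * D / N ^ 2 := by positivity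
    have e4' : X - 5 / 4 * (S * P * (E / (10 * S) + 10 * S * D / N ^ 2)) ≤ G := by
      have h1 : h * (S * P * (N * (E / (10 * S) + 10 * S * D / N ^ 2) / 2)) =
          π / 3 * (S * P * (E / (10 * S) + 10 * S * D / N ^ 2)) := by
        rw [hhN]; field_simp
      rw [h1] at e4
      have h2 : π / 3 * (S * P * (E / (10 * S) + 10 * S * D / N ^ 2)) ≤
          5 / 4 * (S * P * (E / (10 * S) + 10 * S * D / N ^ 2)) := by
        refine mul_le_mul_of_nonneg_right ?_ (by positivity)
        linarith [Real.pi_lt_d2]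
      linarith [(abs_le.1 e4).1]
    have e3' : P * (E / 2) - 5 / 4 * (S * P * (E / (10 * S) + 10 * S * D / N ^ 2)) ≤ X := by
      rw [← hSd] at e3
      refine le_trans (le_of_eq ?_) e3
      field_simp
    have h5 : S * P * (E / (10 * S) + 10 * S * D / N ^ 2) =
        P * E / 10 + 10 * S ^ 2 * (P * (D / N ^ 2)) := by
      field_simp
    have h6 := mul_le_mul_of_nonneg_left hDN (by positivity : 0 ≤ 25 * S ^ 2)
    linarith
  have hR : κ * (2 * D + N * (N / 8 * E + (N / 8)⁻¹ * D)) ≤ 10 * κ * D + P * E / 8 := by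
    have h1 : κ * (2 * D + N * (N / 8 * E + (N / 8)⁻¹ * D)) =
        10 * κ * D + (κ * N ^ 2) * E / 8 := by
      field_simp
      ring
    rw [h1]
    have := mul_le_mul_of_nonneg_right hκ1 hE
    linarith
  have hk0 : k ≠ 0 := by
    rintro rfl
    norm_num at hk
  have hFd : k⁻¹ * Fd ≤ - 2 * m * (k⁻¹ * F) - G + (10 * κ * D + P * E / 8) := by
    have h1 : |k⁻¹ * (Fd + 2 * m * F + k * G)| ≤ 10 * κ * D + P * E / 8 := by
      rw [abs_mul, abs_inv]
      exact (mul_le_of_le_one_left (abs_nonneg _) (inv_le_one_of_one_le₀ hk)).trans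
        (e2.trans hR)
    have h2 : k⁻¹ * (Fd + 2 * m * F + k * G) = k⁻¹ * Fd + 2 * m * (k⁻¹ * F) + G := by
      field_simp
    rw [h2] at h1
    linarith [(abs_le.1 h1).2]
  obtain ⟨hb1, hb2⟩ := lya_bounds (α := α) ha.c0 hb.c0 ha.per hb.per p hk
  have hC : lyaConst α = 2 + 10 + 675 * S ^ 2 := rfl
  have hC1 : 0 ≤ lyaConst α - 1 := by rw [hC]; nlinarith [sq_nonneg S]
  have hL0 : 0 ≤ lya α p k a b := le_trans (mul_nonneg hC1 hE) hb1
  have hlya : lya α p k a b = lyaConst α * E + k⁻¹ * F := rfl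
  have h7 : P / (8 * (lyaConst α + 1)) * lya α p k a b ≤ P * E / 8 := by
    have hc : 0 < lyaConst α + 1 := by linarith
    calc _ ≤ P / (8 * (lyaConst α + 1)) * ((lyaConst α + 1) * E) :=
          mul_le_mul_of_nonneg_left hb2 (by positivity)
      _ = _ := by field_simp
  have h8 : 0 ≤ 2 * m * lya α p k a b := by positivity
  rw [hlya] at h8
  have h9 : 0 ≤ κ * D := by positivity
  have h10 : 0 ≤ S ^ 2 * (κ * D) := by positivity
  rw [e1]
  have h11 : lyaConst α * (-2 * m * E - 2 * κ * D) + k⁻¹ * Fd ≤ - (P * E / 8) := by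
    have h12 : lyaConst α * (κ * D) = 12 * (κ * D) + 675 * (S ^ 2 * (κ * D)) := by
      rw [hC]; ring
    linarith
  linarith

/-! ### Decay of a single mode -/

/-- The real and imaginary parts `a`, `b` (up to sign) of a Fourier mode of frequency `k` in `x`
of a solution, with damping `m` and viscosity `κ`: `a` and `b` are continuous up to `t = 0`,
and for `t > 0` they solve the coupled system `∂ₜa = -k u b - m a + κ ∂ᵧᵧa`,
`∂ₜb = k u a - m b + κ ∂ᵧᵧb`. The derivatives are carried as explicit functions. -/
structure IsMode (u : ℝ → ℝ) (k m κ : ℝ) (a at' a1 a2 b bt b1 b2 : ℝ → ℝ → ℝ) : Prop where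
  ca : ContinuousOn (fun p : ℝ × ℝ => a p.1 p.2) (Ici 0 ×ˢ univ)
  cb : ContinuousOn (fun p : ℝ × ℝ => b p.1 p.2) (Ici 0 ×ˢ univ)
  pa : ∀ t y, a t (y + 2 * π) = a t y
  pb : ∀ t y, b t (y + 2 * π) = b t y
  ha : ∀ t, 0 < t → PerC2 (a t) (a1 t) (a2 t)
  hb : ∀ t, 0 < t → PerC2 (b t) (b1 t) (b2 t)
  da : ∀ t, 0 < t → ∀ y, HasDerivAt (fun s => a s y) (at' t y) t
  db : ∀ t, 0 < t → ∀ y, HasDerivAt (fun s => b s y) (bt t y) t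
  cat : ContinuousOn (fun p : ℝ × ℝ => at' p.1 p.2) (Ioi 0 ×ˢ univ)
  cbt : ContinuousOn (fun p : ℝ × ℝ => bt p.1 p.2) (Ioi 0 ×ˢ univ)
  ea : ∀ t, 0 < t → ∀ y, at' t y = -k * u y * b t y - m * a t y + κ * a2 t y
  eb : ∀ t, 0 < t → ∀ y, bt t y = k * u y * a t y - m * b t y + κ * b2 t y

lemma continuousOn_shift {a : ℝ → ℝ → ℝ} {S : Set ℝ}
    (ha : ContinuousOn (fun p : ℝ × ℝ => a p.1 p.2) (S ×ˢ univ)) (h : ℝ) :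
    ContinuousOn (fun p : ℝ × ℝ => a p.1 (p.2 + h)) (S ×ˢ univ) :=
  ha.comp (f := fun p : ℝ × ℝ => (p.1, p.2 + h)) (by fun_prop) (fun p hp => ⟨hp.1, mem_univ _⟩)

namespace IsMode
variable {u : ℝ → ℝ} {k m κ : ℝ} {a at' a1 a2 b bt b1 b2 : ℝ → ℝ → ℝ}

lemma c0 (H : IsMode u k m κ a at' a1 a2 b bt b1 b2) {t : ℝ} (ht : 0 ≤ t) :
    Continuous (a t) ∧ Continuous (b t) := by
  constructor
  · exact H.ca.comp_continuous (f := fun y : ℝ => (t, y)) (by fun_prop) (fun y => ⟨ht, mem_univ _⟩)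
  · exact H.cb.comp_continuous (f := fun y : ℝ => (t, y)) (by fun_prop) (fun y => ⟨ht, mem_univ _⟩)

lemma continuousOn_en (H : IsMode u k m κ a at' a1 a2 b bt b1 b2) :
    ContinuousOn (fun t => en (a t) (b t)) (Ici 0) :=
  continuousOn_pint_param (g := fun t y => a t y ^ 2 + b t y ^ 2) ((H.ca.pow 2).add (H.cb.pow 2))

lemma continuousOn_corr (H : IsMode u k m κ a at' a1 a2 b bt b1 b2) {φ : ℝ → ℝ}
    (hφ : Continuous φ) (h : ℝ) : ContinuousOn (fun t => corr φ h (a t) (b t)) (Ici 0) :=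
  continuousOn_pint_param
    (g := fun t y => φ y * (a t (y + h) * b t y - b t (y + h) * a t y))
    ((Continuous.continuousOn (by fun_prop)).mul
      (((continuousOn_shift H.ca h).mul H.cb).sub ((continuousOn_shift H.cb h).mul H.ca)))

lemma hasDerivAt_en (H : IsMode u k m κ a at' a1 a2 b bt b1 b2) {t : ℝ} (ht : 0 < t) :
    HasDerivAt (fun t => en (a t) (b t))
      (pint (fun y => 2 * (a t y * at' t y + b t y * bt t y))) t := by
  have hsub : Ioi (0:ℝ) ×ˢ (univ : Set ℝ) ⊆ Ici 0 ×ˢ univ := prod_mono Ioi_subset_Ici_self le_rfl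
  refine hasDerivAt_pint (g := fun t y => a t y ^ 2 + b t y ^ 2)
    (g' := fun t y => 2 * (a t y * at' t y + b t y * bt t y)) isOpen_Ioi
    (fun s hs => ?_) (fun s hs y => ?_) ?_ ht
  · obtain ⟨h1, h2⟩ := H.c0 (le_of_lt hs)
    fun_prop
  · have := ((H.da s hs y).fun_pow 2).fun_add ((H.db s hs y).fun_pow 2)
    refine this.congr_deriv ?_
    simp
    ring
  · exact continuousOn_const.mul
      (((H.ca.mono hsub).mul H.cat).add ((H.cb.mono hsub).mul H.cbt))

lemma hasDerivAt_corr (H : IsMode u k m κ a at' a1 a2 b bt b1 b2) {φ : ℝ → ℝ}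
    (hφ : Continuous φ) (h : ℝ) {t : ℝ} (ht : 0 < t) :
    HasDerivAt (fun t => corr φ h (a t) (b t))
      (pint (fun y => φ y * ((at' t (y + h) * b t y + a t (y + h) * bt t y)
        - (bt t (y + h) * a t y + b t (y + h) * at' t y)))) t := by
  have hsub : Ioi (0:ℝ) ×ˢ (univ : Set ℝ) ⊆ Ici 0 ×ˢ univ := prod_mono Ioi_subset_Ici_self le_rfl
  have ha := H.ca.mono hsub
  have hb := H.cb.mono hsub
  refine hasDerivAt_pint (g := fun t y => φ y * (a t (y + h) * b t y - b t (y + h) * a t y))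
    (g' := fun t y => φ y * ((at' t (y + h) * b t y + a t (y + h) * bt t y)
        - (bt t (y + h) * a t y + b t (y + h) * at' t y))) isOpen_Ioi
    (fun s hs => ?_) (fun s hs y => ?_) ?_ ht
  · obtain ⟨h1, h2⟩ := H.c0 (le_of_lt hs)
    fun_prop
  · exact (((H.da s hs (y + h)).fun_mul (H.db s hs y)).fun_sub
      ((H.db s hs (y + h)).fun_mul (H.da s hs y))).const_mul (φ y)
  · exact (Continuous.continuousOn (by fun_prop)).mul
      ((((continuousOn_shift H.cat h).mul hb).add ((continuousOn_shift ha h).mul H.cbt)).sub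
      (((continuousOn_shift H.cbt h).mul ha).add ((continuousOn_shift hb h).mul H.cat)))

lemma en_le (H : IsMode u k m κ a at' a1 a2 b bt b1 b2) (hm : 0 ≤ m) (hκ : 0 ≤ κ)
    {t : ℝ} (ht : 0 ≤ t) : en (a t) (b t) ≤ en (a 0) (b 0) := by
  refine antitoneOn_of_deriv_nonpos (convex_Ici 0) H.continuousOn_en ?_ ?_
    (mem_Ici.2 le_rfl) ht ht
  · rw [interior_Ici]
    exact fun s hs => (H.hasDerivAt_en hs).differentiableAt.differentiableWithinAt
  · rw [interior_Ici]
    intro s hs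
    rw [(H.hasDerivAt_en hs).deriv]
    have e := energy_identity (u := u) (H.ha s hs) (H.hb s hs) k m κ
    simp only [← H.ea s hs, ← H.eb s hs] at e
    rw [e]
    have h1 := mul_nonneg hm (en_nonneg (a s) (b s))
    have h2 := mul_nonneg hκ (en_nonneg (a1 s) (b1 s))
    linarith

/-- Exponential decay of a mode of frequency `|k| ≥ 1`, from Grönwall's inequality for the
Lyapunov functional. -/
lemma en_decay {α : ℝ} (hα : α ∈ Ioo (0:ℝ) 1)
    (H : IsMode (weierstrassShear α) k m κ a at' a1 a2 b bt b1 b2)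
    (p : ℕ) (hk : 1 ≤ |k|) (hm : 0 ≤ m) (hκ : 0 < κ)
    (hκ1 : κ * (3 ^ (p + 1)) ^ 2 ≤ ((3:ℝ) ^ (p + 1)) ^ (-α))
    (hκ2 : ((3:ℝ) ^ (p + 1)) ^ (-α) ≤ 27 * (κ * (3 ^ (p + 1)) ^ 2)) {t : ℝ} (ht : 0 ≤ t) :
    en (a t) (b t) ≤ (lyaConst α + 1) *
      exp (-(((3:ℝ) ^ (p + 1)) ^ (-α) / (8 * (lyaConst α + 1))) * t) * en (a 0) (b 0) := by
  set r := ((3:ℝ) ^ (p + 1)) ^ (-α) / (8 * (lyaConst α + 1)) with hr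
  have hφ : Continuous (mult p) := by unfold mult; fun_prop
  have hC : 12 ≤ lyaConst α := by unfold lyaConst; nlinarith [sq_nonneg (incConst α)]
  have hd : ∀ s, 0 < s → HasDerivAt (fun s => exp (r * s) * lya α p k (a s) (b s))
      (exp (r * s) * r * lya α p k (a s) (b s) + exp (r * s) *
        (lyaConst α * pint (fun y => 2 * (a s y * at' s y + b s y * bt s y))
      + k⁻¹ * pint (fun y => mult p y *
        ((at' s (y + step (p + 1)) * b s y + a s (y + step (p + 1)) * bt s y)
        - (bt s (y + step (p + 1)) * a s y + b s (y + step (p + 1)) * at' s y))))) s := by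
    intro s hs
    have h1 : HasDerivAt (fun s => exp (r * s)) (exp (r * s) * r) s := by
      simpa using ((hasDerivAt_id s).const_mul r).exp
    exact h1.mul (((H.hasDerivAt_en hs).const_mul _).add
      ((H.hasDerivAt_corr hφ (step (p + 1)) hs).const_mul _))
  have hanti : AntitoneOn (fun s => exp (r * s) * lya α p k (a s) (b s)) (Ici 0) := by
    refine antitoneOn_of_deriv_nonpos (convex_Ici 0) ?_ ?_ ?_
    · exact (Continuous.continuousOn (by fun_prop)).mul
        ((continuousOn_const.mul H.continuousOn_en).add
          (continuousOn_const.mul (H.continuousOn_corr hφ _)))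
    · rw [interior_Ici]
      exact fun s hs => (hd s hs).differentiableAt.differentiableWithinAt
    · rw [interior_Ici]
      intro s hs
      rw [(hd s hs).deriv]
      have := lya_deriv_le (H.ha s hs) (H.hb s hs) hα p hk hm hκ hκ1 hκ2 (H.ea s hs) (H.eb s hs)
      rw [← hr] at this
      have h2 := mul_le_mul_of_nonneg_left this (exp_pos (r * s)).le
      linarith
  have h0 := hanti (mem_Ici.2 le_rfl) ht ht
  simp only [mul_zero, exp_zero, one_mul] at h0
  obtain ⟨l1, -⟩ := lya_bounds (α := α) (H.c0 ht).1 (H.c0 ht).2 (H.pa t) (H.pb t) p hk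
  obtain ⟨-, l2⟩ := lya_bounds (α := α) (H.c0 le_rfl).1 (H.c0 le_rfl).2 (H.pa 0) (H.pb 0) p hk
  have hE := en_nonneg (a t) (b t)
  have h3 : exp (r * t) * en (a t) (b t) ≤ (lyaConst α + 1) * en (a 0) (b 0) := by
    refine le_trans ?_ (h0.trans l2)
    refine mul_le_mul_of_nonneg_left (le_trans ?_ l1) (exp_pos _).le
    exact le_mul_of_one_le_left hE (by linarith)
  calc en (a t) (b t) = exp (-r * t) * (exp (r * t) * en (a t) (b t)) := by
        rw [← mul_assoc, ← exp_add]; simp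
    _ ≤ exp (-r * t) * ((lyaConst α + 1) * en (a 0) (b 0)) :=
        mul_le_mul_of_nonneg_left h3 (exp_pos _).le
    _ = _ := by ring

end IsMode

/-! ### Fourier modes of a solution -/

/-- The pairing `∫ ρ(t,x,y) ψ(x) dx` of a space-time function with a weight in `x`. -/
def mode (ρ : ℝ → ℝ → ℝ → ℝ) (ψ : ℝ → ℝ) (t y : ℝ) : ℝ := pint (fun x => ρ t x y * ψ x)

lemma PerC2.ibp {a a1 a2 b b1 b2 : ℝ → ℝ} (ha : PerC2 a a1 a2) (hb : PerC2 b b1 b2) :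
    pint (fun x => a1 x * b x) = - pint (fun x => a x * b1 x) := by
  have i1 := ha.c0; have i2 := ha.c1; have i4 := hb.c0; have i5 := hb.c1
  have hz : pint (fun x => a1 x * b x + a x * b1 x) = 0 := by
    refine pint_deriv_eq_zero (P := fun x => a x * b x) (fun x => (ha.d1 x).mul (hb.d1 x))
      (by fun_prop) ?_
    have h1 := ha.per 0; have h3 := hb.per 0
    simp only [zero_add] at h1 h3
    simp only [h1, h3]
  rw [pint_add (by fun_prop) (by fun_prop)] at hz
  linarith

lemma PerC2.ibp2 {a a1 a2 b b1 b2 : ℝ → ℝ} (ha : PerC2 a a1 a2) (hb : PerC2 b b1 b2) :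
    pint (fun x => a2 x * b x) = pint (fun x => a x * b2 x) := by
  have i1 := ha.c0; have i2 := ha.c1; have i4 := hb.c0; have i5 := hb.c1
  have i3 := ha.c2; have i6 := hb.c2
  have hz : pint (fun x => (a2 x * b x + a1 x * b1 x) - (a1 x * b1 x + a x * b2 x)) = 0 := by
    refine pint_deriv_eq_zero (P := fun x => a1 x * b x - a x * b1 x)
      (fun x => ((ha.d2 x).mul (hb.d1 x)).sub ((ha.d1 x).mul (hb.d2 x)))
      (by fun_prop) ?_
    have h1 := ha.per 0; have h3 := hb.per 0; have h2 := ha.per1 0; have h4 := hb.per1 0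
    simp only [zero_add] at h1 h2 h3 h4
    simp only [h1, h2, h3, h4]
  have e : (fun x => (a2 x * b x + a1 x * b1 x) - (a1 x * b1 x + a x * b2 x))
    = fun x => a2 x * b x - a x * b2 x := by funext x; ring
  rw [e, pint_sub (by fun_prop) (by fun_prop)] at hz
  linarith

/-- The first derivative of a periodic `C²` function is an average of the second one. -/
lemma PerC2.a1_eq {a a1 a2 : ℝ → ℝ} (ha : PerC2 a a1 a2) (y : ℝ) :
    a1 y = -(2 * π)⁻¹ * pint (fun s => (2 * π - s) * a2 (y + s)) := by
  have i3 := ha.c2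
  have hd : ∀ s, HasDerivAt (fun s => (2 * π - s) * a1 (y + s) + a (y + s))
      ((2 * π - s) * a2 (y + s)) s := by
    intro s
    have h1 : HasDerivAt (fun s : ℝ => 2 * π - s) (-1) s := by
      simpa using (hasDerivAt_id s).const_sub (2 * π)
    have := (h1.fun_mul ((ha.d2 (y + s)).comp_const_add y s)).fun_add
      ((ha.d1 (y + s)).comp_const_add y s)
    refine this.congr_deriv ?_
    ring
  unfold pint
  rw [intervalIntegral.integral_eq_sub_of_hasDerivAt (fun s _ => hd s)
    (Continuous.intervalIntegrable (by fun_prop) _ _), ha.per]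
  have := Real.pi_pos
  field_simp
  simp
  ring

namespace IsShearSolution
variable {δ κ : ℝ} {u : ℝ → ℝ} {ρ : ℝ → ℝ → ℝ → ℝ}

lemma perx (H : IsShearSolution δ κ u ρ) {t : ℝ} (ht : 0 < t) (y : ℝ) :
    PerC2 (fun x => ρ t x y) (fun x => deriv (fun a => ρ t a y) x)
      (fun x => deriv (fun a => deriv (fun b => ρ t b y) a) x) where
  per x := H.periodic_x t x y
  d1 x := (H.diff_x t ht x y).hasDerivAt
  d2 x := (H.diff_xx t ht x y).hasDerivAt
  c2 := H.cont_dxx.comp_continuous (f := fun x : ℝ => (t, x, y)) (by fun_prop) (fun _ => ht)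

lemma pery (H : IsShearSolution δ κ u ρ) {t : ℝ} (ht : 0 < t) (x : ℝ) :
    PerC2 (fun y => ρ t x y) (fun y => deriv (fun c => ρ t x c) y)
      (fun y => deriv (fun b => deriv (fun c => ρ t x c) b) y) where
  per y := H.periodic_y t x y
  d1 y := (H.diff_y t ht x y).hasDerivAt
  d2 y := (H.diff_yy t ht x y).hasDerivAt
  c2 := H.cont_dyy.comp_continuous (f := fun y : ℝ => (t, x, y)) (by fun_prop) (fun _ => ht)

lemma cont_yy (H : IsShearSolution δ κ u ρ) {t : ℝ} (ht : 0 < t) :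
    Continuous (fun p : ℝ × ℝ => deriv (fun b => deriv (fun c => ρ t p.2 c) b) p.1) :=
  H.cont_dyy.comp_continuous (f := fun p : ℝ × ℝ => (t, p.2, p.1)) (by fun_prop) (fun _ => ht)

lemma cont_y (H : IsShearSolution δ κ u ρ) {t : ℝ} (ht : 0 < t) :
    Continuous (fun p : ℝ × ℝ => deriv (fun c => ρ t p.2 c) p.1) := by
  have e : (fun p : ℝ × ℝ => deriv (fun c => ρ t p.2 c) p.1) = fun p : ℝ × ℝ =>
      -(2 * π)⁻¹ * pint (fun s => (2 * π - s) *
        deriv (fun b => deriv (fun c => ρ t p.2 c) b) (p.1 + s)) := by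
    funext p
    exact (H.pery ht p.2).a1_eq p.1
  rw [e]
  refine continuous_const.mul (continuous_pint_param (X := ℝ × ℝ) ?_)
  exact (Continuous.mul (by fun_prop)
    ((H.cont_yy ht).comp (g := fun p : ℝ × ℝ => deriv (fun b => deriv (fun c => ρ t p.2 c) b) p.1)
      (f := fun q : (ℝ × ℝ) × ℝ => (q.1.1 + q.2, q.1.2)) (by fun_prop)))

lemma cont_yx (H : IsShearSolution δ κ u ρ) {t : ℝ} (ht : 0 ≤ t) :
    Continuous (fun p : ℝ × ℝ => ρ t p.2 p.1) :=
  H.cont.comp_continuous (f := fun p : ℝ × ℝ => (t, p.2, p.1)) (by fun_prop) (fun _ => ht)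

lemma mode_continuousOn (H : IsShearSolution δ κ u ρ) {ψ : ℝ → ℝ} (hψ : Continuous ψ) :
    ContinuousOn (fun p : ℝ × ℝ => mode ρ ψ p.1 p.2) (Ici 0 ×ˢ univ) := by
  refine continuousOn_pint_param (X := ℝ × ℝ) (g := fun p x => ρ p.1 x p.2 * ψ x) ?_
  refine ContinuousOn.mul ?_ (Continuous.continuousOn (by fun_prop))
  exact H.cont.comp (f := fun q : (ℝ × ℝ) × ℝ => (q.1.1, q.2, q.1.2)) (by fun_prop)
    (fun q hq => hq.1.1)

lemma mode_dt_continuousOn (H : IsShearSolution δ κ u ρ) {ψ : ℝ → ℝ} (hψ : Continuous ψ) :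
    ContinuousOn (fun p : ℝ × ℝ => mode (fun t x y => deriv (fun s => ρ s x y) t) ψ p.1 p.2)
      (Ioi 0 ×ˢ univ) := by
  refine continuousOn_pint_param (X := ℝ × ℝ)
    (g := fun p x => deriv (fun s => ρ s x p.2) p.1 * ψ x) ?_
  refine ContinuousOn.mul ?_ (Continuous.continuousOn (by fun_prop))
  exact H.cont_dt.comp (f := fun q : (ℝ × ℝ) × ℝ => (q.1.1, q.2, q.1.2)) (by fun_prop)
    (fun q hq => hq.1.1)

lemma mode_hasDerivAt (H : IsShearSolution δ κ u ρ) {ψ : ℝ → ℝ} (hψ : Continuous ψ)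
    {t : ℝ} (ht : 0 < t) (y : ℝ) :
    HasDerivAt (fun s => mode ρ ψ s y) (mode (fun t x y => deriv (fun s => ρ s x y) t) ψ t y) t := by
  refine hasDerivAt_pint (g := fun s x => ρ s x y * ψ x)
    (g' := fun s x => deriv (fun s => ρ s x y) s * ψ x) isOpen_Ioi (fun s hs => ?_)
    (fun s hs x => (H.diff_t s hs x y).hasDerivAt.mul_const _) ?_ ht
  · exact (H.perx hs y).c0.mul hψ
  · refine ContinuousOn.mul ?_ (Continuous.continuousOn (by fun_prop))
    exact H.cont_dt.comp (f := fun q : ℝ × ℝ => (q.1, q.2, y)) (by fun_prop) (fun q hq => hq.1)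

lemma mode_perC2 (H : IsShearSolution δ κ u ρ) {ψ : ℝ → ℝ} (hψ : Continuous ψ)
    {t : ℝ} (ht : 0 < t) :
    PerC2 (mode ρ ψ t) (mode (fun t x y => deriv (fun c => ρ t x c) y) ψ t)
      (mode (fun t x y => deriv (fun b => deriv (fun c => ρ t x c) b) y) ψ t) where
  per y := by simp only [mode, H.periodic_y]
  d1 y := by
    refine hasDerivAt_pint (g := fun y x => ρ t x y * ψ x)
      (g' := fun y x => deriv (fun c => ρ t x c) y * ψ x) isOpen_univ (fun y _ => ?_)
      (fun y _ x => ((H.pery ht x).d1 y).mul_const _) ?_ (mem_univ y)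
    · exact (H.perx ht y).c0.mul hψ
    · exact ((H.cont_y ht).mul (by fun_prop)).continuousOn
  d2 y := by
    refine hasDerivAt_pint (g := fun y x => deriv (fun c => ρ t x c) y * ψ x)
      (g' := fun y x => deriv (fun b => deriv (fun c => ρ t x c) b) y * ψ x) isOpen_univ
      (fun y _ => ?_) (fun y _ x => ((H.pery ht x).d2 y).mul_const _) ?_ (mem_univ y)
    · exact ((H.cont_y ht).comp (f := fun x : ℝ => (y, x)) (by fun_prop)).mul hψ
    · exact ((H.cont_yy ht).mul (by fun_prop)).continuousOn
  c2 := continuous_pint_param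
      (g := fun y x => deriv (fun b => deriv (fun c => ρ t x c) b) y * ψ x)
      ((H.cont_yy ht).mul (by fun_prop))

lemma mode_pde (H : IsShearSolution δ κ u ρ) {ψ ψ1 ψ2 : ℝ → ℝ} (hψ : PerC2 ψ ψ1 ψ2)
    {t : ℝ} (ht : 0 < t) (y : ℝ) :
    mode (fun t x y => deriv (fun s => ρ s x y) t) ψ t y =
      u y * mode ρ ψ1 t y + κ * δ * mode ρ ψ2 t y +
        κ * mode (fun t x y => deriv (fun b => deriv (fun c => ρ t x c) b) y) ψ t y := by
  have hx := H.perx ht y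
  have i0 := hψ.c0
  have i1 := hx.c0; have i2 := hx.c1; have i3 := hx.c2
  have i4 : Continuous (fun x => deriv (fun b => deriv (fun c => ρ t x c) b) y) :=
    (H.cont_yy ht).comp (f := fun x : ℝ => (y, x)) (by fun_prop)
  have e : (fun x => deriv (fun s => ρ s x y) t * ψ x) = fun x =>
      ((-u y) * (deriv (fun a => ρ t a y) x * ψ x)
        + (κ * δ) * (deriv (fun a => deriv (fun b => ρ t b y) a) x * ψ x))
        + κ * (deriv (fun b => deriv (fun c => ρ t x c) b) y * ψ x) := by
    funext x
    have := H.pde t ht x y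
    linear_combination ψ x * this
  unfold mode
  rw [e, pint_add (by fun_prop) (by fun_prop), pint_add (by fun_prop) (by fun_prop),
    pint_const_mul, pint_const_mul, pint_const_mul, hx.ibp hψ, hx.ibp2 hψ]
  ring

end IsShearSolution

lemma perC2_cos (n : ℤ) : PerC2 (fun x => cos (n * x)) (fun x => -(n * sin (n * x)))
    (fun x => -(n ^ 2 * cos (n * x))) where
  per x := by rw [mul_add]; exact cos_add_int_mul_two_pi _ _
  d1 x := by
    have := ((hasDerivAt_id x).const_mul (n : ℝ)).cos
    refine this.congr_deriv ?_
    simp; ring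
  d2 x := by
    have := ((((hasDerivAt_id x).const_mul (n : ℝ)).sin).const_mul (n : ℝ)).fun_neg
    refine this.congr_deriv ?_
    simp; ring
  c2 := by fun_prop

lemma perC2_sin (n : ℤ) : PerC2 (fun x => sin (n * x)) (fun x => n * cos (n * x))
    (fun x => -(n ^ 2 * sin (n * x))) where
  per x := by rw [mul_add]; exact sin_add_int_mul_two_pi _ _
  d1 x := by
    have := ((hasDerivAt_id x).const_mul (n : ℝ)).sin
    refine this.congr_deriv ?_
    simp; ring
  d2 x := by
    have := (((hasDerivAt_id x).const_mul (n : ℝ)).cos).const_mul (n : ℝ)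
    refine this.congr_deriv ?_
    simp; ring
  c2 := by fun_prop

lemma mode_neg_mul (ρ : ℝ → ℝ → ℝ → ℝ) (c : ℝ) (ψ : ℝ → ℝ) (t y : ℝ) :
    mode ρ (fun x => -(c * ψ x)) t y = -c * mode ρ ψ t y := by
  unfold mode
  rw [← pint_const_mul]
  congr 1; funext x; ring

lemma mode_mul (ρ : ℝ → ℝ → ℝ → ℝ) (c : ℝ) (ψ : ℝ → ℝ) (t y : ℝ) :
    mode ρ (fun x => c * ψ x) t y = c * mode ρ ψ t y := by
  unfold mode
  rw [← pint_const_mul]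
  congr 1; funext x; ring

lemma IsShearSolution.isMode {δ κ : ℝ} {u : ℝ → ℝ} {ρ : ℝ → ℝ → ℝ → ℝ}
    (H : IsShearSolution δ κ u ρ) (n : ℤ) :
    IsMode u n (κ * δ * n ^ 2) κ (mode ρ (fun x => cos (n * x)))
      (mode (fun t x y => deriv (fun s => ρ s x y) t) (fun x => cos (n * x)))
      (mode (fun t x y => deriv (fun c => ρ t x c) y) (fun x => cos (n * x)))
      (mode (fun t x y => deriv (fun b => deriv (fun c => ρ t x c) b) y) (fun x => cos (n * x)))
      (mode ρ (fun x => sin (n * x)))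
      (mode (fun t x y => deriv (fun s => ρ s x y) t) (fun x => sin (n * x)))
      (mode (fun t x y => deriv (fun c => ρ t x c) y) (fun x => sin (n * x)))
      (mode (fun t x y => deriv (fun b => deriv (fun c => ρ t x c) b) y)
        (fun x => sin (n * x))) where
  ca := H.mode_continuousOn (by fun_prop)
  cb := H.mode_continuousOn (by fun_prop)
  pa t y := by simp only [mode, H.periodic_y]
  pb t y := by simp only [mode, H.periodic_y]
  ha t ht := H.mode_perC2 (by fun_prop) ht
  hb t ht := H.mode_perC2 (by fun_prop) ht
  da t ht y := H.mode_hasDerivAt (by fun_prop) ht y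
  db t ht y := H.mode_hasDerivAt (by fun_prop) ht y
  cat := H.mode_dt_continuousOn (by fun_prop)
  cbt := H.mode_dt_continuousOn (by fun_prop)
  ea t ht y := by
    rw [H.mode_pde (perC2_cos n) ht y, mode_neg_mul, mode_neg_mul]
    ring
  eb t ht y := by
    rw [H.mode_pde (perC2_sin n) ht y, mode_neg_mul, mode_mul]
    ring

/-! ### Parseval's identity -/

lemma parseval {f : ℝ → ℝ} (hf : Continuous f) :
    HasSum (fun n : ℤ => pint (fun x => f x * cos (n * x)) ^ 2
      + pint (fun x => f x * sin (n * x)) ^ 2) (2 * π * pint (fun x => f x ^ 2)) := by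
  have hpi : (0:ℝ) < 2 * π := by positivity
  have hL2 : MemLp (fun x => (f x : ℂ)) 2 (volume.restrict (Ioc 0 (2 * π))) := by
    have hc : Continuous (fun x => (f x : ℂ)) := by fun_prop
    obtain ⟨M, hM⟩ := isCompact_Icc.exists_bound_of_continuousOn (s := Icc 0 (2 * π)) hc.continuousOn
    refine MemLp.of_bound hc.aestronglyMeasurable M ?_
    filter_upwards [ae_restrict_mem measurableSet_Ioc] with x hx using hM x ⟨hx.1.le, hx.2⟩
  have h := (hasSum_sq_fourierCoeffOn hpi hL2).mul_left ((2 * π) ^ 2)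
  have key : ∀ (F G : ℤ → ℝ) (v w : ℝ), HasSum G w → F = G → v = w → HasSum F v := by
    rintro F G v w h rfl rfl
    exact h
  refine key _ _ _ _ h (funext fun n => ?_) ?_
  · rw [fourierCoeffOn_eq_integral]
    have e : ∫ x in (0:ℝ)..(2 * π), fourier (-n) (x : AddCircle (2 * π - 0)) • (f x : ℂ) =
        (pint (fun x => f x * cos (n * x)) : ℂ) - (pint (fun x => f x * sin (n * x)) : ℂ) * Complex.I := by
      unfold pint
      rw [← intervalIntegral.integral_ofReal, ← intervalIntegral.integral_ofReal,
        ← intervalIntegral.integral_mul_const, ← intervalIntegral.integral_sub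
          (Continuous.intervalIntegrable (by fun_prop) _ _)
          (Continuous.intervalIntegrable (by fun_prop) _ _)]
      congr 1
      funext x
      rw [fourier_coe_apply]
      have e1 : 2 * (π : ℂ) * Complex.I * ((-n : ℤ) : ℂ) * x / ((2 * π - 0 : ℝ) : ℂ)
          = ((-(n * x) : ℝ) : ℂ) * Complex.I := by
        have : (π : ℂ) ≠ 0 := by exact_mod_cast Real.pi_ne_zero
        push_cast
        rw [sub_zero]
        field_simp
      rw [e1, Complex.exp_mul_I, ← Complex.ofReal_cos, ← Complex.ofReal_sin, cos_neg, sin_neg]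
      push_cast
      simp only [smul_eq_mul]
      ring
    rw [e, norm_smul, mul_pow ‖_‖ ‖_‖, Complex.sq_norm, Complex.normSq_apply]
    simp only [Complex.sub_re, Complex.sub_im, Complex.mul_re, Complex.mul_im, Complex.ofReal_re,
      Complex.ofReal_im, Complex.I_re, Complex.I_im, sub_zero, norm_div, norm_one,
      Real.norm_of_nonneg hpi.le]
    field_simp
    ring
  · simp only [sub_zero, Complex.norm_real, Real.norm_eq_abs, sq_abs, smul_eq_mul]
    unfold pint
    field_simp

lemma IsShearSolution.l2normSq_eq {δ κ : ℝ} {u : ℝ → ℝ} {ρ : ℝ → ℝ → ℝ → ℝ}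
    (H : IsShearSolution δ κ u ρ) {t : ℝ} (ht : 0 ≤ t) :
    l2normSq ρ t = pint (fun y => pint (fun x => ρ t x y ^ 2)) := by
  unfold l2normSq pint
  refine intervalIntegral_intervalIntegral_swap ?_
  have hc : Continuous (Function.uncurry (fun x y => ρ t x y ^ 2)) :=
    ((H.cont_yx ht).comp (f := fun p : ℝ × ℝ => (p.2, p.1)) (by fun_prop)).pow 2
  refine IntegrableOn.mono_set (t := uIcc 0 (2 * π) ×ˢ uIcc 0 (2 * π)) ?_
    (prod_mono uIoc_subset_uIcc uIoc_subset_uIcc)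
  exact hc.continuousOn.integrableOn_compact (isCompact_uIcc.prod isCompact_uIcc)

/-- The `L²` norm is the sum of the energies of the modes. -/
lemma IsShearSolution.hasSum_modes {δ κ : ℝ} {u : ℝ → ℝ} {ρ : ℝ → ℝ → ℝ → ℝ}
    (H : IsShearSolution δ κ u ρ) {t : ℝ} (ht : 0 ≤ t) :
    HasSum (fun n : ℤ => en (mode ρ (fun x => cos (n * x)) t) (mode ρ (fun x => sin (n * x)) t))
      (2 * π * l2normSq ρ t) := by
  have hpi : (0:ℝ) ≤ 2 * π := by positivity
  set F : ℤ → ℝ → ℝ := fun n y => mode ρ (fun x => cos (n * x)) t y ^ 2 +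
    mode ρ (fun x => sin (n * x)) t y ^ 2 with hF
  have hFc : ∀ n, Continuous (F n) := fun n => by
    obtain ⟨h1, h2⟩ := (H.isMode n).c0 ht
    simp only [hF]
    fun_prop
  have hF0 : ∀ n y, 0 ≤ F n y := fun n y => by simp only [hF]; positivity
  have hsum : ∀ y, HasSum (fun n => F n y) (2 * π * pint (fun x => ρ t x y ^ 2)) := fun y =>
    parseval ((H.cont_yx ht).comp (f := fun x : ℝ => (y, x)) (by fun_prop))
  have hcR : Continuous (fun y => 2 * π * pint (fun x => ρ t x y ^ 2)) :=
    continuous_const.mul (continuous_pint_param ((H.cont_yx ht).pow 2))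
  have htot : pint (fun y => 2 * π * pint (fun x => ρ t x y ^ 2)) = 2 * π * l2normSq ρ t := by
    rw [H.l2normSq_eq ht, pint_const_mul]
  have hS : Summable (fun n => pint (F n)) := by
    refine summable_of_sum_le (c := 2 * π * l2normSq ρ t)
      (fun n => pint_nonneg (hF0 n)) (fun s => ?_)
    rw [← htot]
    have : ∑ n ∈ s, pint (F n) = pint (fun y => ∑ n ∈ s, F n y) := by
      unfold pint
      rw [intervalIntegral.integral_finsetSum (fun n _ => (hFc n).intervalIntegrable _ _)]
    rw [this]
    exact pint_mono (by fun_prop) hcR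
      (fun y => sum_le_hasSum s (fun n _ => hF0 n y) (hsum y))
  have e : ∀ f : ℝ → ℝ, pint f = ∫ y, f y ∂(volume.restrict (Ioc 0 (2 * π))) := fun f =>
    intervalIntegral.integral_of_le hpi
  have hfin := hasSum_integral_of_summable_integral_norm (μ := volume.restrict (Ioc 0 (2 * π)))
    (F := F) (fun n => ((hFc n).integrableOn_Icc).mono_set Ioc_subset_Icc_self) (by
      simpa only [Real.norm_of_nonneg (hF0 _ _), ← e] using hS)
  simp only [← e, (hsum _).tsum_eq] at hfin
  rw [htot] at hfin
  exact hfin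

/-! ### Choice of the scale -/

/-- The scale `3^(p+1)` is chosen comparable to `κ^(-1/(α+2))`. -/
lemma exists_scale {α κ : ℝ} (hα : α ∈ Ioo (0:ℝ) 1) (hκ : κ ∈ Ioc (0:ℝ) (1 / 27)) :
    ∃ p : ℕ, κ * (3 ^ (p + 1)) ^ 2 ≤ ((3:ℝ) ^ (p + 1)) ^ (-α) ∧
      ((3:ℝ) ^ (p + 1)) ^ (-α) ≤ 27 * (κ * (3 ^ (p + 1)) ^ 2) ∧
      κ ^ (α / (α + 2)) ≤ ((3:ℝ) ^ (p + 1)) ^ (-α) := by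
  obtain ⟨hα0, hα1⟩ := hα
  obtain ⟨hκ0, hκ1⟩ := hκ
  set q : ℝ := (3:ℝ) ^ (2 + α) with hq
  have hq1 : 1 < q := Real.one_lt_rpow (by norm_num) (by linarith)
  have hq27 : q ≤ 27 := by
    calc q ≤ (3:ℝ) ^ (3:ℝ) := Real.rpow_le_rpow_of_exponent_le (by norm_num) (by linarith)
      _ = 27 := by norm_num
  have hqk : q ≤ κ⁻¹ := by
    refine hq27.trans ?_
    rw [le_inv_comm₀ (by norm_num) hκ0]
    linarith
  obtain ⟨n, hn1, hn2⟩ := exists_nat_pow_near (hq1.le.trans hqk) hq1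
  obtain ⟨p, rfl⟩ : ∃ p, n = p + 1 := by
    cases n with
    | zero => simp at hn2; linarith
    | succ p => exact ⟨p, rfl⟩
  refine ⟨p, ?_⟩
  set N : ℝ := 3 ^ (p + 1) with hN
  have hN0 : 0 < N := by positivity
  have hqN : q ^ (p + 1) = N ^ (2 + α) := by
    rw [hq, hN, ← Real.rpow_natCast, ← Real.rpow_natCast, ← Real.rpow_mul (by norm_num),
      ← Real.rpow_mul (by norm_num), mul_comm]
  have hsplit : N ^ (2 + α) = N ^ 2 * N ^ α := by
    rw [Real.rpow_add hN0]; norm_num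
  have hNa : 0 < N ^ α := by positivity
  have hup : κ * N ^ (2 + α) ≤ 1 := by
    rw [hqN] at hn1
    calc κ * N ^ (2 + α) ≤ κ * κ⁻¹ := mul_le_mul_of_nonneg_left hn1 hκ0.le
      _ = 1 := mul_inv_cancel₀ hκ0.ne'
  have hlo : 1 ≤ 27 * (κ * N ^ (2 + α)) := by
    rw [pow_succ, hqN] at hn2
    have h1 : κ * κ⁻¹ ≤ κ * (N ^ (2 + α) * q) := mul_le_mul_of_nonneg_left hn2.le hκ0.le
    rw [mul_inv_cancel₀ hκ0.ne'] at h1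
    have h2 : κ * N ^ (2 + α) * q ≤ κ * N ^ (2 + α) * 27 :=
      mul_le_mul_of_nonneg_left hq27 (by positivity)
    linarith
  rw [Real.rpow_neg hN0.le]
  refine ⟨?_, ?_, ?_⟩
  · rw [← one_div, le_div_iff₀ hNa]
    rw [hsplit] at hup
    linarith
  · rw [← one_div, div_le_iff₀ hNa]
    rw [hsplit] at hlo
    linarith
  · rw [← one_div, le_div_iff₀ hNa]
    have h1 : (κ * N ^ (2 + α)) ^ (α / (α + 2)) = κ ^ (α / (α + 2)) * N ^ α := by
      rw [Real.mul_rpow hκ0.le (by positivity), ← Real.rpow_mul hN0.le]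
      congr 2
      field_simp
      ring
    rw [← h1]
    exact Real.rpow_le_one (by positivity) hup (by positivity)

/-- Enhanced dissipation for the Weierstrass shear flow: decay at rate
`ε κ^{α/(α+2)}`. -/
theorem enhanced_dissipation_weierstrass (α : ℝ) (hα : α ∈ Ioo (0:ℝ) 1)
    (δ : ℝ) (hδ : δ = 0 ∨ δ = 1) :
    ∃ ε ∈ Ioo (0:ℝ) 1, ∃ C : ℝ, 1 ≤ C ∧ ∃ κ₀ ∈ Ioo (0:ℝ) 1,
      ∀ κ ∈ Ioc (0:ℝ) κ₀, ∀ ρ : ℝ → ℝ → ℝ → ℝ,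
        IsShearSolution δ κ (weierstrassShear α) ρ →
        (∀ y : ℝ, (∫ x in (0:ℝ)..(2 * π), ρ 0 x y) = 0) →
        ∀ t : ℝ, 0 ≤ t →
          l2normSq ρ t ≤
            C * Real.exp (-(ε * κ ^ (α / (α + 2))) * t) * l2normSq ρ 0 := by
  have hC : 12 ≤ lyaConst α := by unfold lyaConst; nlinarith [sq_nonneg (incConst α)]
  have hc : 0 < 8 * (lyaConst α + 1) := by linarith
  refine ⟨1 / (8 * (lyaConst α + 1)), ⟨by positivity, ?_⟩, lyaConst α + 1, by linarith, 1 / 27,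
    ⟨by norm_num, by norm_num⟩, ?_⟩
  · rw [div_lt_one hc]; linarith
  intro κ hκ ρ H hmean t ht
  obtain ⟨p, hp1, hp2, hp3⟩ := exists_scale hα hκ
  have hδ0 : 0 ≤ δ := by rcases hδ with rfl | rfl <;> norm_num
  set ε := 1 / (8 * (lyaConst α + 1)) with hε
  have hmodes : ∀ n : ℤ,
      en (mode ρ (fun x => cos (n * x)) t) (mode ρ (fun x => sin (n * x)) t) ≤
      ((lyaConst α + 1) * Real.exp (-(ε * κ ^ (α / (α + 2))) * t)) *
      en (mode ρ (fun x => cos (n * x)) 0) (mode ρ (fun x => sin (n * x)) 0) := by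
    intro n
    have hM := H.isMode n
    have hm : 0 ≤ κ * δ * (n : ℝ) ^ 2 := mul_nonneg (mul_nonneg hκ.1.le hδ0) (sq_nonneg _)
    rcases eq_or_ne n 0 with rfl | hn
    · -- the zero mode starts from zero, and its energy cannot grow
      have h0 : en (mode ρ (fun x => cos ((0:ℤ) * x)) 0) (mode ρ (fun x => sin ((0:ℤ) * x)) 0) = 0 := by
        have e1 : ∀ y, mode ρ (fun x => cos ((0:ℤ) * x)) 0 y = 0 := fun y => by
          simpa [mode, pint] using hmean y
        have e2 : ∀ y, mode ρ (fun x => sin ((0:ℤ) * x)) 0 y = 0 := fun y => by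
          simp [mode, pint]
        unfold en
        simp only [e1, e2]
        simp [pint]
      have := hM.en_le hm hκ.1.le ht
      rw [h0] at this ⊢
      simpa using this
    · have hk : 1 ≤ |(n : ℝ)| := by
        exact_mod_cast Int.one_le_abs hn
      refine (hM.en_decay hα p hk hm hκ.1 hp1 hp2 ht).trans ?_
      refine mul_le_mul_of_nonneg_right ?_ (en_nonneg _ _)
      refine mul_le_mul_of_nonneg_left (exp_le_exp.2 ?_) (by linarith)
      refine mul_le_mul_of_nonneg_right (neg_le_neg ?_) ht
      rw [hε, div_mul_eq_mul_div, one_mul]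
      exact div_le_div_of_nonneg_right hp3 hc.le
  have h := hasSum_le hmodes (H.hasSum_modes ht) ((H.hasSum_modes le_rfl).mul_left _)
  have hpi : (0:ℝ) < 2 * π := by positivity
  refine le_of_mul_le_mul_left ?_ hpi
  linarith

end
end
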